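/- arXiv:1808.04923 — 2 statements merged into one kernel-verified Lean document; each statement's English description precedes it below -/
import Mathlib

section
/- The lower limit liminf_{n→∞} M(n)^{1/n} is strictly greater than 1.148192. -/
/-!
A primitive subset of `{1, …, n}` of maximum size `⌈n / 2⌉` is determined by the set `D` of all
multiples, up to `n / 2`, of its elements: with `U = D ∪ (n / 2, n]`, it is what remains of `U`
after removing the set `2 D` of doubles. Conversely, for a set `D` of positive integers up to `n /
2` the remainder of `U` has the right size as soon as `U` contains `2 D`, and it is primitive if
every proper multiple in `U` of an element of `U` lies in `2 D`. Both conditions hold if `D` is an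
up-set for a relation `Rel` on a ground set of admissible numbers, so that counting such up-sets
bounds `M n` from below (`card_fam_le_M`). Only a part `A n` of the ground set is used.

To count the up-sets, add the elements of `A n` in decreasing order. Adding `x` multiplies the
number of up-sets by `1 + P(x)`, where `P(x)` is the proportion of up-sets of the larger elements
that contain all successors of `x` (`card_fam_insert`). By the correlation inequality
`card_fam_mul_le`, `P(x)` only decreases if the larger elements are replaced by any set of them
which contains the successors of `x` and is closed under successors. For a small neighbourhood of
this kind the proportion is a computable rational number `p / q`, which depends only on `n / x` and
on the divisibility of `x` by a few small primes. This groups the elements of `A n` into finitely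
many cells, on each of which the gain `log (1 + p / q)` is constant (`Cell.Valid.mul_le`). Each cell
has a positive density, by counting integers in an interval that are coprime to a modulus
(`Cell.Valid.le_card`). Summing density times gain over the cells gives `log (M n) ≥ n * r - C`
(`exists_le_log_M`), where `r` is evaluated from a finite list of cells and exceeds `0.138189 > log
1.148192`.

The numbers `p` and `q` are found by a dynamic programme, which runs through a neighbourhood while
keeping track of the set of elements that are already forced (`final_eq`). It is evaluated inside
the kernel, together with the tests that a cell is sound (`Cell.valid_of_ok`) and that different
cells are disjoint (`not_mem_of_sepB`).
-/

/-- A finite set of positive integers is primitive if no element divides another. -/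
def IsPrimitive (S : Finset ℕ) : Prop := ∀ a ∈ S, ∀ b ∈ S, a ∣ b → a = b

/-- `M n` is the number of primitive subsets of `{1, 2, …, n}` of maximum size `⌈n/2⌉`. -/
noncomputable def M (n : ℕ) : ℕ :=
  Nat.card {S : Finset ℕ // S ⊆ Finset.Icc 1 n ∧ IsPrimitive S ∧ S.card = (n + 1) / 2}

namespace PrimitiveCount

/-! ### Up-sets and primitive sets of maximum size -/

/-- For `z ≤ n / 2`: if `x` lies in the set `D` of all multiples, up to `n / 2`, of elements of a
primitive set of maximum size, then so does every `z` with `Rel x z`. The second alternative says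
that `d * x` is a proper multiple of `x`; such a multiple, if it is at most `n`, has to be twice an
element of `D` for the size of the primitive set to be maximal. -/
def Rel (x z : ℕ) : Prop := z = 2 * x ∨ ∃ d, Odd d ∧ 3 ≤ d ∧ 2 * z = d * x

/-- A condition, written `n / x < 3 * (3 / 2) ^ k` for some `k` with `2 ^ k ∣ x`, under which
`x` may lie in `D`: it allows `Rel` to be applied along any chain of odd multipliers `d ≥ 3`
without leaving the integers. -/
def Adm (n x : ℕ) : Prop := ∃ k, 2 ^ k ∣ x ∧ 2 ^ k * n < 3 ^ (k + 1) * x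

open Classical in
/-- The ground set: admissible `x` with `2 ≤ n / x < 12`. The cut-off `12` is a truncation; it keeps
the computation finite at a negligible cost in the bound. -/
noncomputable def A (n : ℕ) : Finset ℕ :=
  (Finset.Icc 1 n).filter fun x => 2 * x ≤ n ∧ n < 12 * x ∧ Adm n x

open Classical in
/-- The subsets `D` of `P` that are closed under `Rel` inside `P` and contain `P ∩ T`. -/
noncomputable def fam (P : Finset ℕ) (T : Set ℕ) : Finset (Finset ℕ) :=
  P.powerset.filter fun D => (∀ x ∈ D, ∀ z ∈ P, Rel x z → z ∈ D) ∧ ∀ z ∈ P, z ∈ T → z ∈ D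

theorem mem_A {n x : ℕ} : x ∈ A n ↔ 1 ≤ x ∧ 2 * x ≤ n ∧ n < 12 * x ∧ Adm n x := by
  simp only [A, Finset.mem_filter, Finset.mem_Icc]
  constructor
  · rintro ⟨⟨h1, _⟩, h⟩; exact ⟨h1, h⟩
  · rintro ⟨h1, h2, h⟩; exact ⟨⟨h1, by omega⟩, h2, h⟩

theorem mem_fam {P : Finset ℕ} {T : Set ℕ} {D : Finset ℕ} :
    D ∈ fam P T ↔ D ⊆ P ∧ (∀ x ∈ D, ∀ z ∈ P, Rel x z → z ∈ D) ∧ ∀ z ∈ P, z ∈ T → z ∈ D := by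
  simp [fam, Finset.mem_filter, Finset.mem_powerset]

theorem Rel.lt {x z : ℕ} (hx : 0 < x) (h : Rel x z) : x < z := by
  rcases h with h | ⟨d, _, hd, h⟩
  · omega
  · nlinarith

theorem two_mul_mem_A {n x : ℕ} (hx : x ∈ A n) (h : 4 * x ≤ n) : 2 * x ∈ A n := by
  obtain ⟨h1, h2, h3, k, hk, hk'⟩ := mem_A.1 hx
  refine mem_A.2 ⟨by omega, by omega, by omega, k, hk.mul_left 2, ?_⟩
  nlinarith [Nat.zero_le (3 ^ (k + 1) * x)]

/-- Admissibility is exactly what makes `d * x / 2` an integer, and it is inherited by it: the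
factor `2` lost from `2 ^ k` is paid for by `d ≥ 3`. -/
theorem odd_mul_mem_A {n x d : ℕ} (hx : x ∈ A n) (hd : 3 ≤ d) (h : d * x ≤ n) :
    ∃ z ∈ A n, 2 * z = d * x := by
  obtain ⟨h1, h2, h3, k, hk, hk'⟩ := mem_A.1 hx
  obtain _ | k := k
  -- For `k = 0` admissibility reads `n < 3 * x`, so `x` has no odd multiple up to `n`.
  · exfalso
    simp only [pow_zero, one_mul, zero_add, pow_one] at hk'
    nlinarith
  obtain ⟨y, rfl⟩ := hk
  refine ⟨d * (2 ^ k * y), mem_A.2 ⟨?_, ?_, ?_, k, ?_, ?_⟩, by ring⟩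
  · have : 0 < 2 ^ k * y := by rw [pow_succ] at h1; nlinarith
    nlinarith
  · rw [pow_succ] at h; nlinarith
  · have h4 : n < 12 * (2 * (2 ^ k * y)) := by rw [pow_succ] at h3; nlinarith
    by_contra hc
    have h6 : n < 4 * (d * (2 ^ k * y)) * 2 := by nlinarith
    omega
  · exact ⟨d * y, by ring⟩
  · have e1 : 2 ^ (k + 1) * n = 2 * (2 ^ k * n) := by ring
    have e2 : 3 ^ (k + 1 + 1) * (2 ^ (k + 1) * y) = 2 * (3 ^ (k + 1) * (3 * (2 ^ k * y))) := by ring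
    have e3 : 3 ^ (k + 1) * (3 * (2 ^ k * y)) ≤ 3 ^ (k + 1) * (d * (2 ^ k * y)) := by gcongr
    omega

/-- The multiples, up to `n`, of the primitive set coded by `D`. -/
def up (n : ℕ) (D : Finset ℕ) : Finset ℕ := D ∪ Finset.Ioc (n / 2) n

/-- The primitive set coded by `D`. -/
def prim (n : ℕ) (D : Finset ℕ) : Finset ℕ := up n D \ D.image (2 * ·)

section
variable {n : ℕ} {D : Finset ℕ} (hD : D ∈ fam (A n) ∅)
include hD

theorem le_of_mem_D {x : ℕ} (hx : x ∈ D) : 1 ≤ x ∧ 2 * x ≤ n := by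
  have := mem_A.1 ((mem_fam.1 hD).1 hx); tauto

theorem le_of_mem_up {x : ℕ} (hx : x ∈ up n D) : 1 ≤ x ∧ x ≤ n := by
  rcases Finset.mem_union.1 hx with h | h
  · have := le_of_mem_D hD h; omega
  · rw [Finset.mem_Ioc] at h; omega

omit hD in
theorem mem_D_of_mem_up {x : ℕ} (hx : x ∈ up n D) (h : 2 * x ≤ n) : x ∈ D := by
  rcases Finset.mem_union.1 hx with h' | h'
  · exact h'
  · rw [Finset.mem_Ioc] at h'; omega

theorem two_mul_mem_up {x : ℕ} (hx : x ∈ up n D) (h : 2 * x ≤ n) : 2 * x ∈ up n D := by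
  have hx' := mem_D_of_mem_up hx h
  by_cases h4 : 4 * x ≤ n
  · have hA := two_mul_mem_A ((mem_fam.1 hD).1 hx') h4
    exact Finset.mem_union_left _ ((mem_fam.1 hD).2.1 x hx' _ hA (Or.inl rfl))
  · exact Finset.mem_union_right _ (Finset.mem_Ioc.2 ⟨by omega, h⟩)

theorem odd_mul_mem_up {x d : ℕ} (hx : x ∈ up n D) (hd : Odd d) (hd3 : 3 ≤ d) (h : d * x ≤ n) :
    ∃ z ∈ D, 2 * z = d * x := by
  have hx' : x ∈ D := mem_D_of_mem_up hx (by nlinarith)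
  obtain ⟨z, hz, e⟩ := odd_mul_mem_A ((mem_fam.1 hD).1 hx') hd3 h
  exact ⟨z, (mem_fam.1 hD).2.1 x hx' z hz (Or.inr ⟨d, hd, hd3, e⟩), e⟩

/-- The set `up n D` is closed under arbitrary multiples up to `n`. -/
theorem mul_mem_up : ∀ (d : ℕ) {x : ℕ}, 1 ≤ d → x ∈ up n D → d * x ≤ n → d * x ∈ up n D := by
  intro d
  induction d using Nat.strong_induction_on with
  | _ d ih =>
    intro x hd hx h
    rcases Nat.even_or_odd d with he | ho
    · obtain ⟨c, rfl⟩ := he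
      have := ih c (by omega) (by omega) hx (by nlinarith)
      have h2 := two_mul_mem_up hD this (by nlinarith)
      convert h2 using 1; ring
    · by_cases h1 : d = 1
      · subst h1; simpa using hx
      · obtain ⟨z, hz, e⟩ := odd_mul_mem_up hD hx ho (by obtain ⟨c, rfl⟩ := ho; omega) h
        rw [← e]
        exact two_mul_mem_up hD (Finset.mem_union_left _ hz) (by omega)

/-- Every proper multiple in `up n D` of an element of `up n D` is removed in `prim n D`; this is
why `prim n D` is primitive. -/
theorem half_mem {x d : ℕ} (hx : x ∈ up n D) (hd : 2 ≤ d) (h : d * x ≤ n) :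
    ∃ z ∈ D, d * x = 2 * z := by
  rcases Nat.even_or_odd d with he | ho
  · obtain ⟨c, rfl⟩ := he
    refine ⟨c * x, mem_D_of_mem_up (mul_mem_up hD c (by omega) hx (by nlinarith)) (by nlinarith),
      by ring⟩
  · obtain ⟨z, hz, e⟩ := odd_mul_mem_up hD hx ho (by obtain ⟨c, rfl⟩ := ho; omega) h
    exact ⟨z, hz, e.symm⟩

theorem prim_primitive : IsPrimitive (prim n D) := by
  intro a ha b hb hab
  obtain ⟨d, rfl⟩ := hab
  simp only [prim, Finset.mem_sdiff, Finset.mem_image, not_exists, not_and] at ha hb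
  have hb1 := le_of_mem_up hD hb.1
  by_contra hne
  have hd : 2 ≤ d := by
    rcases d with _ | _ | d
    · simp at hb1
    · simp at hne
    · omega
  obtain ⟨z, hz, e⟩ := half_mem hD ha.1 hd (by linarith [mul_comm a d])
  exact hb.2 z hz (by linarith [mul_comm a d])

theorem prim_card : (prim n D).card = (n + 1) / 2 := by
  have hsub : D.image (2 * ·) ⊆ up n D := by
    intro y hy
    obtain ⟨x, hx, rfl⟩ := Finset.mem_image.1 hy
    exact two_mul_mem_up hD (Finset.mem_union_left _ hx) (le_of_mem_D hD hx).2
  rw [prim, Finset.card_sdiff_of_subset hsub,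
    Finset.card_image_of_injective _ (fun a b h => by simpa using h), up,
    Finset.card_union_of_disjoint, Nat.card_Ioc]
  · omega
  · rw [Finset.disjoint_left]
    intro x hx hx'
    have := le_of_mem_D hD hx
    rw [Finset.mem_Ioc] at hx'; omega

theorem exists_dvd_prim : ∀ (x : ℕ), x ∈ up n D → ∃ s ∈ prim n D, s ∣ x := by
  intro x
  induction x using Nat.strong_induction_on with
  | _ x ih =>
    intro hx
    by_cases h : x ∈ D.image (2 * ·)
    · obtain ⟨y, hy, rfl⟩ := Finset.mem_image.1 h
      have h1 := le_of_mem_D hD hy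
      obtain ⟨s, hs, hs'⟩ := ih y (by omega) (Finset.mem_union_left _ hy)
      exact ⟨s, hs, hs'.mul_left 2⟩
    · exact ⟨x, Finset.mem_sdiff.2 ⟨hx, h⟩, dvd_rfl⟩

/-- `D` can be recovered from `prim n D`. -/
theorem mem_D_iff {x : ℕ} : x ∈ D ↔ 1 ≤ x ∧ 2 * x ≤ n ∧ ∃ s ∈ prim n D, s ∣ x := by
  constructor
  · intro h
    have h1 := le_of_mem_D hD h
    exact ⟨h1.1, h1.2, exists_dvd_prim hD x (Finset.mem_union_left _ h)⟩
  · rintro ⟨h1, h2, s, hs, d, rfl⟩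
    rw [mul_comm s d] at h1 h2 ⊢
    have hd : 1 ≤ d := by
      rcases Nat.eq_zero_or_pos d with rfl | h'
      · simp at h1
      · exact h'
    exact mem_D_of_mem_up (mul_mem_up hD d hd (Finset.mem_sdiff.1 hs).1 (by omega)) h2

end

theorem card_fam_le_M (n : ℕ) : (fam (A n) ∅).card ≤ M n := by
  have hfin : Finite {S : Finset ℕ // S ⊆ Finset.Icc 1 n ∧ IsPrimitive S ∧ S.card = (n + 1) / 2} :=
    Set.Finite.subset (Finset.finite_toSet (Finset.Icc 1 n).powerset)
      (fun S hS => Finset.mem_coe.2 (Finset.mem_powerset.2 hS.1))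
  rw [M, ← Nat.card_eq_finsetCard]
  -- The injection sends `D` to the primitive set it codes.
  refine Nat.card_le_card_of_injective
    (fun D => ⟨prim n D.1, ?_, prim_primitive D.2, prim_card D.2⟩) ?_
  · intro x hx
    have := le_of_mem_up D.2 (Finset.mem_sdiff.1 hx).1
    exact Finset.mem_Icc.2 this
  · intro D E h
    have h' : prim n D.1 = prim n E.1 := congrArg Subtype.val h
    apply Subtype.ext
    ext x
    rw [mem_D_iff D.2, mem_D_iff E.2, h']

/-! ### Two counting tools for up-sets -/

open Classical in
/-- Split by whether `x` is chosen: if `x` is minimal, choosing it forces its successors and nothing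
else. -/
theorem card_fam_insert {P : Finset ℕ} {x : ℕ} (hx : x ∉ P)
    (hP : ∀ z ∈ P, ¬ Rel z x) {T : Set ℕ} :
    (fam (insert x P) T).card =
      (if x ∈ T then 0 else (fam P T).card) + (fam P (T ∪ {z | Rel x z})).card := by
  rw [← Finset.card_filter_add_card_filter_not (s := fam (insert x P) T) (fun D => x ∉ D)]
  congr 1
  · split_ifs with hT
    · rw [Finset.card_eq_zero, Finset.filter_eq_empty_iff]
      intro D hD
      simpa using (mem_fam.1 hD).2.2 x (Finset.mem_insert_self _ _) hT
    · congr 1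
      ext D
      simp only [Finset.mem_filter, mem_fam]
      constructor
      · rintro ⟨⟨h1, h2, h3⟩, h4⟩
        refine ⟨fun y hy => ?_, fun y hy z hz => h2 y hy z (Finset.mem_insert_of_mem hz),
          fun z hz => h3 z (Finset.mem_insert_of_mem hz)⟩
        rcases Finset.mem_insert.1 (h1 hy) with rfl | h
        · exact absurd hy h4
        · exact h
      · rintro ⟨h1, h2, h3⟩
        refine ⟨⟨h1.trans (Finset.subset_insert _ _), fun y hy z hz hr => ?_, fun z hz hzT => ?_⟩,
          fun h => hx (h1 h)⟩
        · rcases Finset.mem_insert.1 hz with rfl | h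
          · exact absurd hr (hP y (h1 hy))
          · exact h2 y hy z h hr
        · rcases Finset.mem_insert.1 hz with rfl | h
          · exact absurd hzT hT
          · exact h3 z h hzT
  · refine Finset.card_bij' (fun D _ => D.erase x) (fun D _ => insert x D) ?_ ?_ ?_ ?_
    · intro D hD
      simp only [Finset.mem_filter, mem_fam, not_not] at hD
      obtain ⟨⟨h1, h2, h3⟩, h4⟩ := hD
      refine mem_fam.2 ⟨?_, ?_, ?_⟩
      · intro y hy
        rw [Finset.mem_erase] at hy
        exact (Finset.mem_insert.1 (h1 hy.2)).resolve_left hy.1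
      · intro y hy z hz hr
        refine Finset.mem_erase.2 ⟨fun h => hx (h ▸ hz), ?_⟩
        exact h2 y (Finset.mem_of_mem_erase hy) z (Finset.mem_insert_of_mem hz) hr
      · intro z hz hzT
        refine Finset.mem_erase.2 ⟨fun h => hx (h ▸ hz), ?_⟩
        rcases hzT with h | h
        · exact h3 z (Finset.mem_insert_of_mem hz) h
        · exact h2 x h4 z (Finset.mem_insert_of_mem hz) h
    · intro D hD
      obtain ⟨h1, h2, h3⟩ := mem_fam.1 hD
      refine Finset.mem_filter.2 ⟨mem_fam.2 ⟨Finset.insert_subset_insert _ h1, ?_, ?_⟩, by simp⟩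
      · intro y hy z hz hr
        rcases Finset.mem_insert.1 hz with h | hz
        · exact h ▸ Finset.mem_insert_self _ _
        refine Finset.mem_insert_of_mem ?_
        rcases Finset.mem_insert.1 hy with h | hy
        · exact h3 z hz (Or.inr (h ▸ hr))
        · exact h2 y hy z hz hr
      · intro z hz hzT
        rcases Finset.mem_insert.1 hz with rfl | hz
        · exact Finset.mem_insert_self _ _
        · exact Finset.mem_insert_of_mem (h3 z hz (Or.inl hzT))
    · intro D hD
      simp only [Finset.mem_filter, not_not] at hD
      exact Finset.insert_erase hD.2
    · intro D hD
      exact Finset.erase_insert (fun h => hx ((mem_fam.1 hD).1 h))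

/-- A correlation inequality of Fortuin–Kasteleyn–Ginibre type: if `Q` is an up-closed part of `P`
containing all of `T ∩ P`, then the proportion of the up-sets that contain `T` can only increase on
passing from `Q` to `P`. It follows from Daykin's inequality `#𝒜 * #ℬ ≤ #(𝒜 ⊼ ℬ) * #(𝒜 ⊻ ℬ)`. -/
theorem card_fam_mul_le {P Q : Finset ℕ} {T : Set ℕ} (hQP : Q ⊆ P)
    (hQ : ∀ y ∈ Q, ∀ z ∈ P, Rel y z → z ∈ Q) (hT : ∀ z ∈ P, z ∈ T → z ∈ Q) :
    (fam P ∅).card * (fam Q T).card ≤ (fam Q ∅).card * (fam P T).card := by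
  classical
  refine (Finset.le_card_infs_mul_card_sups (fam P ∅) (fam Q T)).trans ?_
  refine Nat.mul_le_mul (Finset.card_le_card ?_) (Finset.card_le_card ?_)
  · intro D hD
    obtain ⟨a, ha, b, hb, rfl⟩ := Finset.mem_infs.1 hD
    obtain ⟨a1, a2, -⟩ := mem_fam.1 ha
    obtain ⟨b1, b2, -⟩ := mem_fam.1 hb
    refine mem_fam.2 ⟨fun x hx => b1 (Finset.mem_inter.1 hx).2, ?_, by simp⟩
    intro x hx z hz hr
    have hx := Finset.mem_inter.1 hx
    exact Finset.mem_inter.2 ⟨a2 x hx.1 z (hQP hz) hr, b2 x hx.2 z hz hr⟩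
  · intro D hD
    obtain ⟨a, ha, b, hb, rfl⟩ := Finset.mem_sups.1 hD
    obtain ⟨a1, a2, -⟩ := mem_fam.1 ha
    obtain ⟨b1, b2, b3⟩ := mem_fam.1 hb
    refine mem_fam.2 ⟨Finset.union_subset a1 (b1.trans hQP), ?_, ?_⟩
    · intro x hx z hz hr
      rcases Finset.mem_union.1 hx with h | h
      · exact Finset.mem_union_left _ (a2 x h z hz hr)
      · exact Finset.mem_union_right _ (b2 x h z (hQ x (b1 h) z hz hr) hr)
    · intro z hz hzT
      exact Finset.mem_union_right _ (b3 z (hT z hz hzT) hzT)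

/-! ### A dynamic programme that the kernel can evaluate -/

/-! The functions of this part are written with recursors and with the operations on `ℕ` that the
kernel evaluates by binary arithmetic. They are later run by `decide +kernel`. -/

noncomputable section

/-- States of the dynamic programme: a list of triples `(m, p, q)`. The bits of the mask `m` mark
the elements of the remaining list that are already forced into the up-set; `p` and `q` are two
multiplicities carried along together. -/
inductive St | nil | cons (m p q : ℕ) (t : St)

/-- `if b then x else y`, reduced by the kernel without unfolding decidability instances. -/
def cnd {α : Type} (b : Bool) (x y : α) : α := Bool.rec y x b

/-- `k n`, with `n` brought to a literal by the kernel before `k` is entered; without it the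
arguments would be copied unevaluated. -/
def force {α : Type} (n : ℕ) (k : ℕ → α) : α :=
  Nat.rec (k 0) (fun m _ => k (Nat.succ m)) n

/-- A cell describes the elements `x = h * g` with `h` coprime to `e` and
`h * n₀ ≤ n < h * n₁`. The list `L` is the part of the neighbourhood of `x` that is taken into
account, divided by `h`; the same list serves all `h`. -/
structure Cell where
  g : ℕ
  e : ℕ
  n₀ : ℕ
  n₁ : ℕ
  L : List ℕ

/-- A sufficient test, with `k ≤ 4`, for `h * s` to be admissible whenever the bound is less than
`h * n`. -/
def admB (n s : ℕ) : Bool :=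
  cnd (Nat.ble n (Nat.mul 3 s)) true <|
  cnd (Nat.beq (Nat.mod s 2) 0)
    (cnd (Nat.ble (Nat.mul 2 n) (Nat.mul 9 s)) true <|
  cnd (Nat.beq (Nat.mod s 4) 0)
    (cnd (Nat.ble (Nat.mul 4 n) (Nat.mul 27 s)) true <|
  cnd (Nat.beq (Nat.mod s 8) 0)
    (cnd (Nat.ble (Nat.mul 8 n) (Nat.mul 81 s)) true <|
  cnd (Nat.beq (Nat.mod s 16) 0)
    (Nat.ble (Nat.mul 16 n) (Nat.mul 243 s)) false) false) false) false

def memB (z : ℕ) (L : List ℕ) : Bool :=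
  List.rec false (fun y _ ih => cnd (Nat.beq z y) true ih) L

/-- If `d * s < n₁`, then `d * s` is even and half of it is in `L`; moreover `next` holds, although
`next` is skipped when `d * s ≥ n₁`. -/
def oddB (n₁ s : ℕ) (L : List ℕ) (d : ℕ) (next : Bool) : Bool :=
  cnd (Nat.ble n₁ (Nat.mul d s)) true <|
    cnd (Nat.beq (Nat.mod s 2) 0)
      (force (Nat.mul d (Nat.div s 2)) fun z => cnd (memB z L) next false) false

/-- All `Rel`-successors of `s` that can matter below `n₁` are in `L`. As `n₁ ≤ 12 * s`, odd
multipliers above `11` are irrelevant. -/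
def closedB (n₁ s : ℕ) (L : List ℕ) : Bool :=
  cnd (cnd (Nat.ble n₁ (Nat.mul 4 s)) true (force (Nat.mul 2 s) fun z => memB z L))
    (oddB n₁ s L 3 <| oddB n₁ s L 5 <| oddB n₁ s L 7 <| oddB n₁ s L 9 <| oddB n₁ s L 11 true)
    false

/-- Every element of `L` lies between `g` and `n₀ / 2`, is admissible, and has all its successors
in the tail behind it. -/
def listB (g n₀ n₁ : ℕ) (L : List ℕ) : Bool :=
  List.rec true (fun s L ih =>
    cnd (Nat.ble s g) false <|
    cnd (Nat.ble (Nat.mul 2 s) n₀)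
      (cnd (admB n₁ s) (cnd (memB s L) false (cnd (closedB n₁ s L) ih false)) false) false) L

/-- The test that makes a cell usable; see `Cell.valid_of_ok`. -/
def Cell.ok (c : Cell) : Bool :=
  cnd (Nat.ble c.g 0) false <|
  cnd (Nat.ble (Nat.mul 2 c.g) c.n₀) 
   (cnd (Nat.ble c.n₁ c.n₀) false <|
    cnd (Nat.ble c.n₁ (Nat.mul 12 c.g)) 
     (cnd (Nat.beq (Nat.mod 30 c.e) 0)
      (cnd (admB c.n₁ c.g) (cnd (closedB c.n₁ c.g c.L) (listB c.g c.n₀ c.n₁ c.L) false) false)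
      false) false) false

/-- For `y = 2 * z` with `z < 6 * s`, the indicator of `Rel s z`: the set bits `3, 4, 5, 7, 9, 11`
of `2744` are the possible quotients `y / s`, and a nonzero remainder shifts all of them out. -/
def relBit (s y : ℕ) : ℕ :=
  Nat.mod (Nat.shiftRight 2744 (Nat.add (Nat.div y s) (Nat.mul 16 (Nat.mod y s)))) 2

/-- The mask marking the elements of `L` that are successors of `s`. -/
def gmask (s : ℕ) (L : List ℕ) : ℕ :=
  List.rec 0 (fun y _ ih => Nat.add (relBit s (Nat.mul 2 y)) (Nat.mul 2 ih)) L

/-- Adds a triple to a list of states, merging it with an entry that has the same mask. -/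
def ins (m p q : ℕ) (S : St) : St :=
  St.rec (.cons m p q .nil) (fun m' p' q' t ih =>
    cnd (Nat.beq m m') (force (Nat.add p p') fun p => force (Nat.add q q') fun q => .cons m' p q t)
      (.cons m' p' q' ih)) S

/-- Processes the first element of the remaining list, whose successors are marked by `G`. If bit
`0` of the mask is set, the element has to be chosen and forces its successors; otherwise both
choices are open. In either case the mask is shifted. -/
def step (G : ℕ) (S : St) : St → St :=
  St.rec (fun acc => acc) (fun m p q _ ih acc =>
    force (Nat.div m 2) fun h => force (Nat.lor h G) fun h' =>
    cnd (Nat.beq (Nat.mod m 2) 1) (ih (ins h' p q acc)) (ih (ins h p q (ins h' p q acc)))) S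

/-- Processes all elements of the list, the first one first. -/
def run (L : List ℕ) : St → St :=
  List.rec (fun S => S) (fun s L ih S => force (gmask s L) fun G => ih (step G S .nil)) L

/-- The states at the end for the neighbourhood `c.L`. The multiplicity `p` starts from the
successors of `c.g` being forced, the multiplicity `q` from nothing being forced. -/
def Cell.final (c : Cell) : St :=
  force (gmask c.g c.L) fun G => run c.L (ins G 1 0 (.cons 0 0 1 .nil))

/-- Applies `k` to the sum of the `p`s and the sum of the `q`s. -/
def total (S : St) (k : ℕ → ℕ → ℕ) : ℕ :=
  St.rec (fun k => k 0 0) 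
    (fun _ p q _ ih k => ih fun p' q' => k (Nat.add p p') (Nat.add q q')) S k

/-- Euler's function for the divisors of `30`. -/
def phiB (e : ℕ) : ℕ :=
  Nat.mul (cnd (Nat.beq (Nat.mod e 3) 0) 2 1) (cnd (Nat.beq (Nat.mod e 5) 0) 4 1)

/-- The numerator of `∑ i < 6, x ^ (2 * i + 1) / (2 * i + 1)` at `x = p / D` over the denominator
`3465 * D ^ 11`, where `3465` is the least common multiple of `1, 3, …, 11`; in Horner form. -/
def logNum (p D : ℕ) : ℕ :=
  force (Nat.mul p p) fun u => force (Nat.mul D D) fun v =>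
  Nat.mul p (Nat.add (Nat.mul 3465 (Nat.pow v 5)) (Nat.mul u
    (Nat.add (Nat.mul 1155 (Nat.pow v 4)) (Nat.mul u
    (Nat.add (Nat.mul 693 (Nat.pow v 3)) (Nat.mul u
    (Nat.add (Nat.mul 495 (Nat.pow v 2)) (Nat.mul u
    (Nat.add (Nat.mul 385 v) (Nat.mul u 315))))))))))

/-- A lower bound, in units of `2 ^ (-40)`, for the contribution of the cell to `log M(n) / n`,
namely density times `log (1 + p / q)`. The logarithm is `2 * artanh (p / (p + 2 * q))` and is
bounded below by the first six terms of its series; `2199023255552 = 2 ^ 41`. -/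
def Cell.val (c : Cell) : ℕ :=
  total c.final fun p q =>
    force p fun p => force (Nat.add p (Nat.mul 2 q)) fun D =>
    Nat.div
      (Nat.mul 2199023255552 (Nat.mul (logNum p D) (Nat.mul (phiB c.e) (Nat.sub c.n₁ c.n₀))))
      (Nat.mul (Nat.mul 3465 (Nat.pow D 11)) (Nat.mul c.e (Nat.mul c.n₀ c.n₁)))

/-- The contributions of all cells that pass the test `Cell.ok`. -/
def tot (cs : List Cell) : ℕ :=
  List.rec 0 (fun c _ ih => Nat.add (cnd c.ok c.val 0) ih) cs

/-- A sufficient test for two cells to have no element in common: their ranges of `n / x` are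
disjoint, or `h * c.g = h' * c'.g` is impossible with `h` coprime to `c.e` and `h'` coprime to
`c'.e`. -/
def sepB (c c' : Cell) : Bool :=
  cnd (Nat.ble (Nat.mul c.n₁ c'.g) (Nat.mul c'.n₀ c.g)) true <|
  cnd (Nat.ble (Nat.mul c'.n₁ c.g) (Nat.mul c.n₀ c'.g)) true <|
  force (Nat.gcd c.g c'.g) fun d =>
  cnd (Nat.ble (Nat.gcd (Nat.div c'.g d) c.e) 1)
    (cnd (Nat.ble (Nat.gcd (Nat.div c.g d) c'.e) 1) false true) true

/-- The cell `c` is separated from every cell of the list. -/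
def sepAll (c : Cell) (cs : List Cell) : Bool :=
  List.rec true (fun c' _ ih => cnd (sepB c c') ih false) cs

/-- The cells of the list are pairwise separated. -/
def sepList (cs : List Cell) : Bool :=
  List.rec true (fun c cs ih => cnd (sepAll c cs) ih false) cs

/-- Puts the admissible ones among `s, 2 * s, …, 2 ^ (k - 1) * s` that lie in `(g, n₀ / 2]` in front
of `tl`. -/
def chain (g n₀ n₁ : ℕ) (tl : List ℕ) (k : ℕ) : ℕ → List ℕ :=
  Nat.rec (fun _ => tl) (fun _ ih s => force s fun s => cnd (Nat.ble (Nat.mul 2 s) n₀)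
      (cnd (Nat.ble s g) (ih (Nat.mul 2 s)) <|
        cnd (admB n₁ s) (s :: ih (Nat.mul 2 s)) (ih (Nat.mul 2 s))) tl) k

/-- Candidate neighbourhood for the odd part `o` of `g`: the admissible numbers in `(g, n₀ / 2]` of
the form `2 ^ j * o * a / b` with `(a, b)` in `R`. No property of this list is used beyond what
`Cell.ok` tests. -/
def nbrs (g n₀ n₁ o : ℕ) (R : List (ℕ × ℕ)) : List ℕ :=
  List.rec [] (fun x _ ih =>
    cnd (Nat.beq (Nat.mod (Nat.mul o x.1) x.2) 0)
      (chain g n₀ n₁ ih 6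
        (Nat.mul (Nat.div (Nat.mul o x.1) x.2)
          (Nat.pow 2 (Nat.log2 (Nat.div (Nat.mul g x.2) (Nat.mul o x.1))))))
      ih) R

/-- Ratios `(a, b)` for `nbrs`, together with triples of `g`, `e` and a list of breakpoints. -/
abbrev Block := List (ℕ × ℕ) × List (ℕ × ℕ × List ℕ)

/-- The cells with given `g` and `e` between consecutive breakpoints; `65536` serves to extract the
odd part of `g`. -/
def cellsOf (R : List (ℕ × ℕ)) (g e : ℕ) : List ℕ → List Cell
  | n₀ :: n₁ :: t =>
    ⟨g, e, n₀, n₁, force (Nat.div g (Nat.gcd g 65536)) fun o => nbrs g n₀ n₁ o R⟩ ::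
      cellsOf R g e (n₁ :: t)
  | _ => []

/-- All cells of a block. -/
def cells (B : Block) : List Cell := B.2.flatMap fun x => cellsOf B.1 x.1 x.2.1 x.2.2

end

/-! ### Correctness of the dynamic programme -/

theorem cnd_and {b x : Bool} : cnd b x false = true ↔ b = true ∧ x = true := by
  cases b <;> simp [cnd]

theorem cnd_or {b x : Bool} : cnd b true x = true ↔ b = true ∨ x = true := by
  cases b <;> simp [cnd]

theorem cnd_not {b x : Bool} : cnd b false x = true ↔ ¬ b = true ∧ x = true := by
  cases b <;> simp [cnd]

theorem cnd_eq {α : Type} (b : Bool) (x y : α) : cnd b x y = if b = true then x else y := by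
  cases b <;> rfl

theorem force_eq {α : Type} (n : ℕ) (k : ℕ → α) : force n k = k n := by
  cases n <;> rfl

theorem ble_true {a b : ℕ} : Nat.ble a b = true ↔ a ≤ b := by simp

theorem beq_true {a b : ℕ} : Nat.beq a b = true ↔ a = b := by simp

theorem nat_mod (a b : ℕ) : Nat.mod a b = a % b := rfl

theorem nat_div (a b : ℕ) : Nat.div a b = a / b := rfl

theorem memB_iff {z : ℕ} {L : List ℕ} : memB z L = true ↔ z ∈ L := by
  induction L with
  | nil => simp [memB]
  | cons y L ih =>
    rw [List.mem_cons, ← ih]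
    change cnd _ _ _ = true ↔ _
    rw [cnd_or, beq_true]; rfl

theorem adm_of_admB {n s : ℕ} (h : admB n s = true) :
    ∃ k, 2 ^ k ∣ s ∧ 2 ^ k * n ≤ 3 ^ (k + 1) * s := by
  simp only [admB, cnd_or, cnd_and, ble_true, beq_true, Nat.mul_eq, nat_mod] at h
  rcases h with h | ⟨h1, h | ⟨h2, h | ⟨h3, h | ⟨h4, h⟩⟩⟩⟩
  · exact ⟨0, by simp, by simpa using h⟩
  · exact ⟨1, Nat.dvd_of_mod_eq_zero h1, by simpa using h⟩
  · exact ⟨2, Nat.dvd_of_mod_eq_zero h2, by simpa using h⟩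
  · exact ⟨3, Nat.dvd_of_mod_eq_zero h3, by simpa using h⟩
  · exact ⟨4, Nat.dvd_of_mod_eq_zero h4, by simpa using h⟩

/-- Read off from `oddB` the successor of `s` with multiplier `d`, and pass on to `next`. -/
theorem oddB_iff {n₁ s d : ℕ} {L : List ℕ} {b : Bool} :
    oddB n₁ s L d b = true → d * s < n₁ → (∃ y ∈ L, 2 * y = d * s) ∧ b = true := by
  simp only [oddB, cnd_or, cnd_and, ble_true, beq_true, force_eq, memB_iff, Nat.mul_eq, nat_mod,
    nat_div]
  rintro (h | ⟨h1, h2, h3⟩)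
  · exact fun h' => by omega
  · refine fun _ => ⟨⟨_, h2, ?_⟩, h3⟩
    obtain ⟨c, rfl⟩ := Nat.dvd_of_mod_eq_zero h1
    rw [Nat.mul_div_cancel_left c two_pos]; ring

/-- The multipliers `k` for which `2 * z = k * x` is a case of `Rel x z`. -/
def Mult (k : ℕ) : Prop := k = 4 ∨ Odd k ∧ 3 ≤ k

theorem rel_iff_mult {x z : ℕ} : Rel x z ↔ ∃ k, Mult k ∧ 2 * z = k * x := by
  constructor
  · rintro (rfl | ⟨d, h1, h2, h3⟩)
    · exact ⟨4, Or.inl rfl, by ring⟩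
    · exact ⟨d, Or.inr ⟨h1, h2⟩, h3⟩
  · rintro ⟨k, rfl | ⟨h1, h2⟩, h3⟩
    · exact Or.inl (by omega)
    · exact Or.inr ⟨k, h1, h2, h3⟩

theorem exists_of_closedB {n₁ s : ℕ} {L : List ℕ} (h : closedB n₁ s L = true)
    (hs : n₁ ≤ 12 * s) {k : ℕ} (hk : Mult k) (hks : k * s < n₁) : ∃ y ∈ L, 2 * y = k * s := by
  simp only [closedB, cnd_and, cnd_or, ble_true, force_eq, memB_iff, Nat.mul_eq] at h
  obtain ⟨h4, h3⟩ := h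
  rcases hk with rfl | ⟨hk, hk3⟩
  · rcases h4 with h | h
    · omega
    · exact ⟨_, h, by ring⟩
  · have hk12 : k < 12 := by
      by_contra hc
      have : 12 * s ≤ k * s := Nat.mul_le_mul_right s (by omega)
      omega
    have a3 := oddB_iff h3
    have a5 := fun h => (oddB_iff (a3 h).2)
    have a7 := fun h h' => (oddB_iff (a5 h h').2)
    have a9 := fun h h' h'' => (oddB_iff (a7 h h' h'').2)
    have a11 := fun h h' h'' h3 => (oddB_iff (a9 h h' h'' h3).2)
    interval_cases k
    · exact (a3 hks).1
    · exact absurd hk (by decide)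
    · exact (a5 (by omega) hks).1
    · exact absurd hk (by decide)
    · exact (a7 (by omega) (by omega) hks).1
    · exact absurd hk (by decide)
    · exact (a9 (by omega) (by omega) (by omega) hks).1
    · exact absurd hk (by decide)
    · exact (a11 (by omega) (by omega) (by omega) (by omega) hks).1

/-- The list `L`, multiplied by `h`, as a finite set. -/
def scale (h : ℕ) (L : List ℕ) : Finset ℕ := (L.map (h * ·)).toFinset

theorem mem_scale {h z : ℕ} {L : List ℕ} : z ∈ scale h L ↔ ∃ y ∈ L, h * y = z := by
  simp [scale]

theorem scale_cons (h s : ℕ) (L : List ℕ) : scale h (s :: L) = insert (h * s) (scale h L) := by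
  simp [scale]

theorem rel_scale {h s y : ℕ} (hh : 0 < h) : Rel (h * s) (h * y) ↔ Rel s y := by
  rw [rel_iff_mult, rel_iff_mult]
  refine exists_congr fun k => and_congr_right fun _ => ?_
  rw [show 2 * (h * y) = h * (2 * y) by ring, show k * (h * s) = h * (k * s) by ring]
  exact Nat.mul_right_inj hh.ne'

/-- The order required of the list in the dynamic programme: no later element has an earlier one as
a successor. The bound `y < 6 * s` makes `relBit` applicable. -/
def Good : List ℕ → Prop
  | [] => True
  | s :: L => 0 < s ∧ s ∉ L ∧ (∀ y ∈ L, ¬ Rel y s ∧ y < 6 * s) ∧ Good L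

/-- The elements of `scale h L` marked by a mask. -/
def coded (h : ℕ) : ℕ → List ℕ → Set ℕ
  | _, [] => ∅
  | m, s :: L => {z | m % 2 = 1 ∧ z = h * s} ∪ coded h (m / 2) L

theorem coded_subset {h z : ℕ} : ∀ {L : List ℕ} {m : ℕ}, z ∈ coded h m L → z ∈ scale h L
  | [], _, hz => hz.elim
  | s :: L, m, hz => by
    rw [scale_cons, Finset.mem_insert]
    rcases hz with hz | hz
    · exact Or.inl hz.2
    · exact Or.inr (coded_subset hz)

theorem coded_zero {h : ℕ} : ∀ {L : List ℕ}, coded h 0 L = ∅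
  | [] => rfl
  | s :: L => by
    rw [coded, Nat.zero_div, coded_zero]
    simp

theorem coded_or {h : ℕ} : ∀ {L : List ℕ} {a b : ℕ}, coded h (a ||| b) L = coded h a L ∪ coded h b L
  | [], _, _ => by simp [coded]
  | s :: L, a, b => by
    have h1 : (a ||| b) / 2 = a / 2 ||| b / 2 := Nat.or_div_two
    have h2 : (a ||| b) % 2 = 1 ↔ a % 2 = 1 ∨ b % 2 = 1 := Nat.or_mod_two_eq_one
    ext z
    simp only [coded, h1, coded_or, h2, Set.mem_union, Set.mem_ofPred_eq]
    tauto

theorem relBit_eq {s y : ℕ} (hs : 0 < s) (hy : y < 6 * s) :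
    relBit s (2 * y) = 1 ∧ Rel s y ∨ relBit s (2 * y) = 0 ∧ ¬ Rel s y := by
  have hq : 2 * y / s < 12 := by
    rw [Nat.div_lt_iff_lt_mul hs]; omega
  have hdiv := Nat.div_add_mod (2 * y) s
  have hlt := Nat.mod_lt (2 * y) hs
  rw [rel_iff_mult]
  have hrel : (∃ k, Mult k ∧ 2 * y = k * s) ↔ Mult (2 * y / s) ∧ 2 * y % s = 0 := by
    constructor
    · rintro ⟨k, hk, h⟩
      rw [h, Nat.mul_div_cancel k hs, Nat.mul_mod_left]
      exact ⟨hk, rfl⟩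
    · rintro ⟨h1, h2⟩
      exact ⟨_, h1, by rw [h2] at hdiv; linarith⟩
  rw [hrel]
  simp only [relBit, nat_mod, nat_div, Nat.mul_eq, Nat.add_eq]
  change (2744 >>> (2 * y / s + 16 * (2 * y % s))) % 2 = 1 ∧ _ ∨
    (2744 >>> (2 * y / s + 16 * (2 * y % s))) % 2 = 0 ∧ _
  generalize 2 * y / s = q at *
  generalize 2 * y % s = r at *
  rcases Nat.eq_zero_or_pos r with rfl | hr
  · interval_cases q <;> simp [Mult] <;> decide
  · right
    have : 2744 >>> (q + 16 * r) = 0 := by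
      rw [Nat.shiftRight_eq_div_pow]
      apply Nat.div_eq_of_lt
      calc 2744 < 2 ^ 16 := by norm_num
        _ ≤ _ := Nat.pow_le_pow_right two_pos (by omega)
    rw [this]
    exact ⟨rfl, fun h => by omega⟩

theorem coded_gmask {h s : ℕ} (hh : 0 < h) (hs : 0 < s) {z : ℕ} :
    ∀ {L : List ℕ}, (∀ y ∈ L, y < 6 * s) →
      (z ∈ coded h (gmask s L) L ↔ z ∈ scale h L ∧ Rel (h * s) z)
  | [], _ => by simp [coded, scale]
  | y :: L, hL => by
    have ih := coded_gmask hh hs (z := z) fun y hy => hL y (List.mem_cons_of_mem _ hy)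
    have hy := relBit_eq hs (hL y List.mem_cons_self)
    have e : gmask s (y :: L) = relBit s (2 * y) + 2 * gmask s L := rfl
    have e1 : gmask s (y :: L) / 2 = gmask s L := by omega
    have e2 : gmask s (y :: L) % 2 = 1 ↔ Rel s y := by
      rcases hy with ⟨h1, h2⟩ | ⟨h1, h2⟩ <;> simp only [h2, iff_true, iff_false] <;> omega
    rw [coded, e1, Set.mem_union, ih, e2, scale_cons, Finset.mem_insert, Set.mem_ofPred_eq,
      or_and_right]
    refine or_congr ?_ Iff.rfl
    rw [and_comm]
    refine and_congr_right ?_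
    rintro rfl
    exact (rel_scale hh).symm

theorem fam_congr {P : Finset ℕ} {T T' : Set ℕ} (h : ∀ z ∈ P, z ∈ T ↔ z ∈ T') :
    fam P T = fam P T' := by
  ext D
  rw [mem_fam, mem_fam]
  refine and_congr_right fun _ => and_congr_right fun _ => ?_
  exact forall_congr' fun z => forall_congr' fun hz => by rw [h z hz]

/-- The recursion that `step` implements. -/
theorem card_fam_coded_cons {h m s : ℕ} {L : List ℕ} (hh : 0 < h) (hg : Good (s :: L)) :
    (fam (scale h (s :: L)) (coded h m (s :: L))).card =
      (if m % 2 = 1 then 0 else (fam (scale h L) (coded h (m / 2) L)).card) +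
        (fam (scale h L) (coded h (m / 2 ||| gmask s L) L)).card := by
  classical
  obtain ⟨hs, hsL, hL, -⟩ := hg
  have hn : h * s ∉ scale h L := by
    rw [mem_scale]
    rintro ⟨y, hy, e⟩
    exact hsL ((Nat.mul_right_inj hh.ne').1 e ▸ hy)
  rw [scale_cons, card_fam_insert hn]
  · have h1 : h * s ∈ coded h m (s :: L) ↔ m % 2 = 1 := by
      constructor
      · rintro (h | h)
        · exact h.1
        · exact absurd (coded_subset h) hn
      · exact fun h => Or.inl ⟨h, rfl⟩
    have h2 : ∀ z ∈ scale h L, z ∈ coded h m (s :: L) ↔ z ∈ coded h (m / 2) L := by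
      intro z hz
      refine ⟨?_, Or.inr⟩
      rintro (h | h)
      · exact absurd (h.2 ▸ hz) hn
      · exact h
    congr 1
    · rw [fam_congr h2]
      exact if_congr h1 rfl rfl
    · congr 1
      refine fam_congr fun z hz => ?_
      rw [Set.mem_union, h2 z hz, coded_or, Set.mem_union,
        coded_gmask hh hs fun y hy => (hL y hy).2]
      simp [hz]
  · intro z hz
    obtain ⟨y, hy, rfl⟩ := mem_scale.1 hz
    rw [rel_scale hh]
    exact (hL y hy).1

/-- The number of up-sets represented by a list of states when `L` remains to be processed, each
state counted with multiplicity `a * p + b * q`. It is invariant under `step`; keeping `a` and `b`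
general treats `p` and `q` at once. -/
noncomputable def wt (h a b : ℕ) (L : List ℕ) : St → ℕ
  | .nil => 0
  | .cons m p q t => (a * p + b * q) * (fam (scale h L) (coded h m L)).card + wt h a b L t

theorem wt_ins {h a b m p q : ℕ} {L : List ℕ} : ∀ {S : St},
    wt h a b L (ins m p q S) =
      (a * p + b * q) * (fam (scale h L) (coded h m L)).card + wt h a b L S
  | .nil => rfl
  | .cons m' p' q' t => by
    have e : ins m p q (.cons m' p' q' t) =
      cnd (Nat.beq m m') (force (Nat.add p p') fun p => force (Nat.add q q') fun q =>
        .cons m' p q t) (.cons m' p' q' (ins m p q t)) := rfl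
    rw [e, cnd_eq, force_eq, force_eq]
    split_ifs with hm
    · rw [beq_true] at hm
      subst hm
      simp only [wt, Nat.add_eq]
      ring
    · simp only [wt, wt_ins]
      ring

theorem wt_step {h a b s : ℕ} {L : List ℕ} (hh : 0 < h) (hg : Good (s :: L)) : ∀ {S acc : St},
    wt h a b L (step (gmask s L) S acc) = wt h a b (s :: L) S + wt h a b L acc
  | .nil, acc => by simp [wt, step]
  | .cons m p q t, acc => by
    have e : step (gmask s L) (.cons m p q t) acc =
      force (Nat.div m 2) fun h => force (Nat.lor h (gmask s L)) fun h' =>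
        cnd (Nat.beq (Nat.mod m 2) 1) (step (gmask s L) t (ins h' p q acc))
          (step (gmask s L) t (ins h p q (ins h' p q acc))) := rfl
    rw [e, force_eq, force_eq, cnd_eq]
    simp only [wt, beq_true, nat_mod, nat_div]
    rw [card_fam_coded_cons hh hg]
    change _ =
      (a * p + b * q) * (_ + (fam _ (coded h (Nat.lor (m / 2) (gmask s L)) L)).card) + _ + _
    split_ifs with hm
    · rw [wt_step hh hg, wt_ins]; ring
    · rw [wt_step hh hg, wt_ins, wt_ins]; ring

theorem wt_run {h a b : ℕ} (hh : 0 < h) : ∀ {L : List ℕ} {S : St}, Good L →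
    wt h a b [] (run L S) = wt h a b L S
  | [], S, _ => rfl
  | s :: L, S, hg => by
    have e : run (s :: L) S = force (gmask s L) fun G => run L (step G S .nil) := rfl
    rw [e, force_eq, wt_run hh hg.2.2.2, wt_step hh hg]
    simp [wt]

theorem total_eq {h : ℕ} {k : ℕ → ℕ → ℕ} : ∀ {S : St},
    total S k = k (wt h 1 0 [] S) (wt h 0 1 [] S)
  | .nil => rfl
  | .cons m p q t => by
    have e : total (.cons m p q t) k =
      total t fun p' q' => k (Nat.add p p') (Nat.add q q') := rfl
    have hc : (fam (scale h []) (coded h m [])).card = 1 := by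
      rw [Finset.card_eq_one]
      refine ⟨∅, ?_⟩
      ext D
      simp only [mem_fam, scale, List.map_nil, List.toFinset_nil, Finset.subset_empty,
        Finset.mem_singleton]
      constructor
      · exact fun h => h.1
      · rintro rfl; simp
    rw [e, total_eq (h := h)]
    simp [wt, hc]

/-- The two numbers computed for a cell: the up-sets of the neighbourhood of `h * c.g` that contain
all successors of `h * c.g`, and all up-sets of that neighbourhood. -/
theorem final_eq {h : ℕ} (hh : 0 < h) (c : Cell) (hg : Good c.L) (hc : 0 < c.g)
    (hL : ∀ y ∈ c.L, y < 6 * c.g) {k : ℕ → ℕ → ℕ} :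
    total c.final k = k (fam (scale h c.L) {z | Rel (h * c.g) z}).card
      (fam (scale h c.L) ∅).card := by
  rw [total_eq (h := h), Cell.final, force_eq, wt_run hh hg, wt_run hh hg, wt_ins, wt_ins]
  have : fam (scale h c.L) (coded h (gmask c.g c.L) c.L) =
      fam (scale h c.L) {z | Rel (h * c.g) z} :=
    fam_congr fun z hz => by rw [coded_gmask hh hc hL]; simp [hz]
  simp [wt, this, coded_zero]

/-! ### Local gain along a cell -/

theorem good_of_listB {g n₀ n₁ : ℕ} (hn : n₀ < n₁) (hg : n₁ ≤ 12 * g) : ∀ {L : List ℕ},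
    listB g n₀ n₁ L = true → Good L ∧ (∀ s ∈ L, g < s ∧ 2 * s ≤ n₀ ∧ admB n₁ s = true) ∧
      ∀ s ∈ L, ∀ k, Mult k → k * s < n₁ → ∃ y ∈ L, 2 * y = k * s
  | [], _ => by simp [Good]
  | s :: L, h => by
    change cnd (Nat.ble s g) false (cnd (Nat.ble (Nat.mul 2 s) n₀) (cnd (admB n₁ s)
      (cnd (memB s L) false (cnd (closedB n₁ s L) (listB g n₀ n₁ L) false)) false)
        false) = true at h
    simp only [cnd_not, cnd_and, ble_true, memB_iff, not_le, Nat.mul_eq] at h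
    obtain ⟨h1, h2, h3, h4, h5, h6⟩ := h
    obtain ⟨i1, i2, i3⟩ := good_of_listB hn hg h6
    refine ⟨⟨by omega, h4, fun y hy => ⟨fun hr => ?_, ?_⟩, i1⟩, ?_, ?_⟩
    · obtain ⟨k, hk, e⟩ := rel_iff_mult.1 hr
      obtain ⟨y', hy', e'⟩ := i3 y hy k hk (by omega)
      exact h4 (by rwa [show s = y' by omega])
    · have := i2 y hy
      omega
    · intro t ht
      rcases List.mem_cons.1 ht with rfl | ht
      · exact ⟨h1, h2, h3⟩
      · exact i2 t ht
    · intro t ht k hk hkt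
      rcases List.mem_cons.1 ht with rfl | ht
      · obtain ⟨y, hy, e⟩ := exists_of_closedB h5 (by omega) hk hkt
        exact ⟨y, List.mem_cons_of_mem _ hy, e⟩
      · obtain ⟨y, hy, e⟩ := i3 t ht k hk hkt
        exact ⟨y, List.mem_cons_of_mem _ hy, e⟩

/-- The mathematical content of `Cell.ok`. By the last two fields, which reflect `closedB`, the
neighbourhood contains every successor of its elements and of `c.g` that can matter. -/
structure Cell.Valid (c : Cell) : Prop where
  g_pos : 0 < c.g
  two_g : 2 * c.g ≤ c.n₀
  lt : c.n₀ < c.n₁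
  le : c.n₁ ≤ 12 * c.g
  e_dvd : c.e ∣ 30
  adm : admB c.n₁ c.g = true
  good : Good c.L
  mem : ∀ s ∈ c.L, c.g < s ∧ 2 * s ≤ c.n₀ ∧ admB c.n₁ s = true
  closed : ∀ s ∈ c.L, ∀ k, Mult k → k * s < c.n₁ → ∃ y ∈ c.L, 2 * y = k * s
  closed_g : ∀ k, Mult k → k * c.g < c.n₁ → ∃ y ∈ c.L, 2 * y = k * c.g

theorem Cell.valid_of_ok {c : Cell} (h : c.ok = true) : c.Valid := by
  simp only [Cell.ok, cnd_not, cnd_and, ble_true, beq_true, not_le, Nat.mul_eq, nat_mod] at h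
  obtain ⟨h1, h2, h3, h4, h5, h6, h7, h8⟩ := h
  obtain ⟨i1, i2, i3⟩ := good_of_listB h3 h4 h8
  exact ⟨h1, h2, h3, h4, Nat.dvd_of_mod_eq_zero h5, h6, i1, i2, i3,
    fun k hk => exists_of_closedB h7 h4 hk⟩

/-- The number of up-sets of the neighbourhood that contain all successors of `c.g`. -/
noncomputable def Cell.p (c : Cell) : ℕ := total c.final fun p _ => p

/-- The number of all up-sets of the neighbourhood. -/
noncomputable def Cell.q (c : Cell) : ℕ := total c.final fun _ q => q

/-- `log (1 + p / q)`, the gain for each element of the cell. -/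
noncomputable def Cell.ell (c : Cell) : ℝ := Real.log ((c.p + c.q : ℝ) / c.q)

/-- The number `x` belongs to the cell at level `n`. -/
def Cell.Mem (c : Cell) (n x : ℕ) : Prop :=
  ∃ h, x = h * c.g ∧ h.Coprime c.e ∧ h * c.n₀ ≤ n ∧ n < h * c.n₁

section
variable {c : Cell} (hc : c.Valid)
include hc

theorem Cell.Valid.p_eq {h : ℕ} (hh : 0 < h) :
    c.p = (fam (scale h c.L) {z | Rel (h * c.g) z}).card :=
  final_eq hh c hc.good hc.g_pos fun y hy => by
    have := hc.mem y hy; have := hc.le; have := hc.lt; omega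

theorem Cell.Valid.q_eq {h : ℕ} (hh : 0 < h) : c.q = (fam (scale h c.L) ∅).card :=
  final_eq hh c hc.good hc.g_pos fun y hy => by
    have := hc.mem y hy; have := hc.le; have := hc.lt; omega

/-- Elements of the cell and of their neighbourhoods belong to the ground set. -/
theorem mul_mem_A {n h s : ℕ} (h₀ : h * c.n₀ ≤ n) (h₁ : n < h * c.n₁) (hs : c.g ≤ s)
    (hs' : 2 * s ≤ c.n₀) (ha : admB c.n₁ s = true) : h * s ∈ A n := by
  have hh : 0 < h := Nat.pos_of_ne_zero (by rintro rfl; simp at h₁)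
  obtain ⟨k, hk, hk'⟩ := adm_of_admB ha
  have hg := hc.g_pos
  refine mem_A.2 ⟨Nat.mul_pos hh (by omega), ?_, ?_, k, hk.mul_left h, ?_⟩
  · calc 2 * (h * s) = h * (2 * s) := by ring
      _ ≤ h * c.n₀ := Nat.mul_le_mul_left h hs'
      _ ≤ n := h₀
  · calc n < h * c.n₁ := h₁
      _ ≤ h * (12 * s) := Nat.mul_le_mul_left h (by have := hc.le; omega)
      _ = 12 * (h * s) := by ring
  · calc 2 ^ k * n < 2 ^ k * (h * c.n₁) := Nat.mul_lt_mul_of_pos_left h₁ (by positivity)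
      _ = h * (2 ^ k * c.n₁) := by ring
      _ ≤ h * (3 ^ (k + 1) * s) := Nat.mul_le_mul_left h hk'
      _ = 3 ^ (k + 1) * (h * s) := by ring

omit hc in
/-- The scaled neighbourhood is closed under successors in `A n`. -/
theorem exists_of_rel {n h s z : ℕ} (h₁ : n < h * c.n₁) (hz : z ∈ A n) (hr : Rel (h * s) z)
    (hs : ∀ k, Mult k → k * s < c.n₁ → ∃ y ∈ c.L, 2 * y = k * s) : z ∈ scale h c.L := by
  obtain ⟨k, hk, e⟩ := rel_iff_mult.1 hr
  have hz2 := (mem_A.1 hz).2.1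
  have hlt : h * (k * s) < h * c.n₁ := by
    calc h * (k * s) = 2 * z := by rw [e]; ring
      _ ≤ n := hz2
      _ < _ := h₁
  obtain ⟨y, hy, e'⟩ := hs k hk (Nat.lt_of_mul_lt_mul_left hlt)
  refine mem_scale.2 ⟨y, hy, ?_⟩
  have : 2 * (h * y) = 2 * z := by
    rw [e, show 2 * (h * y) = h * (2 * y) by ring, e']; ring
  omega

/-- Adding `x` to the elements of `A n` above it multiplies the number of up-sets by at least
`1 + p / q`. By `card_fam_insert` the factor is `1` plus the proportion of the up-sets that contain
all successors of `x`, and by `card_fam_mul_le` that proportion is at least its value in the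
neighbourhood of `x`. -/
theorem Cell.Valid.mul_le {n x : ℕ} (hx : c.Mem n x) :
    (c.p + c.q) * (fam ((A n).filter (x < ·)) ∅).card ≤
      c.q * (fam (insert x ((A n).filter (x < ·))) ∅).card := by
  obtain ⟨h, rfl, -, h₀, h₁⟩ := hx
  have hh : 0 < h := Nat.pos_of_ne_zero (by rintro rfl; simp at h₁)
  set P := (A n).filter (h * c.g < ·) with hP
  have hQP : scale h c.L ⊆ P := by
    intro z hz
    obtain ⟨y, hy, rfl⟩ := mem_scale.1 hz
    obtain ⟨m1, m2, m3⟩ := hc.mem y hy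
    exact Finset.mem_filter.2 ⟨mul_mem_A hc h₀ h₁ m1.le m2 m3, Nat.mul_lt_mul_of_pos_left m1 hh⟩
  have key := card_fam_mul_le (T := {z | Rel (h * c.g) z}) hQP
    (fun y hy z hz hr => by
      obtain ⟨s, hs, rfl⟩ := mem_scale.1 hy
      exact exists_of_rel h₁ (Finset.mem_filter.1 hz).1 hr (hc.closed s hs))
    (fun z hz hr => exists_of_rel h₁ (Finset.mem_filter.1 hz).1 hr hc.closed_g)
  rw [← hc.p_eq hh, ← hc.q_eq hh] at key
  rw [card_fam_insert (by simp [hP]) (fun z hz hr => by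
    have := (Finset.mem_filter.1 hz).2
    have := hr.lt (by omega)
    omega)]
  rw [if_neg (Set.notMem_empty _), Set.empty_union]
  nlinarith

theorem Cell.Valid.q_pos : 0 < c.q := by
  rw [hc.q_eq one_pos, Finset.card_pos]
  exact ⟨∅, mem_fam.2 (by simp)⟩

theorem Cell.Valid.ell_nonneg : 0 ≤ c.ell := by
  have hq : (0 : ℝ) < c.q := by exact_mod_cast hc.q_pos
  refine Real.log_nonneg ?_
  rw [le_div_iff₀ hq]
  linarith [(Nat.cast_nonneg c.p : (0 : ℝ) ≤ c.p)]

theorem Cell.Valid.log_le {n x : ℕ} (hx : c.Mem n x) :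
    Real.log (fam ((A n).filter (x < ·)) ∅).card + c.ell ≤
      Real.log (fam (insert x ((A n).filter (x < ·))) ∅).card := by
  have h := hc.mul_le hx
  have hpos : 0 < (fam ((A n).filter (x < ·)) ∅).card :=
    Finset.card_pos.2 ⟨∅, mem_fam.2 (by simp)⟩
  have hq : (0 : ℝ) < c.q := by exact_mod_cast hc.q_pos
  have hpos' : (0 : ℝ) < (fam ((A n).filter (x < ·)) ∅).card := by exact_mod_cast hpos
  have hp : (0 : ℝ) ≤ c.p := Nat.cast_nonneg _
  rw [Cell.ell, ← Real.log_mul hpos'.ne' (by positivity)]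
  refine Real.log_le_log (by positivity) ?_
  rw [← mul_div_assoc, div_le_iff₀ hq]
  have h' : ((c.p : ℝ) + c.q) * (fam ((A n).filter (x < ·)) ∅).card ≤
      c.q * (fam (insert x ((A n).filter (x < ·))) ∅).card := by exact_mod_cast h
  linarith

end

theorem card_fam_le_insert {n x : ℕ} (hx : 0 < x) : (fam ((A n).filter (x < ·)) ∅).card ≤
    (fam (insert x ((A n).filter (x < ·))) ∅).card := by
  rw [card_fam_insert (by simp) (fun z hz hr => by
    have := (Finset.mem_filter.1 hz).2
    have := hr.lt (by omega)
    omega), if_neg (Set.notMem_empty _)]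
  exact Nat.le_add_right _ _

/-- Telescoping: the elements of `A n` are added in decreasing order, and `r x` bounds the gain from
adding `x`. -/
theorem log_card_fam_ge {n : ℕ} {r : ℕ → ℝ} (hr : ∀ x ∈ A n,
    Real.log (fam ((A n).filter (x < ·)) ∅).card + r x ≤
      Real.log (fam (insert x ((A n).filter (x < ·))) ∅).card) :
    ∑ x ∈ A n, r x ≤ Real.log (fam (A n) ∅).card := by
  -- Generalise to final segments `S` of `A n`, by induction on adding a new minimum.
  suffices H : ∀ S : Finset ℕ, S ⊆ A n → (∀ x ∈ S, ∀ y ∈ A n, x < y → y ∈ S) →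
      ∑ x ∈ S, r x ≤ Real.log (fam S ∅).card from
    H _ subset_rfl fun _ _ y hy _ => hy
  intro S
  induction S using Finset.induction_on_min with
  | empty =>
    intro _ _
    rw [Finset.sum_empty]
    exact Real.log_natCast_nonneg _
  | insert a s ha ih =>
    intro hS hup
    have hs : s = (A n).filter (a < ·) := by
      ext y
      rw [Finset.mem_filter]
      refine ⟨fun hy => ⟨hS (Finset.mem_insert_of_mem hy), ha y hy⟩, fun ⟨hy, hay⟩ => ?_⟩
      refine (Finset.mem_insert.1 (hup a (Finset.mem_insert_self _ _) y hy hay)).resolve_left ?_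
      omega
    rw [Finset.sum_insert fun h => (ha a h).false]
    have h1 := ih (fun y hy => hS (Finset.mem_insert_of_mem hy)) fun x hx y hy hxy => by
      rw [hs, Finset.mem_filter]
      exact ⟨hy, (ha x hx).trans hxy⟩
    have h2 := hr a (hS (Finset.mem_insert_self _ _))
    rw [← hs] at h2
    linarith

theorem not_mem_of_sepB {c c' : Cell} (hc : c.Valid) (hc' : c'.Valid) (hsep : sepB c c' = true)
    {n x : ℕ} (hx : c.Mem n x) : ¬ c'.Mem n x := by
  rintro ⟨k, e, hk, k₀, k₁⟩
  obtain ⟨h, rfl, hh, h₀, h₁⟩ := hx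
  have hg := hc.g_pos
  have hg' := hc'.g_pos
  -- If `a * g = b * g'` then `g' / gcd g g'` divides `a`, hence is coprime to whatever `a` is.
  have aux : ∀ {a b g g' i : ℕ}, 0 < g → a * g = b * g' → a.Coprime i →
      Nat.gcd (g' / Nat.gcd g g') i ≤ 1 := by
    intro a b g g' i hg e ha
    have hd : 0 < Nat.gcd g g' := Nat.gcd_pos_of_pos_left _ hg
    have hcop := Nat.coprime_div_gcd_div_gcd hd
    have e' : a * (g / Nat.gcd g g') = b * (g' / Nat.gcd g g') := by
      rw [← Nat.mul_div_assoc _ (Nat.gcd_dvd_left g g'),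
        ← Nat.mul_div_assoc _ (Nat.gcd_dvd_right g g'), e]
    have hdvd : g' / Nat.gcd g g' ∣ a :=
      hcop.symm.dvd_of_dvd_mul_right (Dvd.intro_left b e'.symm)
    exact (Nat.Coprime.coprime_dvd_left hdvd ha).le
  rw [sepB, cnd_or, cnd_or, force_eq, cnd_eq, cnd_eq] at hsep
  simp only [ble_true, Nat.mul_eq, nat_div] at hsep
  rcases hsep with hs | hs | hs
  · have h2 : n * (c.g * c'.g) < n * (c.g * c'.g) := by
      calc n * (c.g * c'.g) < h * c.n₁ * (c.g * c'.g) := by gcongr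
        _ = (h * c.g) * (c.n₁ * c'.g) := by ring
        _ ≤ (h * c.g) * (c'.n₀ * c.g) := by gcongr
        _ = (k * c'.n₀) * (c.g * c'.g) := by rw [e]; ring
        _ ≤ _ := by gcongr
    exact h2.false
  · have h2 : n * (c.g * c'.g) < n * (c.g * c'.g) := by
      calc n * (c.g * c'.g) < k * c'.n₁ * (c.g * c'.g) := by gcongr
        _ = (k * c'.g) * (c'.n₁ * c.g) := by ring
        _ ≤ (k * c'.g) * (c.n₀ * c'.g) := by gcongr
        _ = (h * c.n₀) * (c.g * c'.g) := by rw [← e]; ring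
        _ ≤ _ := by gcongr
    exact h2.false
  · rw [if_pos (aux hg e hh)] at hs
    have := aux hg' e.symm hk
    rw [Nat.gcd_comm c'.g] at this
    rw [if_pos this] at hs
    simp at hs

theorem sepAll_iff {c : Cell} : ∀ {cs : List Cell},
    sepAll c cs = true ↔ ∀ c' ∈ cs, sepB c c' = true
  | [] => by simp [sepAll]
  | c' :: cs => by
    change cnd (sepB c c') (sepAll c cs) false = true ↔ _
    rw [cnd_and, sepAll_iff]; simp

theorem pairwise_of_sepList : ∀ {cs : List Cell}, sepList cs = true →
    cs.Pairwise fun c c' => sepB c c' = true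
  | [], _ => List.Pairwise.nil
  | c :: cs, h => by
    change cnd (sepAll c cs) (sepList cs) false = true at h
    rw [cnd_and, sepAll_iff] at h
    exact List.Pairwise.cons h.1 (pairwise_of_sepList h.2)

open Classical in
/-- At most one of pairwise separated cells contains `x`. -/
theorem list_sum_cases {n x : ℕ} : ∀ {cs : List Cell}, (∀ c ∈ cs, c.Valid) →
    (cs.Pairwise fun c c' => sepB c c' = true) →
    (cs.map fun c => if c.Mem n x then c.ell else 0).sum = 0 ∨
      ∃ c ∈ cs, c.Mem n x ∧ (cs.map fun c => if c.Mem n x then c.ell else 0).sum = c.ell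
  | [], _, _ => Or.inl rfl
  | c :: cs, hv, hp => by
    rw [List.pairwise_cons] at hp
    rw [List.map_cons, List.sum_cons]
    by_cases h : c.Mem n x
    · right
      refine ⟨c, List.mem_cons_self, h, ?_⟩
      rw [if_pos h, add_eq_left]
      refine List.sum_eq_zero fun r hr => ?_
      obtain ⟨c', hc', rfl⟩ := List.mem_map.1 hr
      exact if_neg (not_mem_of_sepB (hv c List.mem_cons_self)
        (hv c' (List.mem_cons_of_mem _ hc')) (hp.1 c' hc') h)
    · rw [if_neg h, zero_add]
      rcases list_sum_cases (fun c hc => hv c (List.mem_cons_of_mem _ hc)) hp.2 with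
        h' | ⟨c', h1, h2, h3⟩
      · exact Or.inl h'
      · exact Or.inr ⟨c', List.mem_cons_of_mem _ h1, h2, h3⟩

open Classical in
theorem sum_card_mul_ell_le {n : ℕ} {cs : List Cell} (hv : ∀ c ∈ cs, c.Valid)
    (hp : cs.Pairwise fun c c' => sepB c c' = true) :
    (cs.map fun c => (((A n).filter (c.Mem n)).card : ℝ) * c.ell).sum ≤
      Real.log (fam (A n) ∅).card := by
  have e : ∀ cs : List Cell, (cs.map fun c => (((A n).filter (c.Mem n)).card : ℝ) * c.ell).sum =
      ∑ x ∈ A n, (cs.map fun c => if c.Mem n x then c.ell else 0).sum := by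
    intro cs
    induction cs with
    | nil => simp
    | cons c cs ih =>
      simp only [List.map_cons, List.sum_cons, Finset.sum_add_distrib, ih]
      rw [← Finset.sum_filter, Finset.sum_const, nsmul_eq_mul]
  rw [e]
  refine log_card_fam_ge fun x hx => ?_
  rcases list_sum_cases (n := n) (x := x) hv hp with h | ⟨c, hc, hm, h⟩
  · rw [h, add_zero]
    refine Real.log_le_log ?_ (by exact_mod_cast card_fam_le_insert (mem_A.1 hx).1)
    exact_mod_cast Finset.card_pos.2 ⟨∅, mem_fam.2 (by simp)⟩
  · rw [h]
    exact (hv c hc).log_le hm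

/-! ### Counting the elements of a cell -/

theorem phiB_eq {e : ℕ} (he : e ∣ 30) : phiB e = e.totient := by
  have h : e ∈ Nat.divisors 30 := Nat.mem_divisors.2 ⟨he, by norm_num⟩
  have : ∀ e ∈ Nat.divisors 30, phiB e = e.totient := by decide +kernel
  exact this e h

/-- With `x = p / (p + 2 * q)`, one has `(1 + x) / (1 - x) = (p + q) / q`. -/
theorem le_log_of_logNum {p q : ℕ} (hq : 0 < q) :
    2 * ((logNum p (p + 2 * q) : ℝ) / (3465 * (p + 2 * q : ℝ) ^ 11)) ≤
      Real.log ((p + q : ℝ) / q) := by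
  have hq' : (0 : ℝ) < q := by exact_mod_cast hq
  have hp : (0 : ℝ) ≤ p := Nat.cast_nonneg p
  have hD : (0 : ℝ) < p + 2 * q := by positivity
  have h := Real.sum_range_le_log_div (x := (p : ℝ) / (p + 2 * q)) (by positivity)
    (by rw [div_lt_one hD]; linarith) 6
  have e : (1 + (p : ℝ) / (p + 2 * q)) / (1 - (p : ℝ) / (p + 2 * q)) = (p + q : ℝ) / q := by
    have : (p + 2 * q : ℝ) - p ≠ 0 := by simp [hq'.ne']
    field_simp
    ring
  rw [e] at h
  have e' : (logNum p (p + 2 * q) : ℝ) / (3465 * (p + 2 * q : ℝ) ^ 11) =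
      ∑ i ∈ Finset.range 6, ((p : ℝ) / (p + 2 * q)) ^ (2 * i + 1) / ((2 * i + 1 : ℕ) : ℝ) := by
    simp only [logNum, force_eq, Nat.mul_eq, Nat.add_eq, Nat.pow_eq, Finset.sum_range_succ,
      Finset.sum_range_zero]
    push_cast
    generalize (p + 2 * q : ℝ) = D at hD
    field_simp
    ring
  rw [e']
  push_cast at h ⊢
  linarith

/-- The limiting proportion of the elements of the cell among `1, …, n`. -/
noncomputable def Cell.density (c : Cell) : ℝ := c.e.totient / c.e * (1 / c.n₀ - 1 / c.n₁)

theorem le_card_coprime (e a : ℕ) : ∀ k,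
    k * e.totient ≤ ((Finset.Ico a (a + k * e)).filter e.Coprime).card
  | 0 => by simp
  | k + 1 => by
    have h := le_card_coprime e a k
    have h' := Nat.filter_coprime_Ico_eq_totient e (a + k * e)
    rw [add_mul, one_mul]
    have e1 : (Finset.Ico a (a + (k + 1) * e)) =
        Finset.Ico a (a + k * e) ∪ Finset.Ico (a + k * e) (a + k * e + e) := by
      rw [Finset.Ico_union_Ico_eq_Ico (by omega) (by omega)]
      congr 1; ring
    rw [e1, Finset.filter_union, Finset.card_union_of_disjoint]
    · linarith
    · exact Finset.disjoint_filter_filter (Finset.Ico_disjoint_Ico_consecutive _ _ _)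

section
variable {c : Cell} (hc : c.Valid)
include hc

theorem Cell.Valid.val_le : (c.val : ℝ) ≤ 2 ^ 40 * (c.density * c.ell) := by
  have hv : c.val = (2199023255552 * (logNum c.p (c.p + 2 * c.q) * (c.e.totient * (c.n₁ - c.n₀))))
      / (3465 * (c.p + 2 * c.q) ^ 11 * (c.e * (c.n₀ * c.n₁))) := by
    rw [← phiB_eq hc.e_dvd, Cell.val, Cell.p, Cell.q]
    simp only [total_eq (h := 1), force_eq]
    rfl
  have hlog := le_log_of_logNum (p := c.p) hc.q_pos
  have h0 : (0 : ℝ) < c.n₀ := by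
    have := hc.g_pos; have := hc.two_g; exact_mod_cast (by omega : 0 < c.n₀)
  have h1 : (c.n₀ : ℝ) < c.n₁ := by exact_mod_cast hc.lt
  have he : (0 : ℝ) < c.e := by exact_mod_cast Nat.pos_of_dvd_of_pos hc.e_dvd (by norm_num)
  have hq : (0 : ℝ) < c.q := by exact_mod_cast hc.q_pos
  have hD : (0 : ℝ) < c.p + 2 * c.q := by positivity
  have h2 : (0 : ℝ) < c.n₁ := h0.trans h1
  have hd : 0 ≤ c.density := by
    have : (0 : ℝ) ≤ 1 / c.n₀ - 1 / c.n₁ := sub_nonneg.2 (one_div_le_one_div_of_le h0 h1.le)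
    rw [Cell.density]
    positivity
  calc (c.val : ℝ)
      ≤ ((2199023255552 * (logNum c.p (c.p + 2 * c.q) * (c.e.totient * (c.n₁ - c.n₀))) : ℕ) : ℝ) /
          (3465 * (c.p + 2 * c.q) ^ 11 * (c.e * (c.n₀ * c.n₁)) : ℕ) := by
        rw [hv]; exact Nat.cast_div_le
    _ = 2 ^ 40 * (c.density *
        (2 * ((logNum c.p (c.p + 2 * c.q) : ℝ) / (3465 * (c.p + 2 * c.q : ℝ) ^ 11)))) := by
      rw [Cell.density]
      push_cast [hc.lt.le]
      field_simp
      norm_num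
      ring
    _ ≤ _ := by rw [Cell.ell]; gcongr

open Classical in
/-- The elements of the cell are `h * c.g` for the `h` in `(n / n₁, n / n₀]` coprime to `e`. The
error from rounding the endpoints and from the incomplete period modulo `e` is at most `1 + e ≤ 31`.
-/
theorem Cell.Valid.le_card (n : ℕ) :
    n * c.density - 31 ≤ (((A n).filter (c.Mem n)).card : ℝ) := by
  have h0 : 0 < c.n₀ := by have := hc.g_pos; have := hc.two_g; omega
  have h1 : 0 < c.n₁ := h0.trans hc.lt
  have he : 0 < c.e := Nat.pos_of_dvd_of_pos hc.e_dvd (by norm_num)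
  have he' : c.e ≤ 30 := Nat.le_of_dvd (by norm_num) hc.e_dvd
  set a := n / c.n₁ with ha
  set b := n / c.n₀ with hb
  set k := (b - a) / c.e with hk
  have hab : a ≤ b := Nat.div_le_div_left hc.lt.le h0
  have hke : k * c.e ≤ b - a := Nat.div_mul_le_self _ _
  have hcard : k * c.e.totient ≤ ((A n).filter (c.Mem n)).card := by
    refine (le_card_coprime c.e (a + 1) k).trans ?_
    refine Finset.card_le_card_of_injOn (· * c.g) ?_ ?_
    · intro h hh
      simp only [Finset.coe_filter, Finset.mem_Ico, Set.mem_ofPred_eq] at hh ⊢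
      have i0 : h * c.n₀ ≤ n := (Nat.le_div_iff_mul_le h0).1 (by omega)
      have i1 : n < h * c.n₁ := (Nat.div_lt_iff_lt_mul h1).1 (by omega)
      exact ⟨mul_mem_A hc i0 i1 le_rfl hc.two_g hc.adm, h, rfl, hh.2.symm, i0, i1⟩
    · intro x _ y _ h
      exact Nat.eq_of_mul_eq_mul_right hc.g_pos h
  have hcard' : (k : ℝ) * c.e.totient ≤ ((A n).filter (c.Mem n)).card := by exact_mod_cast hcard
  refine le_trans ?_ hcard'
  have r0 : (0 : ℝ) < c.n₀ := by exact_mod_cast h0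
  have r1 : (0 : ℝ) < c.n₁ := by exact_mod_cast h1
  have re : (0 : ℝ) < c.e := by exact_mod_cast he
  have re' : (c.e : ℝ) ≤ 30 := by exact_mod_cast he'
  have ka : (a : ℝ) ≤ n / c.n₁ := Nat.cast_div_le
  have kb : (n : ℝ) / c.n₀ ≤ b + 1 := by
    rw [div_le_iff₀ r0]
    have := Nat.div_add_mod n c.n₀
    have := Nat.mod_lt n h0
    have : n ≤ (b + 1) * c.n₀ := by rw [add_mul, mul_comm b, hb]; omega
    exact_mod_cast this
  have kk : (b : ℝ) - a ≤ (k + 1) * c.e := by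
    have : b - a ≤ (k + 1) * c.e := by
      have := Nat.div_add_mod (b - a) c.e
      have := Nat.mod_lt (b - a) he
      rw [add_mul, mul_comm k, hk]; omega
    have : b ≤ (k + 1) * c.e + a := by omega
    have : (b : ℝ) ≤ (k + 1) * c.e + a := by exact_mod_cast this
    linarith
  have key : (n : ℝ) * (1 / c.n₀ - 1 / c.n₁) ≤ (k : ℝ) * c.e + 31 := by
    have : (n : ℝ) * (1 / c.n₀ - 1 / c.n₁) = n / c.n₀ - n / c.n₁ := by ring
    rw [this]; linarith
  have ht : (c.e.totient : ℝ) / c.e ≤ 1 := by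
    rw [div_le_one re]; exact_mod_cast Nat.totient_le c.e
  calc n * c.density - 31 = c.e.totient / c.e * (n * (1 / c.n₀ - 1 / c.n₁)) - 31 := by
        rw [Cell.density]; ring
    _ ≤ c.e.totient / c.e * ((k : ℝ) * c.e + 31) - 31 := by gcongr
    _ = (k : ℝ) * c.e.totient + (c.e.totient / c.e - 1) * 31 := by field_simp; ring
    _ ≤ _ := by linarith
end

/-! ### From the cells to the growth rate of `M` -/

theorem tot_eq : ∀ cs : List Cell, tot cs = ((cs.filter Cell.ok).map Cell.val).sum
  | [] => rfl
  | c :: cs => by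
    change Nat.add (cnd c.ok c.val 0) (tot cs) = _
    rw [tot_eq cs, cnd_eq, List.filter_cons]
    split_ifs <;> simp

theorem tot_le : ∀ {cs : List Cell}, (∀ c ∈ cs, c.Valid) →
    ((cs.map Cell.val).sum : ℝ) ≤ 2 ^ 40 * (cs.map fun c => c.density * c.ell).sum
  | [], _ => by simp
  | c :: cs, h => by
    have := (h c List.mem_cons_self).val_le
    have := tot_le fun c hc => h c (List.mem_cons_of_mem _ hc)
    simp only [List.map_cons, List.sum_cons, mul_add]
    push_cast at this ⊢
    linarith

open Classical in
theorem le_sum_card {n : ℕ} : ∀ {cs : List Cell}, (∀ c ∈ cs, c.Valid) →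
    n * (cs.map fun c => c.density * c.ell).sum - 31 * (cs.map Cell.ell).sum ≤
      (cs.map fun c => (((A n).filter (c.Mem n)).card : ℝ) * c.ell).sum
  | [], _ => by simp
  | c :: cs, h => by
    have h1 := mul_le_mul_of_nonneg_right ((h c List.mem_cons_self).le_card n)
      (h c List.mem_cons_self).ell_nonneg
    have h2 := le_sum_card (n := n) fun c hc => h c (List.mem_cons_of_mem _ hc)
    simp only [List.map_cons, List.sum_cons]
    linarith

/-- The constant `C` depends on the list of cells only, so pairwise separated cells give a lower
bound for the exponential growth rate of `M`. -/
theorem exists_le_log_M {cs : List Cell} (hs : sepList cs = true) :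
    ∃ C : ℝ, ∀ n : ℕ, n * (tot cs / 2 ^ 40 : ℝ) - C ≤ Real.log (M n) := by
  set ds := cs.filter Cell.ok
  have hv : ∀ c ∈ ds, c.Valid := fun c hc => Cell.valid_of_ok (List.mem_filter.1 hc).2
  have hp := (pairwise_of_sepList hs).filter Cell.ok
  refine ⟨31 * (ds.map Cell.ell).sum, fun n => ?_⟩
  have h1 : (tot cs / 2 ^ 40 : ℝ) ≤ (ds.map fun c => c.density * c.ell).sum := by
    rw [div_le_iff₀ (by positivity), tot_eq, mul_comm]
    exact tot_le hv
  have h2 := (le_sum_card (n := n) hv).trans (sum_card_mul_ell_le hv hp)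
  have h3 : Real.log (fam (A n) ∅).card ≤ Real.log (M n) := by
    refine Real.log_le_log ?_ (by exact_mod_cast card_fam_le_M n)
    exact_mod_cast Finset.card_pos.2 ⟨∅, mem_fam.2 (by simp)⟩
  have := mul_le_mul_of_nonneg_left h1 (Nat.cast_nonneg (α := ℝ) n)
  linarith

theorem M_le (n : ℕ) : M n ≤ 2 ^ n := by
  have h : {S : Finset ℕ | S ⊆ Finset.Icc 1 n ∧ IsPrimitive S ∧ S.card = (n + 1) / 2} ⊆
      ((Finset.Icc 1 n).powerset : Set (Finset ℕ)) := fun S hS => by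
    rw [Finset.mem_coe, Finset.mem_powerset]; exact hS.1
  have := Set.ncard_le_ncard h (Finset.finite_toSet _)
  rw [Set.ncard_coe_finset, Finset.card_powerset, Nat.card_Icc, Nat.add_sub_cancel] at this
  exact this

theorem exp_gt : (1.148192 : ℝ) < Real.exp 0.138189 := by
  refine lt_of_lt_of_le ?_ (Real.sum_le_exp_of_nonneg (by norm_num) 7)
  norm_num [Finset.sum_range_succ, Nat.factorial]

/-- The margin between `r` and `0.138189` absorbs the constant `C`; note that
`log 1.148192 = 0.13818853…`. -/
theorem lt_liminf {r C : ℝ} (hr : 0.138189 < r) (h : ∀ n : ℕ, n * r - C ≤ Real.log (M n))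
    (hpos : ∀ n, 0 < M n) :
    1.148192 < Filter.liminf (fun n : ℕ => (M n : ℝ) ^ ((n : ℝ)⁻¹)) Filter.atTop := by
  refine exp_gt.trans_le (Filter.le_liminf_of_le ?_ ?_)
  · refine Filter.IsBoundedUnder.isCoboundedUnder_ge (Filter.isBoundedUnder_of ⟨2, fun n => ?_⟩)
    rcases Nat.eq_zero_or_pos n with rfl | hn
    · simp
    · rw [Real.rpow_inv_le_iff_of_pos (by positivity) (by norm_num) (by exact_mod_cast hn)]
      exact_mod_cast M_le n
  · obtain ⟨k, hk⟩ := exists_nat_gt (C / (r - 0.138189))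
    filter_upwards [Filter.eventually_ge_atTop k, Filter.eventually_gt_atTop 0] with n hn h0
    have hM : (0 : ℝ) < M n := by exact_mod_cast hpos n
    have hn0 : (0 : ℝ) < n := by exact_mod_cast h0
    rw [Real.rpow_def_of_pos hM, Real.exp_le_exp, ← div_eq_mul_inv, le_div_iff₀ hn0]
    have : C < n * (r - 0.138189) := by
      rw [← div_lt_iff₀ (by linarith)]
      exact hk.trans_le (by exact_mod_cast hn)
    linarith [h n]

theorem M_pos (n : ℕ) : 0 < M n :=
  (Finset.card_pos.2 ⟨∅, mem_fam.2 (by simp)⟩).trans_le (card_fam_le_M n)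

theorem main_of {cs : List Cell} (hs : sepList cs = true)
    (ht : Nat.ble 151941000000 (tot cs) = true) :
    1.148192 < Filter.liminf (fun n : ℕ => (M n : ℝ) ^ ((n : ℝ)⁻¹)) Filter.atTop := by
  obtain ⟨C, hC⟩ := exists_le_log_M hs
  refine lt_liminf ?_ hC M_pos
  rw [ble_true] at ht
  have : (151941000000 : ℝ) ≤ tot cs := by exact_mod_cast ht
  rw [lt_div_iff₀ (by positivity)]
  refine lt_of_lt_of_le ?_ this
  norm_num

/-! ### The list of cells -/

/-! Block `k` covers the range `3 * (3 / 2) ^ (k - 1) ≤ n / x < 3 * (3 / 2) ^ k` of admissible `x`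
divisible by `2 ^ k`; the first block starts at `2` and the last one is cut at `12`. Within a block,
`g` collects the part of `x` on which the neighbourhood depends, and the breakpoints are the values
of `n / h` at which the neighbourhood changes. The ratios determine which relatives of `x` are taken
into account; more of them would improve the bound. -/

/-- Elements with `2 ≤ n / x < 3`; they have no successors. -/
def block0 : Block :=
  ([],
   [(1, 1, [2, 3])])

/-- Even elements with `3 ≤ n / x < 9 / 2`. -/
def block1 : Block :=
  ([(1, 3), (1, 1), (3, 1)],
   [(2, 3, [6, 8, 9]),
   (6, 1, [18, 24, 27])])

/-- Multiples of `4` with `9 / 2 ≤ n / x < 27 / 4`, and neighbourhoods with ratios composed of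
`2`, `3` and `5`. -/
def block2 : Block :=
  ([(1, 45), (1, 15), (1, 5), (3, 5), (9, 5), (27, 5), (81, 5), (243, 5), (1, 27), (1, 9), (1, 3), (1, 1), (3, 1), (9, 1), (27, 1), (81, 1), (5, 27), (5, 9), (5, 3), (5, 1), (15, 1), (45, 1), (25, 27), (25, 9), (25, 3), (25, 1), (75, 1), (125, 3)],
   [(4, 30, [18, 20, 24, 27]),
   (8, 30, [36, 40, 45, 48, 50, 54]),
   (12, 30, [54, 60, 64, 72, 75, 80, 81]),
   (16, 30, [72, 75, 80, 81, 90, 96, 100, 108]),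
   (20, 6, [90, 96, 100, 108, 120, 128, 135]),
   (24, 30, [108, 120, 128, 135, 144, 150, 160, 162]),
   (32, 15, [144, 150, 160, 162, 180, 192, 200, 216]),
   (36, 30, [162, 180, 192, 200, 216, 225, 240, 243]),
   (40, 6, [180, 192, 200, 216, 225, 240, 243, 250, 256, 270]),
   (48, 30, [216, 225, 240, 243, 250, 256, 270, 288, 300, 320, 324]),
   (60, 6, [270, 288, 300, 320, 324, 360, 375, 384, 400, 405]),
   (72, 30, [324, 360, 384, 400, 405, 432, 450, 480, 486]),
   (80, 6, [360, 375, 384, 400, 405, 432, 450, 480, 486, 500, 512, 540]),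
   (96, 15, [432, 450, 480, 486, 500, 512, 540, 576, 600, 640, 648]),
   (108, 10, [486, 512, 540, 576, 600, 640, 648, 675, 720, 729]),
   (120, 6, [540, 576, 600, 640, 648, 675, 720, 729, 750, 768, 800, 810]),
   (144, 30, [648, 675, 720, 729, 750, 768, 800, 810, 864, 900, 960, 972]),
   (160, 3, [720, 729, 750, 768, 800, 810, 864, 900, 960, 972, 1000, 1024, 1080]),
   (180, 6, [810, 864, 900, 960, 972, 1000, 1024, 1080, 1125, 1152, 1200, 1215]),
   (216, 10, [972, 1024, 1080, 1152, 1200, 1215, 1280, 1296, 1350, 1440, 1458]),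
   (240, 6, [1080, 1125, 1152, 1200, 1215, 1250, 1280, 1296, 1350, 1440, 1458, 1500, 1536, 1600, 1620]),
   (288, 15, [1296, 1350, 1440, 1458, 1500, 1536, 1600, 1620, 1728, 1800, 1920, 1944]),
   (360, 6, [1620, 1728, 1800, 1920, 1944, 2000, 2025, 2048, 2160, 2187, 2250, 2304, 2400, 2430]),
   (432, 10, [1944, 2025, 2048, 2160, 2187, 2250, 2304, 2400, 2430, 2560, 2592, 2700, 2880, 2916]),
   (480, 3, [2160, 2187, 2250, 2304, 2400, 2430, 2500, 2560, 2592, 2700, 2880, 2916, 3000, 3072, 3200, 3240]),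
   (540, 2, [2430, 2560, 2592, 2700, 2880, 2916, 3000, 3072, 3200, 3240, 3375, 3456, 3600, 3645]),
   (720, 6, [3240, 3375, 3456, 3600, 3645, 3750, 3840, 3888, 4000, 4050, 4096, 4320, 4374, 4500, 4608, 4800, 4860]),
   (864, 5, [3888, 4050, 4096, 4320, 4374, 4500, 4608, 4800, 4860, 5120, 5184, 5400, 5760, 5832]),
   (1080, 2, [4860, 5120, 5184, 5400, 5760, 5832, 6000, 6075, 6144, 6400, 6480, 6561, 6750, 6912, 7200, 7290]),
   (1440, 3, [6480, 6561, 6750, 6912, 7200, 7290, 7500, 7680, 7776, 8000, 8100, 8192, 8640, 8748, 9000, 9216, 9600, 9720]),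
   (2160, 2, [9720, 10125, 10240, 10368, 10800, 10935, 11250, 11520, 11664, 12000, 12150, 12288, 12800, 12960, 13122, 13500, 13824, 14400, 14580]),
   (4320, 1, [19440, 19683, 20250, 20480, 20736, 21600, 21870, 22500, 23040, 23328, 24000, 24300, 24576, 25600, 25920, 26244, 27000, 27648, 28800, 29160])])

/-- Multiples of `8` with `27 / 4 ≤ n / x < 81 / 8`, and neighbourhoods with ratios composed of
`2`, `3`, `5` and `7`. -/
def block3 : Block :=
  ([(1, 9), (1, 3), (1, 1), (3, 1), (9, 1), (27, 1), (81, 1), (5, 9), (5, 3), (5, 1), (15, 1), (45, 1), (135, 1), (25, 9), (25, 3), (25, 1), (75, 1), (125, 9), (125, 3), (125, 1), (625, 9), (7, 9), (7, 3), (7, 1), (21, 1), (63, 1), (35, 9), (35, 3), (35, 1), (105, 1), (175, 9), (175, 3), (49, 3), (49, 1), (147, 1)],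
   [(8, 6, [54, 56, 60, 63, 64, 70, 72, 75, 80, 81]),
   (16, 6, [108, 112, 120, 126, 128, 135, 140, 144, 147, 150, 160, 162]),
   (24, 6, [162, 168, 180, 189, 192, 196, 200, 210, 216, 224, 225, 240, 243]),
   (32, 3, [216, 224, 225, 240, 243, 250, 252, 256, 270, 280, 288, 294, 300, 315, 320, 324]),
   (48, 6, [324, 336, 350, 360, 375, 378, 384, 392, 400, 405, 420, 432, 441, 448, 450, 480, 486]),
   (72, 2, [486, 500, 504, 512, 525, 540, 560, 567, 576, 588, 600, 630, 640, 648, 672, 675, 700, 720, 729]),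
   (96, 3, [648, 672, 675, 700, 720, 729, 750, 756, 768, 784, 800, 810, 840, 864, 882, 896, 900, 945, 960, 972]),
   (144, 2, [972, 1000, 1008, 1024, 1050, 1080, 1120, 1125, 1134, 1152, 1176, 1200, 1215, 1250, 1260, 1280, 1296, 1323, 1344, 1350, 1400, 1440, 1458]),
   (288, 1, [1944, 2000, 2016, 2025, 2048, 2100, 2160, 2187, 2240, 2250, 2268, 2304, 2352, 2400, 2430, 2500, 2520, 2560, 2592, 2646, 2688, 2700, 2800, 2835, 2880, 2916])])

/-- Multiples of `16` with `81 / 8 ≤ n / x < 12`, and neighbourhoods with ratios composed of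
`2`, `3`, `5`, `7` and `11`. -/
def block4 : Block :=
  ([(1, 3), (11, 3), (1, 1), (11, 1), (3, 1), (33, 1), (9, 1), (27, 1), (81, 1), (5, 3), (55, 3), (5, 1), (55, 1), (15, 1), (45, 1), (25, 3), (25, 1), (75, 1), (125, 3), (7, 3), (7, 1), (21, 1), (63, 1), (35, 3), (35, 1), (49, 3)],
   [(16, 3, [162, 165, 168, 176, 180, 189, 192]),
   (48, 1, [486, 495, 500, 504, 512, 528, 540, 560, 567, 576])])

/-- The cells of all blocks. -/
def allCells : List Cell :=
  cells block0 ++ cells block1 ++ cells block2 ++ cells block3 ++ cells block4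

theorem sepList_allCells : sepList allCells = true := by decide +kernel

/-- The threshold exceeds `0.138189 * 2 ^ 40`. -/
theorem ble_tot_allCells : Nat.ble 151941000000 (tot allCells) = true := by decide +kernel

end PrimitiveCount

theorem maximum_primitive_count_liminf_lower_bound :
    1.148192 < Filter.liminf (fun n : ℕ => (M n : ℝ) ^ ((n : ℝ)⁻¹)) Filter.atTop :=
  PrimitiveCount.main_of PrimitiveCount.sepList_allCells PrimitiveCount.ble_tot_allCells
end

section
/- The lower limit liminf_{n→∞} m(n)^{1/n} is strictly greater than 1.212500, and the upper limit limsup_{n→∞} m(n)^{1/n} is strictly less than 1.240904. -/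
/-- `maximalPrimCount n` is the number of maximal primitive subsets of `{1, 2, …, n}`. -/
noncomputable def maximalPrimCount (n : ℕ) : ℕ :=
  Nat.card {S : Finset ℕ // S ⊆ Finset.Icc 1 n ∧ IsPrimitive S ∧
    ∀ k ∈ Finset.Icc 1 n, k ∉ S → ¬ IsPrimitive (insert k S)}

namespace MaxPrim

/-! ### A transfer computation for primitive sets with a domination condition -/

/-- Boolean comparability in the divisibility order. -/
def cmp (a b : ℕ) : Bool := Bool.rec (Nat.beq (Nat.mod a b) 0) true (Nat.beq (Nat.mod b a) 0)

/-- `force n f = f n`; in the kernel this evaluates `n` before it is passed on. -/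
noncomputable def force {α : Type} (n : ℕ) (f : ℕ → α) : α :=
  Nat.casesOn n (f 0) (fun m => f (Nat.succ m))

/-- `forceList l f = f l`, with the list `l` evaluated first. -/
noncomputable def forceList {α : Type} : List ℕ → (List ℕ → α) → α
  | [], f => f []
  | a :: l, f => force a fun a => forceList l fun l => f (a :: l)

/-- The set `{a ∈ l | p a}`, encoded by the binary digits of a natural number. -/
noncomputable def mask (p : ℕ → Bool) (l : List ℕ) : ℕ :=
  List.rec 0 (fun a _ ih => Bool.rec ih (Nat.lor (Nat.pow 2 a) ih) (p a)) l

/-- No element of `l` is comparable to `v`. -/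
noncomputable def allNot (v : ℕ) (l : List ℕ) : Bool :=
  List.rec true (fun a _ ih => Bool.rec ih false (cmp a v)) l

/-- Binary trees whose nodes carry a state and its multiplicity: the finite multisets of states. -/
inductive Tree where
  | leaf : Tree
  | node : ℕ → ℕ → Tree → Tree → Tree

/-- Add the state `k` with multiplicity `w` to a tree, in continuation passing style. -/
noncomputable def ins (k w : ℕ) (t : Tree) : (Tree → ℕ) → ℕ :=
  Tree.rec (motive := fun _ => (Tree → ℕ) → ℕ)
    (fun f => f (.node k w .leaf .leaf))
    (fun k' w' l r ihl ihr f =>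
      Bool.rec
        (Bool.rec (ihr fun r => f (.node k' w' l r)) (ihl fun l => f (.node k' w' l r))
          (Nat.ble k k'))
        (force (Nat.add w w') fun w => f (.node k' w l r)) (Nat.beq k k')) t

/-- Add the state `C` to `acc` if it contains `A`, after adjoining `F` to it. -/
noncomputable def push (A F w C : ℕ) (acc : Tree) (f : Tree → ℕ) : ℕ :=
  Bool.rec (f acc) (force (Nat.lor C F) fun C' => ins C' w acc f) (Nat.beq (Nat.land C A) A)

/-- One transfer step: every state `C` is continued without the current vertex and, if the
digit `P` of this vertex is not in `C`, with it. -/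
noncomputable def go (P N A F : ℕ) (t : Tree) : Tree → (Tree → ℕ) → ℕ :=
  Tree.rec (motive := fun _ => Tree → (Tree → ℕ) → ℕ)
    (fun acc f => f acc)
    (fun C w _ _ ihl ihr acc f =>
      ihl acc fun acc => ihr acc fun acc => push A F w C acc fun acc =>
        Bool.rec (f acc) (push A F w (Nat.lor C N) acc f) (Nat.beq (Nat.land C P) 0)) t

/-- The sum of all multiplicities. -/
def total : Tree → ℕ
  | .leaf => 0
  | .node _ w l r => Nat.add w (Nat.add (total l) (total r))

/-- The vertices of `V` comparable to `v`. -/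
noncomputable def maskN (V : List ℕ) (v : ℕ) : ℕ := mask (fun j => cmp v j) V

/-- The processed vertices in need of domination whose last comparable vertex is `v`. -/
noncomputable def maskA (dom : ℕ → Bool) (pre rest : List ℕ) (v : ℕ) : ℕ :=
  mask (fun j => Bool.rec false (Bool.rec false (allNot j rest) (cmp v j)) (dom j)) (v :: pre)

/-- The processed vertices that play no role after the step at `v`. -/
noncomputable def maskF (dom : ℕ → Bool) (pre rest : List ℕ) (v : ℕ) : ℕ :=
  mask (fun j => Bool.rec (Nat.beq v j) (Bool.rec false (allNot j rest) (cmp v j)) (dom j))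
    (v :: pre)

/-- Run the transfer computation through the list of remaining vertices. -/
noncomputable def dp (dom : ℕ → Bool) (V : List ℕ) : List ℕ → List ℕ → Tree → ℕ
  | _, [], t => total t
  | pre, v :: rest, t =>
    force (maskN V v) fun N =>
    force (maskA dom pre rest v) fun A =>
    force (maskF dom pre rest v) fun F =>
    force (Nat.pow 2 v) fun P => go P N A F t .leaf fun t => dp dom V (v :: pre) rest t

/-- The number of primitive subsets of `V` which dominate the elements of `V` in `dom`. -/
noncomputable def count (dom : ℕ → Bool) (V : List ℕ) : ℕ :=
  forceList V fun V => dp dom V [] V (.node 0 1 .leaf .leaf)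

theorem cmp_iff (a b : ℕ) : cmp a b = true ↔ a ∣ b ∨ b ∣ a := by
  have h1 : Nat.beq (Nat.mod b a) 0 = true ↔ a ∣ b := by
    rw [Nat.beq_eq]; exact (Nat.dvd_iff_mod_eq_zero).symm
  have h2 : Nat.beq (Nat.mod a b) 0 = true ↔ b ∣ a := by
    rw [Nat.beq_eq]; exact (Nat.dvd_iff_mod_eq_zero).symm
  unfold cmp
  cases h : Nat.beq (Nat.mod b a) 0
  · have : ¬ a ∣ b := by rw [← h1, h]; simp
    simp only [h2]; tauto
  · have : a ∣ b := by rw [← h1, h]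
    simp [this]

theorem force_eq {α : Type} (n : ℕ) (f : ℕ → α) : force n f = f n := by cases n <;> rfl

theorem forceList_eq {α : Type} (l : List ℕ) (f : List ℕ → α) : forceList l f = f l := by
  induction l generalizing f with
  | nil => rfl
  | cons a l ih => simp [forceList, force_eq, ih]

theorem testBit_mask (p : ℕ → Bool) (l : List ℕ) (j : ℕ) :
    (mask p l).testBit j = true ↔ j ∈ l ∧ p j = true := by
  induction l with
  | nil => simp [mask]
  | cons a l ih =>
    have h : mask p (a :: l) = bif p a then (2 ^ a ||| mask p l) else mask p l := by
      simp only [mask]; cases p a <;> rfl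
    rw [h]
    cases hp : p a
    · simp only [cond_false, ih, List.mem_cons]
      constructor
      · tauto
      · rintro ⟨rfl | h, h'⟩
        · simp_all
        · exact ⟨h, h'⟩
    · simp only [cond_true, Nat.testBit_or, Bool.or_eq_true, ih, Nat.testBit_two_pow, List.mem_cons,
        decide_eq_true_eq]
      constructor
      · rintro (rfl | h)
        · exact ⟨Or.inl rfl, hp⟩
        · tauto
      · rintro ⟨rfl | h, h'⟩
        · exact Or.inl rfl
        · exact Or.inr ⟨h, h'⟩

theorem allNot_iff (v : ℕ) (l : List ℕ) : allNot v l = true ↔ ∀ u ∈ l, ¬ cmp u v = true := by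
  induction l with
  | nil => simp [allNot]
  | cons a l ih =>
    have h : allNot v (a :: l) = bif cmp a v then false else allNot v l := by
      simp only [allNot]; cases cmp a v <;> rfl
    rw [h]
    cases hp : cmp a v <;> simp [hp, ih]

theorem testBit_maskN (V : List ℕ) (v j : ℕ) :
    (maskN V v).testBit j = true ↔ j ∈ V ∧ cmp v j = true := testBit_mask _ _ _

theorem testBit_maskA (dom : ℕ → Bool) (pre rest : List ℕ) (v j : ℕ) :
    (maskA dom pre rest v).testBit j = true ↔
      (j = v ∨ j ∈ pre) ∧ dom j = true ∧ cmp v j = true ∧ ∀ u ∈ rest, ¬ cmp u j = true := by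
  rw [maskA, testBit_mask, List.mem_cons, ← allNot_iff]
  cases dom j <;> cases cmp v j <;> simp

theorem testBit_maskF (dom : ℕ → Bool) (pre rest : List ℕ) (v j : ℕ) :
    (maskF dom pre rest v).testBit j = true ↔
      (j = v ∨ j ∈ pre) ∧ ((dom j = false ∧ v = j) ∨
        (dom j = true ∧ cmp v j = true ∧ ∀ u ∈ rest, ¬ cmp u j = true)) := by
  rw [maskF, testBit_mask, List.mem_cons, ← allNot_iff]
  cases dom j <;> cases cmp v j <;> simp [Nat.beq_eq]

/-- The sum of a function over the states of a tree, with multiplicity. -/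
def tsum (g : ℕ → ℕ) : Tree → ℕ
  | .leaf => 0
  | .node k w l r => w * g k + tsum g l + tsum g r

theorem total_eq (t : Tree) : total t = tsum (fun _ => 1) t := by
  induction t with
  | leaf => rfl
  | node k w l r ihl ihr =>
    simp only [total, tsum, ihl, ihr, Nat.add_eq]; ring

/-- Insertion passes on a tree in which the weight of `k` has grown by `w`. Weighted sums over the
states are all that matters, so no ordering invariant of the tree is needed. -/
theorem ins_eq (k w : ℕ) (t : Tree) :
    ∃ t', (∀ f, ins k w t f = f t') ∧ ∀ g, tsum g t' = tsum g t + w * g k := by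
  induction t with
  | leaf => exact ⟨_, fun f => rfl, fun g => by simp [tsum]⟩
  | node k' w' l r ihl ihr =>
    obtain ⟨l', hl, hl'⟩ := ihl
    obtain ⟨r', hr, hr'⟩ := ihr
    have h : ∀ f, ins k w (.node k' w' l r) f =
        bif Nat.beq k k' then f (.node k' (w + w') l r) else
          bif Nat.ble k k' then f (.node k' w' l' r) else f (.node k' w' l r') := by
      intro f
      have e : ins k w (.node k' w' l r) f =
        bif Nat.beq k k' then (force (Nat.add w w') fun w => f (.node k' w l r)) else
          bif Nat.ble k k' then ins k w l (fun l => f (.node k' w' l r))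
          else ins k w r (fun r => f (.node k' w' l r)) := by
        unfold ins
        cases h1 : Nat.beq k k' <;> cases h2 : Nat.ble k k' <;> simp only [h1, h2] <;> rfl
      rw [e, hl, hr, force_eq]; rfl
    cases h1 : Nat.beq k k'
    · cases h2 : Nat.ble k k'
      · refine ⟨.node k' w' l r', fun f => by rw [h, h1, h2]; rfl, fun g => ?_⟩
        simp only [tsum, hr']; ring
      · refine ⟨.node k' w' l' r, fun f => by rw [h, h1, h2]; rfl, fun g => ?_⟩
        simp only [tsum, hl']; ring
    · refine ⟨.node k' (w + w') l r, fun f => by rw [h, h1]; rfl, fun g => ?_⟩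
      have : k = k' := by simpa [Nat.beq_eq] using h1
      subst this
      simp only [tsum]; ring

/-- `push` adds the state `C ||| F`, with multiplicity `w`, exactly when `C` contains `A`. -/
theorem push_eq (A F w C : ℕ) (t : Tree) :
    ∃ t', (∀ f, push A F w C t f = f t') ∧
      ∀ g, tsum g t' = tsum g t + w * if C &&& A = A then g (C ||| F) else 0 := by
  cases h : Nat.beq (Nat.land C A) A
  · refine ⟨t, fun f => by simp only [push, h], fun g => ?_⟩
    have : ¬ (C &&& A = A) := by
      intro h'
      have : Nat.beq (Nat.land C A) A = true := by rw [Nat.beq_eq]; exact h'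
      rw [h] at this; cases this
    simp [this]
  · obtain ⟨t', h1, h2⟩ := ins_eq (C ||| F) w t
    refine ⟨t', fun f => ?_, fun g => ?_⟩
    · simp only [push, h, force_eq]; exact h1 f
    · have : C &&& A = A := by rw [Nat.beq_eq] at h; exact h
      simp [this, h2]

/-- The weighted sums of the tree passed on by a transfer step: every state contributes its
continuation without the vertex `v` and, if allowed, the one with it. -/
theorem go_eq (v N A F : ℕ) (t : Tree) : ∀ acc : Tree,
    ∃ t', (∀ f, go (Nat.pow 2 v) N A F t acc f = f t') ∧
      ∀ g, tsum g t' = tsum g acc + tsum (fun C =>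
        (if C &&& A = A then g (C ||| F) else 0) + if C.testBit v = false then
          (if (C ||| N) &&& A = A then g ((C ||| N) ||| F) else 0) else 0) t := by
  induction t with
  | leaf => intro acc; exact ⟨acc, fun f => rfl, fun g => by simp [tsum]⟩
  | node C w l r ihl ihr =>
    intro acc
    obtain ⟨t1, h1, h1'⟩ := ihl acc
    obtain ⟨t2, h2, h2'⟩ := ihr t1
    obtain ⟨t3, h3, h3'⟩ := push_eq A F w C t2
    obtain ⟨t4, h4, h4'⟩ := push_eq A F w (C ||| N) t3
    have e : ∀ f, go (Nat.pow 2 v) N A F (.node C w l r) acc f =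
        bif Nat.beq (Nat.land C (Nat.pow 2 v)) 0 then f t4 else f t3 := by
      intro f
      have : go (Nat.pow 2 v) N A F (.node C w l r) acc f =
        go (Nat.pow 2 v) N A F l acc fun acc => go (Nat.pow 2 v) N A F r acc fun acc =>
          push A F w C acc fun acc => bif Nat.beq (Nat.land C (Nat.pow 2 v)) 0 then
            push A F w (Nat.lor C N) acc f else f acc := by
        unfold go
        cases h : Nat.beq (Nat.land C (Nat.pow 2 v)) 0 <;> simp only [h] <;> rfl
      rw [this, h1, h2, h3]
      cases h : Nat.beq (Nat.land C (Nat.pow 2 v)) 0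
      · rfl
      · exact h4 f
    have key : Nat.beq (Nat.land C (Nat.pow 2 v)) 0 = true ↔ C.testBit v = false := by
      rw [Nat.beq_eq]
      change C &&& 2 ^ v = 0 ↔ _
      rw [Nat.and_two_pow]
      cases C.testBit v <;> simp
    cases h : Nat.beq (Nat.land C (Nat.pow 2 v)) 0
    · refine ⟨t3, fun f => by rw [e, h]; rfl, fun g => ?_⟩
      have : C.testBit v = true := by
        rw [← Bool.not_eq_false, ← key, h]; simp
      simp only [tsum, h3', h2', h1', this, Bool.true_eq_false, if_false]
      ring
    · refine ⟨t4, fun f => by rw [e, h]; rfl, fun g => ?_⟩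
      have : C.testBit v = false := by rw [← key, h]
      simp only [tsum, h4', h3', h2', h1', this, if_true]; ring

/-- The number of admissible continuations from the state `C`. -/
noncomputable def cnt (dom : ℕ → Bool) (V : List ℕ) : List ℕ → List ℕ → ℕ → ℕ
  | _, [], _ => 1
  | pre, v :: rest, C =>
    (if C &&& maskA dom pre rest v = maskA dom pre rest v then
      cnt dom V (v :: pre) rest (C ||| maskF dom pre rest v) else 0) +
    if C.testBit v = false then
      (if (C ||| maskN V v) &&& maskA dom pre rest v = maskA dom pre rest v then
        cnt dom V (v :: pre) rest ((C ||| maskN V v) ||| maskF dom pre rest v) else 0) else 0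

/-- The computation on a whole tree of states adds up the contributions of the single states. -/
theorem dp_eq (dom : ℕ → Bool) (V rest : List ℕ) : ∀ pre t,
    dp dom V pre rest t = tsum (cnt dom V pre rest) t := by
  induction rest with
  | nil => intro pre t; exact total_eq t
  | cons v rest ih =>
    intro pre t
    obtain ⟨t', h1, h2⟩ := go_eq v (maskN V v) (maskA dom pre rest v) (maskF dom pre rest v) t .leaf
    simp only [dp, force_eq]
    rw [h1, ih, h2]
    simp only [tsum, zero_add]
    rfl

/-- `acc dom V pre rest C T`: starting from the state `C`, the choice of the vertices in `T`
is admissible at every remaining step. -/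
def acc (dom : ℕ → Bool) (V : List ℕ) : List ℕ → List ℕ → ℕ → Finset ℕ → Prop
  | _, [], _, _ => True
  | pre, v :: rest, C, T =>
    (v ∈ T → C.testBit v = false) ∧
    ((if v ∈ T then C ||| maskN V v else C) &&& maskA dom pre rest v = maskA dom pre rest v) ∧
    acc dom V (v :: pre) rest
      ((if v ∈ T then C ||| maskN V v else C) ||| maskF dom pre rest v) T

/-- Admissibility only depends on the choices at the remaining vertices. -/
theorem acc_congr (dom : ℕ → Bool) (V rest : List ℕ) : ∀ pre C (T T' : Finset ℕ),
    (∀ x ∈ rest, x ∈ T ↔ x ∈ T') → (acc dom V pre rest C T ↔ acc dom V pre rest C T') := by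
  induction rest with
  | nil => intros; rfl
  | cons v rest ih =>
    intro pre C T T' h
    have hv := h v (by simp)
    simp only [acc, hv]
    rw [ih _ _ T T' (fun x hx => h x (by simp [hx]))]

open Classical in
/-- `cnt` counts the admissible sets of choices, by splitting according to whether the first
remaining vertex is chosen. -/
theorem card_acc (dom : ℕ → Bool) (V rest : List ℕ) : ∀ pre C, rest.Nodup →
    (rest.toFinset.powerset.filter (acc dom V pre rest C)).card = cnt dom V pre rest C := by
  induction rest with
  | nil =>
    intro pre C _
    rw [Finset.filter_true_of_mem (by simp [acc])]
    simp [cnt]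
  | cons v rest ih =>
    intro pre C hn
    rw [List.nodup_cons] at hn
    have hv : v ∉ rest.toFinset := by simpa using hn.1
    rw [Finset.card_filter, List.toFinset_cons, Finset.sum_powerset_insert hv]
    have e1 : ∀ C0, ∑ T ∈ rest.toFinset.powerset,
        (if acc dom V (v :: pre) rest C0 T then 1 else 0) = cnt dom V (v :: pre) rest C0 := by
      intro C0
      rw [← Finset.card_filter]; exact ih _ _ hn.2
    simp only [cnt]
    congr 1
    · split_ifs with h
      · rw [← e1]
        refine Finset.sum_congr rfl fun T hT => ?_
        have hvT : v ∉ T := fun h => hv (Finset.mem_powerset.1 hT h)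
        simp only [acc, hvT, if_false, h, true_and, false_imp_iff]
      · refine Finset.sum_eq_zero fun T hT => ?_
        have hvT : v ∉ T := fun h => hv (Finset.mem_powerset.1 hT h)
        simp only [acc, hvT, if_false, h, false_and, and_false]
    · have hc : ∀ C0, ∀ T ∈ rest.toFinset.powerset,
          (acc dom V (v :: pre) rest C0 (insert v T) ↔ acc dom V (v :: pre) rest C0 T) := by
        intro C0 T _
        refine acc_congr _ _ _ _ _ _ _ fun x hx => ?_
        have : x ≠ v := fun h => hn.1 (h ▸ hx)
        simp [this]
      split_ifs with h h'
      · rw [← e1]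
        refine Finset.sum_congr rfl fun T hT => ?_
        have hvT : v ∈ insert v T := by simp
        simp only [acc, hvT, if_true, h, h', true_and, true_imp_iff, hc _ T hT]
      · refine Finset.sum_eq_zero fun T hT => ?_
        have hvT : v ∈ insert v T := by simp
        simp only [acc, hvT, if_true, h', false_and, and_false, if_false]
      · refine Finset.sum_eq_zero fun T hT => ?_
        have hvT : v ∈ insert v T := by simp
        simp only [acc, hvT, h, true_imp_iff, Bool.true_eq_false, false_and, if_false]

/-- `C &&& A = A` says that `A` is a subset of `C`, for sets encoded by binary digits. -/
theorem land_eq_iff (C A : ℕ) :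
    C &&& A = A ↔ ∀ j, A.testBit j = true → C.testBit j = true := by
  constructor
  · intro h j hj
    rw [← h, Nat.testBit_and, Bool.and_eq_true] at hj
    exact hj.1
  · intro h
    refine Nat.eq_of_testBit_eq fun j => ?_
    rw [Nat.testBit_and]
    have := h j
    cases h1 : A.testBit j <;> simp_all

/-- The meaning of admissibility. The loop invariant, which is the last hypothesis, is that the
digit `j` of the state `C` is set if and only if `j` is comparable to a chosen processed vertex, or
`j` is itself processed and either needs no domination or can no longer be dominated. In the last
case the domination of `j` has been checked at its last comparable vertex, whence the second
alternative in the conclusion. -/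
theorem acc_iff (dom : ℕ → Bool) (V : List ℕ) (T : Finset ℕ) (hT : ∀ x ∈ T, x ∈ V)
    (rest : List ℕ) : ∀ pre C,
    (∀ j, j ∈ V ↔ j ∈ pre ∨ j ∈ rest) → rest.Nodup → (∀ j ∈ rest, j ∉ pre) →
    (∀ j ∈ V, C.testBit j = true ↔ (∃ u ∈ pre, u ∈ T ∧ cmp u j = true) ∨
      (j ∈ pre ∧ (dom j = false ∨ ∀ u ∈ rest, ¬ cmp u j = true))) →
    (acc dom V pre rest C T ↔
      (∀ v ∈ rest, v ∈ T → ∀ u ∈ pre, u ∈ T → ¬ cmp u v = true) ∧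
      (∀ v ∈ rest, v ∈ T → ∀ u ∈ rest, u ∈ T → u ≠ v → ¬ cmp u v = true) ∧
      ∀ j ∈ V, dom j = true → (∃ u ∈ T, cmp u j = true) ∨
        (j ∈ pre ∧ ∀ u ∈ rest, ¬ cmp u j = true)) := by
  have symm : ∀ a b, cmp a b = true → cmp b a = true := fun a b h => by
    rw [cmp_iff] at h ⊢; exact h.symm
  have refl : ∀ a, cmp a a = true := fun a => by rw [cmp_iff]; simp
  induction rest with
  | nil =>
    intro pre C hV _ _ _
    simp only [acc, true_iff]
    refine ⟨by simp, by simp, fun j hj _ => Or.inr ⟨?_, by simp⟩⟩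
    simpa using (hV j).1 hj
  | cons v rest ih =>
    intro pre C hV hn hd hI
    rw [List.nodup_cons] at hn
    have hvV : v ∈ V := (hV v).2 (by simp)
    have hvpre : v ∉ pre := hd v (by simp)
    -- the state after the choice at `v` records domination by the processed part of `T`
    have hC' : ∀ j ∈ V, (if v ∈ T then C ||| maskN V v else C).testBit j = true ↔
        (∃ u ∈ v :: pre, u ∈ T ∧ cmp u j = true) ∨
        (j ∈ pre ∧ (dom j = false ∨ ∀ u ∈ v :: rest, ¬ cmp u j = true)) := by
      intro j hj
      by_cases hvT : v ∈ T
      · simp only [hvT, if_true, Nat.testBit_or, Bool.or_eq_true, testBit_maskN, hI j hj, hj,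
          true_and]
        constructor
        · rintro ((⟨u, h1, h2⟩ | h) | h)
          · exact Or.inl ⟨u, by simp [h1], h2⟩
          · exact Or.inr h
          · exact Or.inl ⟨v, by simp, hvT, h⟩
        · rintro (⟨u, h1, h2⟩ | h)
          · rcases List.mem_cons.1 h1 with rfl | h1
            · exact Or.inr h2.2
            · exact Or.inl (Or.inl ⟨u, h1, h2⟩)
          · exact Or.inl (Or.inr h)
      · simp only [hvT, if_false, hI j hj]
        constructor
        · rintro (⟨u, h1, h2⟩ | h)
          · exact Or.inl ⟨u, by simp [h1], h2⟩
          · exact Or.inr h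
        · rintro (⟨u, h1, h2⟩ | h)
          · rcases List.mem_cons.1 h1 with rfl | h1
            · exact absurd h2.1 hvT
            · exact Or.inl ⟨u, h1, h2⟩
          · exact Or.inr h
    have hC'' : ∀ j ∈ V, ((if v ∈ T then C ||| maskN V v else C) |||
        maskF dom pre rest v).testBit j = true ↔
        (∃ u ∈ v :: pre, u ∈ T ∧ cmp u j = true) ∨
        (j ∈ v :: pre ∧ (dom j = false ∨ ∀ u ∈ rest, ¬ cmp u j = true)) := by
      intro j hj
      rw [Nat.testBit_or, Bool.or_eq_true, hC' j hj, testBit_maskF, or_assoc]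
      refine or_congr Iff.rfl ?_
      simp only [List.mem_cons, forall_eq_or_imp]
      cases hdj : dom j
      · simp only [true_or, and_true, true_and, Bool.false_eq_true, false_and, or_false]
        constructor
        · rintro (h | ⟨h, -⟩)
          · exact Or.inr h
          · exact h
        · rintro (h | h)
          · exact Or.inr ⟨Or.inl h, h.symm⟩
          · exact Or.inl h
      · simp only [Bool.true_eq_false, false_or, false_and, true_and]
        constructor
        · rintro (⟨h1, h2, h3⟩ | ⟨h1, h2, h3⟩)
          · exact ⟨Or.inr h1, h3⟩
          · exact ⟨h1, h3⟩
        · rintro ⟨h1, h2⟩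
          by_cases hc : cmp v j = true
          · exact Or.inr ⟨h1, hc, h2⟩
          · rcases h1 with rfl | h1
            · exact absurd (refl _) hc
            · exact Or.inl ⟨h1, hc, h2⟩
    have ih' := ih (v :: pre) _ (fun j => by rw [hV j]; simp; tauto) hn.2
      (fun j hj hj' => by
        rcases List.mem_cons.1 hj' with rfl | h
        · exact hn.1 hj
        · exact hd j (by simp [hj]) h) hC''
    simp only [acc]
    rw [ih', land_eq_iff]
    have hsel : C.testBit v = false ↔ ∀ u ∈ pre, u ∈ T → ¬ cmp u v = true := by
      rw [← Bool.not_eq_true, hI v hvV]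
      constructor
      · intro h u h1 h2 h3
        exact h (Or.inl ⟨u, h1, h2, h3⟩)
      · rintro h (⟨u, h1, h2, h3⟩ | h')
        · exact h u h1 h2 h3
        · exact hvpre h'.1
    rw [hsel]
    constructor
    · rintro ⟨h1, h2, h3, h4, h5⟩
      refine ⟨?_, ?_, ?_⟩
      · intro w hw hwT u hu huT
        rcases List.mem_cons.1 hw with rfl | hw
        · exact h1 hwT u hu huT
        · exact h3 w hw hwT u (by simp [hu]) huT
      · intro w hw hwT u hu huT hne
        rcases List.mem_cons.1 hw with rfl | hw' <;> rcases List.mem_cons.1 hu with rfl | hu'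
        · exact absurd rfl hne
        · exact fun h => h3 u hu' huT w (by simp) hwT (symm _ _ h)
        · exact h3 w hw' hwT u (by simp) huT
        · exact h4 w hw' hwT u hu' huT hne
      · intro j hj hdj
        rcases h5 j hj hdj with h | ⟨h, h'⟩
        · exact Or.inl h
        · by_cases hc : cmp v j = true
          · have := h2 j ((testBit_maskA _ _ _ _ _).2 ⟨List.mem_cons.1 h, hdj, hc, h'⟩)
            rw [hC' j hj] at this
            rcases this with ⟨u, -, hu⟩ | ⟨hp, hq⟩
            · exact Or.inl ⟨u, hu⟩
            · rcases hq with hq | hq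
              · rw [hq] at hdj; cases hdj
              · exact absurd hc (hq v (by simp))
          · rcases List.mem_cons.1 h with rfl | h
            · exact absurd (refl _) hc
            · exact Or.inr ⟨h, fun u hu => by
                rcases List.mem_cons.1 hu with rfl | hu
                · exact hc
                · exact h' u hu⟩
    · rintro ⟨h1, h2, h3⟩
      refine ⟨fun hvT => h1 v (by simp) hvT, ?_, ?_, ?_, ?_⟩
      · intro j hj
        rw [testBit_maskA] at hj
        obtain ⟨hjp, hdj, hc, hr⟩ := hj
        have hjV : j ∈ V := by
          rw [hV]; rcases hjp with rfl | h
          · simp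
          · exact Or.inl h
        rw [hC' j hjV]
        rcases h3 j hjV hdj with ⟨u, hu, huj⟩ | ⟨-, h⟩
        · refine Or.inl ⟨u, ?_, hu, huj⟩
          rcases (hV u).1 (hT u hu) with h | h
          · simp [h]
          · rcases List.mem_cons.1 h with rfl | h
            · simp
            · exact absurd huj (hr u h)
        · exact absurd hc (h v (by simp))
      · intro w hw hwT u hu huT
        rcases List.mem_cons.1 hu with rfl | hu
        · exact h2 w (by simp [hw]) hwT u (by simp) huT (fun h => hn.1 (h ▸ hw))
        · exact h1 w (by simp [hw]) hwT u hu huT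
      · exact fun w hw hwT u hu => h2 w (by simp [hw]) hwT u (by simp [hu])
      · intro j hj hdj
        rcases h3 j hj hdj with h | ⟨h, h'⟩
        · exact Or.inl h
        · exact Or.inr ⟨by simp [h], fun u hu => h' u (by simp [hu])⟩

open Classical in
/-- The primitive subsets `T` of `V` such that every `m ∈ V` with `dom m` is comparable to an
element of `T`. For `dom` identically true these are the maximal primitive subsets of `V`. -/
noncomputable def goodSets (dom : ℕ → Prop) (V : Finset ℕ) : Finset (Finset ℕ) :=
  V.powerset.filter fun T => IsPrimitive T ∧ ∀ m ∈ V, dom m → ∃ s ∈ T, s ∣ m ∨ m ∣ s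

theorem mem_goodSets {dom : ℕ → Prop} {V T : Finset ℕ} : T ∈ goodSets dom V ↔
    T ⊆ V ∧ IsPrimitive T ∧ ∀ m ∈ V, dom m → ∃ s ∈ T, s ∣ m ∨ m ∣ s := by
  simp [goodSets]

/-- Correctness of the transfer computation. -/
theorem card_goodSets (dom : ℕ → Bool) (V : List ℕ) (hV : V.Nodup) :
    (goodSets (fun m => dom m = true) V.toFinset).card = count dom V := by
  classical
  rw [count, forceList_eq, dp_eq]
  simp only [tsum, one_mul, add_zero]
  rw [← card_acc dom V V [] 0 hV]
  congr 1
  ext T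
  rw [mem_goodSets, Finset.mem_filter, Finset.mem_powerset]
  refine and_congr_right fun hT => ?_
  have hT' : ∀ x ∈ T, x ∈ V := fun x hx => by simpa using hT hx
  rw [acc_iff dom V T hT' V [] 0 (by simp) hV (by simp) (by simp)]
  have hp : IsPrimitive T ↔ ∀ v ∈ V, v ∈ T → ∀ u ∈ V, u ∈ T → u ≠ v → ¬ cmp u v = true := by
    constructor
    · intro h v _ hv u _ hu hne hc
      rcases (cmp_iff _ _).1 hc with hc | hc
      · exact hne (h u hu v hv hc)
      · exact hne (h v hv u hu hc).symm
    · intro h a ha b hb hab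
      by_contra hne
      exact h b (hT' b hb) hb a (hT' a ha) ha hne ((cmp_iff _ _).2 (Or.inl hab))
  rw [hp]
  simp [cmp_iff]


/-! ### Maximal primitive sets inside a product of blocks -/

/-- A primitive set is maximal if and only if every element of the ground set is comparable to one
of its elements. -/
theorem count_eq_goodSets (n : ℕ) :
    maximalPrimCount n = (goodSets (fun _ => True) (Finset.Icc 1 n)).card := by
  classical
  rw [maximalPrimCount, ← Fintype.card_coe, ← Nat.card_eq_fintype_card]
  refine Nat.card_congr (Equiv.subtypeEquivRight fun S => ?_)
  rw [mem_goodSets]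
  refine and_congr_right fun hS => and_congr_right fun hp => ?_
  constructor
  · intro h m hm _
    by_contra! hc
    refine h m hm (fun hmS => (hc m hmS).1 dvd_rfl) fun a ha b hb hab => ?_
    rcases Finset.mem_insert.1 ha with ha' | ha' <;> rcases Finset.mem_insert.1 hb with hb' | hb'
    · rw [ha', hb']
    · exact absurd (ha' ▸ hab) (hc b hb').2
    · exact absurd (hb' ▸ hab) (hc a ha').1
    · exact hp a ha' b hb' hab
  · intro h k hk hkS hp'
    obtain ⟨s, hs, h' | h'⟩ := h k hk trivial
    · exact hkS (hp' s (by simp [hs]) k (by simp) h' ▸ hs)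
    · exact hkS (hp' k (by simp) s (by simp [hs]) h' ▸ hs)

/-- Every primitive subset of `Q` extends to a maximal one. -/
theorem exists_extension {Q T : Finset ℕ} (hT : T ⊆ Q) (hp : IsPrimitive T) :
    ∃ T' ∈ goodSets (fun _ => True) Q, T ⊆ T' := by
  classical
  let F := Q.powerset.filter fun S => IsPrimitive S ∧ T ⊆ S
  obtain ⟨M, hM, hmax⟩ := F.exists_max_image Finset.card
    ⟨T, by simp only [F, Finset.mem_filter, Finset.mem_powerset]; exact ⟨hT, hp, subset_rfl⟩⟩
  simp only [F, Finset.mem_filter, Finset.mem_powerset] at hM hmax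
  obtain ⟨h1, h2, h3⟩ := hM
  refine ⟨M, mem_goodSets.2 ⟨h1, h2, fun m hm _ => ?_⟩, h3⟩
  by_contra! hc
  have hmM : m ∉ M := fun h => (hc m h).1 dvd_rfl
  have := hmax (insert m M) ⟨Finset.insert_subset hm h1, ?_, h3.trans (Finset.subset_insert _ _)⟩
  · rw [Finset.card_insert_of_notMem hmM] at this; omega
  · intro a ha b hb hab
    rcases Finset.mem_insert.1 ha with ha' | ha' <;> rcases Finset.mem_insert.1 hb with hb' | hb'
    · rw [ha', hb']
    · exact absurd (ha' ▸ hab) (hc b hb').2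
    · exact absurd (hb' ▸ hab) (hc a ha').1
    · exact h2 a ha' b hb' hab

/-- A maximal primitive subset of `P` is the trace on `P` of every primitive set containing it. -/
theorem inter_eq_of_goodSets {P T T' : Finset ℕ} (hT : T ∈ goodSets (fun _ => True) P)
    (hT' : IsPrimitive T') (h : T ⊆ T') : T' ∩ P = T := by
  obtain ⟨h1, h2, h3⟩ := mem_goodSets.1 hT
  ext x
  rw [Finset.mem_inter]
  constructor
  · rintro ⟨hx, hxP⟩
    obtain ⟨s, hs, h4 | h4⟩ := h3 x hxP trivial
    · rwa [← hT' s (h hs) x hx h4]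
    · rwa [hT' x hx s (h hs) h4]
  · exact fun hx => ⟨h hx, h1 hx⟩

/-- Extension of maximal primitive subsets of `P` to maximal primitive subsets of `Q` is injective,
as the trace on `P` recovers the original set. -/
theorem card_goodSets_mono {P Q : Finset ℕ} (h : P ⊆ Q) :
    (goodSets (fun _ => True) P).card ≤ (goodSets (fun _ => True) Q).card := by
  have key : ∀ T ∈ goodSets (fun _ => True) P, ∃ T' ∈ goodSets (fun _ => True) Q, T ⊆ T' :=
    fun T hT => exists_extension ((mem_goodSets.1 hT).1.trans h) (mem_goodSets.1 hT).2.1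
  choose! f hf hf' using key
  refine Finset.card_le_card_of_injOn f hf fun T hT T' hT' he => ?_
  rw [← inter_eq_of_goodSets hT (mem_goodSets.1 (hf T hT)).2.1 (hf' T hT), he,
    inter_eq_of_goodSets hT' (mem_goodSets.1 (hf T' hT')).2.1 (hf' T' hT')]

/-- If no element of `P` is comparable to an element of `Q`, then unions of maximal primitive
subsets are maximal primitive. -/
theorem card_goodSets_union {P Q : Finset ℕ} (h : ∀ a ∈ P, ∀ b ∈ Q, ¬ a ∣ b ∧ ¬ b ∣ a) :
    (goodSets (fun _ => True) P).card * (goodSets (fun _ => True) Q).card ≤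
      (goodSets (fun _ => True) (P ∪ Q)).card := by
  rw [← Finset.card_product]
  have hprim : ∀ T1 ∈ goodSets (fun _ => True) P, ∀ T2 ∈ goodSets (fun _ => True) Q,
      IsPrimitive (T1 ∪ T2) := by
    intro T1 h1 T2 h2 a ha b hb hab
    obtain ⟨h1, h1', -⟩ := mem_goodSets.1 h1
    obtain ⟨h2, h2', -⟩ := mem_goodSets.1 h2
    rcases Finset.mem_union.1 ha with ha | ha <;> rcases Finset.mem_union.1 hb with hb | hb
    · exact h1' a ha b hb hab
    · exact absurd hab (h a (h1 ha) b (h2 hb)).1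
    · exact absurd hab (h b (h1 hb) a (h2 ha)).2
    · exact h2' a ha b hb hab
  refine Finset.card_le_card_of_injOn (fun p => p.1 ∪ p.2) ?_ ?_
  · rintro ⟨T1, T2⟩ hT
    simp only [Finset.coe_product, Set.mem_prod, Finset.mem_coe] at hT
    obtain ⟨h1, -, h1'⟩ := mem_goodSets.1 hT.1
    obtain ⟨h2, -, h2'⟩ := mem_goodSets.1 hT.2
    refine mem_goodSets.2 ⟨Finset.union_subset_union h1 h2, hprim _ hT.1 _ hT.2,
      fun m hm _ => ?_⟩
    rcases Finset.mem_union.1 hm with hm | hm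
    · obtain ⟨s, hs, h⟩ := h1' m hm trivial
      exact ⟨s, Finset.mem_union_left _ hs, h⟩
    · obtain ⟨s, hs, h⟩ := h2' m hm trivial
      exact ⟨s, Finset.mem_union_right _ hs, h⟩
  · rintro ⟨T1, T2⟩ hT ⟨T1', T2'⟩ hT' he
    simp only [Finset.coe_product, Set.mem_prod, Finset.mem_coe] at hT hT' he
    have e1 := inter_eq_of_goodSets hT.1 (hprim _ hT.1 _ hT.2) Finset.subset_union_left
    have e2 := inter_eq_of_goodSets hT.2 (hprim _ hT.1 _ hT.2) Finset.subset_union_right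
    have e3 := inter_eq_of_goodSets hT'.1 (hprim _ hT'.1 _ hT'.2) Finset.subset_union_left
    have e4 := inter_eq_of_goodSets hT'.2 (hprim _ hT'.1 _ hT'.2) Finset.subset_union_right
    rw [Prod.mk.injEq]
    exact ⟨by rw [← e1, he, e3], by rw [← e2, he, e4]⟩

/-- The number of maximal primitive subsets of `Q` is at least the product of those numbers for
mutually incomparable blocks `P d` inside `Q`. -/
theorem prod_card_goodSets_le (B : Finset ℕ) (P : ℕ → Finset ℕ) (Q : Finset ℕ)
    (hQ : ∀ d ∈ B, P d ⊆ Q)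
    (h : ∀ d ∈ B, ∀ d' ∈ B, d ≠ d' → ∀ a ∈ P d, ∀ b ∈ P d', ¬ a ∣ b) :
    ∏ d ∈ B, (goodSets (fun _ => True) (P d)).card ≤ (goodSets (fun _ => True) Q).card := by
  classical
  refine le_trans ?_ (card_goodSets_mono (Finset.biUnion_subset.2 hQ))
  clear hQ
  induction B using Finset.induction_on with
  | empty =>
    obtain ⟨T, hT, -⟩ := exists_extension (Q := ∅) (T := ∅) subset_rfl (by simp [IsPrimitive])
    simpa using ⟨T, hT⟩
  | insert d B hd ih =>
    rw [Finset.prod_insert hd, Finset.biUnion_insert]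
    refine le_trans (Nat.mul_le_mul_left _ (ih fun d hd d' hd' => h d (by simp [hd]) d'
      (by simp [hd']))) (card_goodSets_union fun a ha b hb => ?_)
    obtain ⟨d', hd', hb⟩ := Finset.mem_biUnion.1 hb
    have hne : d ≠ d' := fun h => hd (h ▸ hd')
    exact ⟨h d (by simp) d' (by simp [hd']) hne a ha b hb,
      h d' (by simp [hd']) d (by simp) hne.symm b hb a ha⟩

theorem card_goodSets_image (d : ℕ) (hd : 0 < d) (V : Finset ℕ) :
    (goodSets (fun _ => True) V).card ≤
      (goodSets (fun _ => True) (V.image (d * ·))).card := by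
  have hinj : Function.Injective (d * ·) := fun a b h => Nat.eq_of_mul_eq_mul_left hd h
  refine Finset.card_le_card_of_injOn (fun T => T.image (d * ·)) ?_
    (fun T _ T' _ h => Finset.image_injective hinj h)
  intro T hT
  obtain ⟨h1, h2, h3⟩ := mem_goodSets.1 hT
  refine mem_goodSets.2 ⟨Finset.image_subset_image h1, ?_, ?_⟩
  · intro a ha b hb hab
    obtain ⟨a, ha', rfl⟩ := Finset.mem_image.1 ha
    obtain ⟨b, hb', rfl⟩ := Finset.mem_image.1 hb
    rw [h2 a ha' b hb' (Nat.dvd_of_mul_dvd_mul_left hd hab)]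
  · intro m hm _
    obtain ⟨m, hm', rfl⟩ := Finset.mem_image.1 hm
    obtain ⟨s, hs, h⟩ := h3 m hm' trivial
    exact ⟨d * s, Finset.mem_image_of_mem _ hs,
      h.imp (Nat.mul_dvd_mul_left d) (Nat.mul_dvd_mul_left d)⟩

/-- The maximal primitive sets among the `m ∈ L` with `t / q < m ≤ t`, counted. -/
noncomputable def cntLow (L : List ℕ) (q t : ℕ) : ℕ :=
  count (fun _ => true) (L.filter fun m => Nat.ble m t && Nat.ble (t + 1) (Nat.mul q m))

/-- If the quotient of two numbers prime to `15` is a quotient of `5`-smooth numbers `M` and `N`,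
then it is a power of two, possibly with negative exponent. So the two numbers coincide if neither
of them is divisible by twice the other one. -/
theorem eq_of_dvd_mul {d d' M N : ℕ} (hd : d.Coprime 15) (hd' : d'.Coprime 15)
    (hpos : 0 < d) (hpos' : 0 < d')
    (hM : M ∣ 30 ^ 20) (hN : N ∣ 30 ^ 20) (h : d' * M = d * N)
    (h1 : ¬ 2 * d ∣ d') (h2 : ¬ 2 * d' ∣ d) : d = d' := by
  have key : ∀ a b A B : ℕ, a.Coprime 15 → A ∣ 30 ^ 20 → a * B = b * A → a ∣ b * 2 ^ 20 := by
    intro a b A B ha hA he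
    have : a ∣ b * 2 ^ 20 * 15 ^ 20 := by
      rw [mul_assoc, ← mul_pow]
      exact (Dvd.intro _ he).trans (Nat.mul_dvd_mul_left b hA)
    exact (Nat.Coprime.pow_right 20 ha).dvd_of_dvd_mul_right this
  have k1 := key d d' M N hd hM h.symm
  have k2 := key d' d N M hd' hN h
  obtain ⟨i, r, hr, rfl⟩ := Nat.exists_eq_two_pow_mul_odd hpos.ne'
  obtain ⟨j, r', hr', rfl⟩ := Nat.exists_eq_two_pow_mul_odd hpos'.ne'
  have hodd : ∀ x y k : ℕ, Odd x → x ∣ 2 ^ k * y * 2 ^ 20 → x ∣ y := by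
    intro x y k hx hxy
    have hc : ∀ e, x.Coprime (2 ^ e) := fun e =>
      Nat.Coprime.pow_right e (Nat.coprime_two_right.2 hx)
    exact (hc k).dvd_of_dvd_mul_left ((hc 20).dvd_of_dvd_mul_right hxy)
  have e : r = r' := Nat.dvd_antisymm (hodd r r' j hr (Dvd.dvd.trans (Dvd.intro_left _ rfl) k1))
    (hodd r' r i hr' (Dvd.dvd.trans (Dvd.intro_left _ rfl) k2))
  subst e
  rcases lt_trichotomy i j with hij | hij | hij
  · refine absurd ?_ h1
    rw [← mul_assoc, ← pow_succ']
    exact Nat.mul_dvd_mul_right (Nat.pow_dvd_pow 2 hij) r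
  · rw [hij]
  · refine absurd ?_ h2
    rw [← mul_assoc, ← pow_succ']
    exact Nat.mul_dvd_mul_right (Nat.pow_dvd_pow 2 hij) r

/-- The lower bound as a product over blocks `d * W`, where `W` consists of the elements of `L`
in `(n / 7d, n / d]`. A base `d` may be even only if `Y ≤ n / d < 2 Y`; this prevents
comparabilities between blocks. -/
theorem prod_cntLow_le (L : List ℕ) (hL : ∀ m ∈ L, m ∣ 30 ^ 18) (hn : L.Nodup) (n Y : ℕ)
    (B : Finset ℕ) (hB : ∀ d ∈ B, 0 < d ∧ d.Coprime 15 ∧ n / d < 2 * Y ∧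
      (2 ∣ d → Y ≤ n / d)) :
    ∏ d ∈ B, cntLow L 7 (n / d) ≤ maximalPrimCount n := by
  classical
  rw [count_eq_goodSets]
  let W : ℕ → List ℕ := fun t =>
    L.filter fun m => Nat.ble m t && Nat.ble (t + 1) (Nat.mul 7 m)
  have hW : ∀ t m, m ∈ W t ↔ m ∈ L ∧ m ≤ t ∧ t < 7 * m := by
    intro t m
    simp only [W, List.mem_filter, Bool.and_eq_true, Nat.ble_eq, Nat.mul_eq, Nat.succ_le_iff]
  have hpos : ∀ m ∈ L, 0 < m := fun m hm =>
    Nat.pos_of_ne_zero fun h => by have := hL m hm; rw [h] at this; norm_num at this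
  refine le_trans (Finset.prod_le_prod (fun _ _ => Nat.zero_le _)
    (g := fun d => (goodSets (fun _ => True) ((W (n / d)).toFinset.image (d * ·))).card)
    fun d hd => ?_) (prod_card_goodSets_le B _ _ (fun d hd => ?_)
    fun d hd d' hd' hne a ha b hb hab => ?_)
  · refine le_trans (le_of_eq ?_) (card_goodSets_image d (hB d hd).1 _)
    rw [cntLow, ← card_goodSets _ _ (hn.filter _)]
    simp only [W]
  · intro x hx
    obtain ⟨m, hm, rfl⟩ := Finset.mem_image.1 hx
    rw [List.mem_toFinset, hW] at hm
    rw [Finset.mem_Icc]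
    exact ⟨Nat.mul_pos (hB d hd).1 (hpos m hm.1),
      (Nat.mul_le_mul_left d hm.2.1).trans (Nat.mul_div_le n d)⟩
  · obtain ⟨m, hm, rfl⟩ := Finset.mem_image.1 ha
    obtain ⟨m', hm', rfl⟩ := Finset.mem_image.1 hb
    rw [List.mem_toFinset, hW] at hm hm'
    obtain ⟨k, hk⟩ := hab
    obtain ⟨hd0, hd1, hd2, hd3⟩ := hB d hd
    obtain ⟨hd0', hd1', hd2', hd3'⟩ := hB d' hd'
    have l1 : n < d * m * 7 := by
      have := (Nat.div_lt_iff_lt_mul hd0).1 hm.2.2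
      linarith
    have l2 : d' * m' ≤ n := (Nat.mul_le_mul_left d' hm'.2.1).trans (Nat.mul_div_le n d')
    have hk7 : k < 7 := by
      have : d * m * k < d * m * 7 := by omega
      exact lt_of_mul_lt_mul_left this (Nat.zero_le _)
    have hk0 : 0 < k := by
      rcases Nat.eq_zero_or_pos k with h | h
      · rw [h, mul_zero] at hk
        exact absurd hk (Nat.mul_pos hd0' (hpos m' hm'.1)).ne'
      · exact h
    have hk2 : k ∣ 30 ^ 2 := by interval_cases k <;> norm_num
    -- an even quotient of the bases is impossible by the size condition for even bases
    have heven : ∀ x y : ℕ, 0 < x → 0 < y → n / x < 2 * Y → (2 ∣ y → Y ≤ n / y) → ¬ 2 * x ∣ y := by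
      intro x y hx hy h1 h2 h3
      have h4 := h2 ((Dvd.intro _ rfl).trans h3)
      rw [Nat.le_div_iff_mul_le hy] at h4
      rw [Nat.div_lt_iff_lt_mul hx] at h1
      have := Nat.mul_le_mul_left Y (Nat.le_of_dvd hy h3)
      linarith
    refine hne (eq_of_dvd_mul hd1 hd1' hd0 hd0' (M := m') (N := m * k)
      ((hL m' hm'.1).trans (pow_dvd_pow 30 (by norm_num))) ?_ (by rw [hk, mul_assoc])
      (heven d d' hd0 hd0' hd2 hd3') (heven d' d hd0' hd0 hd2' hd3))
    have := Nat.mul_dvd_mul (hL m hm.1) hk2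
    rwa [← pow_add] at this

/-! ### Encoding maximal primitive sets by local data -/

/-- Every maximal primitive set is determined by the minimal elements, inside each piece `d * V`,
of the set of its multiples; for elements `m ∈ V` with `dom m`, all of whose multiples up to `n`
lie in the piece, maximality forces `m` to be comparable to one of these minimal elements. -/
theorem count_le_prod {ι : Type} (I : Finset ι) (d : ι → ℕ) (V : ι → Finset ℕ)
    (dom : ι → ℕ → Prop) (n : ℕ) (h0 : ∀ i ∈ I, 0 < d i)
    (h1 : ∀ i ∈ I, ∀ m ∈ V i, 0 < m ∧ d i * m ≤ n)
    (h2 : ∀ i ∈ I, ∀ m ∈ V i, dom i m → ∀ r, 0 < r → d i * (r * m) ≤ n → r * m ∈ V i)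
    (h3 : ∀ k, 0 < k → k ≤ n → ∃ i ∈ I, ∃ m ∈ V i, k = d i * m) :
    maximalPrimCount n ≤ ∏ i ∈ I, (goodSets (dom i) (V i)).card := by
  classical
  rw [count_eq_goodSets, ← Finset.card_pi]
  -- the local minimal elements of the set of multiples of `S`
  let up : Finset ℕ → ℕ → Prop := fun S k => ∃ s ∈ S, s ∣ k
  let loc : Finset ℕ → ι → Finset ℕ := fun S i =>
    (V i).filter fun m => up S (d i * m) ∧ ∀ m' ∈ V i, up S (d i * m') → m' ∣ m → m' = m
  have hmin : ∀ S, ∀ i ∈ I, ∀ m ∈ V i, up S (d i * m) → ∃ t ∈ loc S i, t ∣ m := by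
    intro S i hi m
    induction m using Nat.strong_induction_on with
    | _ m ih =>
      intro hm hu
      by_cases h : ∀ m' ∈ V i, up S (d i * m') → m' ∣ m → m' = m
      · exact ⟨m, Finset.mem_filter.2 ⟨hm, hu, h⟩, dvd_rfl⟩
      · push Not at h
        obtain ⟨m', hm', hu', hdvd, hne⟩ := h
        obtain ⟨t, ht, htm⟩ := ih m'
          (lt_of_le_of_ne (Nat.le_of_dvd (h1 i hi m hm).1 hdvd) hne) hm' hu'
        exact ⟨t, ht, htm.trans hdvd⟩
  refine Finset.card_le_card_of_injOn (fun S i _ => loc S i) ?_ ?_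
  · intro S hS
    obtain ⟨hS1, hS2, hS3⟩ := mem_goodSets.1 hS
    rw [Finset.mem_coe, Finset.mem_pi]
    intro i hi
    refine mem_goodSets.2 ⟨Finset.filter_subset _ _, ?_, ?_⟩
    · intro a ha b hb hab
      rw [Finset.mem_filter] at ha hb
      exact hb.2.2 a ha.1 ha.2.1 hab
    · intro m hm hdom
      obtain ⟨hm0, hmn⟩ := h1 i hi m hm
      obtain ⟨s, hs, hsm | hsm⟩ := hS3 (d i * m)
        (Finset.mem_Icc.2 ⟨Nat.mul_pos (h0 i hi) hm0, hmn⟩) trivial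
      · obtain ⟨t, ht, htm⟩ := hmin S i hi m hm ⟨s, hs, hsm⟩
        exact ⟨t, ht, Or.inl htm⟩
      · obtain ⟨r, hr⟩ := hsm
        have hsI := Finset.mem_Icc.1 (hS1 hs)
        have hr0 : 0 < r := Nat.pos_of_ne_zero fun h => by rw [h, mul_zero] at hr; omega
        have hr' : s = d i * (r * m) := by rw [hr]; ring
        have hrV := h2 i hi m hm hdom r hr0 (hr' ▸ hsI.2)
        refine ⟨r * m, Finset.mem_filter.2 ⟨hrV, ⟨s, hs, by rw [hr']⟩, ?_⟩,
          Or.inr (Dvd.intro_left _ rfl)⟩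
        rintro m' hm' ⟨s', hs', hd'⟩ hdvd
        have hd2 : d i * m' ∣ s := by rw [hr']; exact Nat.mul_dvd_mul_left _ hdvd
        have := hS2 s' hs' s hs (hd'.trans hd2)
        subst this
        have := Nat.dvd_antisymm hd' hd2
        rw [hr'] at this
        exact (Nat.eq_of_mul_eq_mul_left (h0 i hi) this).symm
  · intro S hS S' hS' he
    obtain ⟨hS1, hS2, -⟩ := mem_goodSets.1 hS
    obtain ⟨hS1', hS2', -⟩ := mem_goodSets.1 hS'
    have hup : ∀ A B : Finset ℕ, (∀ i ∈ I, loc A i = loc B i) → ∀ k, 0 < k → k ≤ n →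
        up A k → up B k := by
      intro A B hAB k hk hkn hu
      obtain ⟨i, hi, m, hm, rfl⟩ := h3 k hk hkn
      obtain ⟨t, ht, htm⟩ := hmin A i hi m hm hu
      rw [hAB i hi, Finset.mem_filter] at ht
      obtain ⟨-, ⟨s, hs, hst⟩, -⟩ := ht
      exact ⟨s, hs, hst.trans (Nat.mul_dvd_mul_left _ htm)⟩
    have he' : ∀ i ∈ I, loc S i = loc S' i := fun i hi => congrFun (congrFun he i) hi
    have hsub : ∀ A B : Finset ℕ, A ⊆ Finset.Icc 1 n → B ⊆ Finset.Icc 1 n → IsPrimitive A →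
        (∀ k, 0 < k → k ≤ n → up A k → up B k) →
        (∀ k, 0 < k → k ≤ n → up B k → up A k) → A ⊆ B := by
      intro A B hA hB hp hAB hBA a ha
      have haI := Finset.mem_Icc.1 (hA ha)
      obtain ⟨b, hb, hba⟩ := hAB a haI.1 haI.2 ⟨a, ha, dvd_rfl⟩
      have hbI := Finset.mem_Icc.1 (hB hb)
      obtain ⟨c, hc, hcb⟩ := hBA b hbI.1 hbI.2 ⟨b, hb, dvd_rfl⟩
      have := hp c hc a ha (hcb.trans hba)
      subst this
      rwa [Nat.dvd_antisymm hcb hba]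
    exact Finset.Subset.antisymm
      (hsub S S' hS1 hS1' hS2 (hup S S' he') (hup S' S fun i hi => (he' i hi).symm))
      (hsub S' S hS1' hS1 hS2' (hup S' S fun i hi => (he' i hi).symm) (hup S S' he'))


/-- The number of primitive subsets of `V = {m ∈ L | m ≤ t}` which dominate all `m ∈ V` with
`t < q * m`. -/
noncomputable def cntUp (L : List ℕ) (q t : ℕ) : ℕ :=
  count (fun m => Nat.ble (t + 1) (Nat.mul q m)) (L.filter fun m => Nat.ble m t)

/-- The bases `d ≤ n` prime to `g` with `u ≤ n / d < w`. -/
def base (n g u w : ℕ) : Finset ℕ :=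
  (Finset.Icc 1 n).filter fun d => d.Coprime g ∧ u ≤ n / d ∧ n / d < w

/-- A family of pieces `d * {m ∈ L | m ≤ n / d}`, where `d` ranges over `base n g u w` and the
elements `m` with `n / d < q * m` are subject to domination. -/
structure Family where
  (g u w q : ℕ)
  (L : List ℕ)

/-- `L` consists of distinct positive integers, and is closed under those multiplications by
factors less than `q` whose result is less than `w`. -/
def Closed (L : List ℕ) (q w : ℕ) : Prop :=
  L.Nodup ∧ ∀ m ∈ L, 0 < m ∧ ∀ r, 0 < r → r < q → r * m < w → r * m ∈ L

/-- The bound `count_le_prod` for finitely many families of pieces which together cover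
`{1, …, n}`. Closedness of the lists ensures that the multiples of `d * m` with `n / d < q * m` lie
in the piece. -/
theorem count_le_prod_families (n : ℕ) {τ : Type} [Fintype τ] (T : τ → Family)
    (hT : ∀ j, Closed (T j).L (T j).q (T j).w)
    (hc : ∀ k, 0 < k → k ≤ n → ∃ j, ∃ d ∈ base n (T j).g (T j).u (T j).w,
      ∃ m ∈ (T j).L, k = d * m) :
    maximalPrimCount n ≤
      ∏ j, ∏ d ∈ base n (T j).g (T j).u (T j).w, cntUp (T j).L (T j).q (n / d) := by
  classical
  have hV : ∀ (L : List ℕ) t m, m ∈ (L.filter fun m => Nat.ble m t).toFinset ↔ m ∈ L ∧ m ≤ t := by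
    intro L t m
    simp only [List.mem_toFinset, List.mem_filter, Nat.ble_eq]
  have key := count_le_prod
    ((Finset.univ : Finset τ).sigma fun j => base n (T j).g (T j).u (T j).w) (fun i => i.2)
    (fun i => ((T i.1).L.filter fun m => Nat.ble m (n / i.2)).toFinset)
    (fun i m => Nat.ble (n / i.2 + 1) (Nat.mul (T i.1).q m) = true) n ?_ ?_ ?_ ?_
  · refine key.trans (le_of_eq ?_)
    rw [Finset.prod_sigma]
    refine Finset.prod_congr rfl fun j _ => Finset.prod_congr rfl fun d _ => ?_
    exact card_goodSets _ _ ((hT j).1.filter _)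
  · rintro ⟨j, d⟩ hi
    simp only [Finset.mem_sigma, base, Finset.mem_filter, Finset.mem_Icc] at hi
    exact hi.2.1.1
  · rintro ⟨j, d⟩ hi m hm
    rw [hV] at hm
    exact ⟨((hT j).2 m hm.1).1, (Nat.mul_le_mul_left d hm.2).trans (Nat.mul_div_le n d)⟩
  · rintro ⟨j, d⟩ hi m hm hdom r hr hrn
    simp only [Finset.mem_sigma, base, Finset.mem_filter, Finset.mem_Icc] at hi
    rw [hV] at hm ⊢
    have hdom' : n / d + 1 ≤ (T j).q * m := by simpa [Nat.ble_eq] using hdom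
    have hle : r * m ≤ n / d := (Nat.le_div_iff_mul_le hi.2.1.1).2 (by linarith)
    have hrq : r < (T j).q := by
      have : r * m < (T j).q * m := by omega
      exact lt_of_mul_lt_mul_right this (Nat.zero_le _)
    exact ⟨((hT j).2 m hm.1).2 r hr hrq (lt_of_le_of_lt hle hi.2.2.2.2), hle⟩
  · intro k hk hkn
    obtain ⟨j, d, hd, m, hm, rfl⟩ := hc k hk hkn
    refine ⟨⟨j, d⟩, by simpa using hd, m, ?_, rfl⟩
    rw [hV]
    simp only [base, Finset.mem_filter, Finset.mem_Icc] at hd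
    exact ⟨hm, (Nat.le_div_iff_mul_le hd.1.1).2 (by linarith)⟩

/-- Divide `k` by `p` as long as possible while `n / k` is less than `y`. For the result `d`, either
`d` is prime to `p`, or `y ≤ n / d < p * y`; this defines the base of the piece containing `k`. -/
theorem exists_tower (n p y : ℕ) (hp : 1 < p) (k : ℕ) (hk : 0 < k) (hy : n / k < p * y) :
    ∃ e d, k = d * p ^ e ∧ 0 < d ∧ n / d < p * y ∧ (¬ p ∣ d ∨ y ≤ n / d) := by
  induction k using Nat.strong_induction_on with
  | _ k ih =>
    by_cases h : ¬ p ∣ k ∨ y ≤ n / k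
    · exact ⟨0, k, by simp, hk, hy, h⟩
    · push Not at h
      obtain ⟨⟨k', rfl⟩, h2⟩ := h
      have hk' : 0 < k' := Nat.pos_of_mul_pos_left hk
      obtain ⟨e, d, he, h3⟩ := ih k' (by nlinarith) hk' (by
        rw [Nat.div_lt_iff_lt_mul hk] at h2
        rw [Nat.div_lt_iff_lt_mul hk']
        linarith)
      exact ⟨e + 1, d, by rw [he]; ring, h3⟩

/-- The upper bound as a product over seven families of pieces. The base of the piece containing
`k` arises by removing factors `2` with bound `c`, then, if `n / d < 3 * b`, factors `3` with bound
`b`, and then, if `n / d < 5 * a`, factors `5` with bound `a`. Each of these steps ends either with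
`d` prime to `p` or with `n / d` above its bound, whence two families per prime; the last family
consists of single elements. -/
theorem count_le_prod_seven (n a b c : ℕ) (L5 L3 L2 : List ℕ) (ha : 1 ≤ a) (hab : 5 * a ≤ b)
    (hbc : 3 * b ≤ c) (hc : 2 * c ≤ 2 ^ 13)
    (h5 : Closed L5 7 (5 * a)) (h5' : ∀ m < 5 * a, m ∣ 30 ^ 12 → m ∈ L5)
    (h3 : Closed L3 5 (3 * b)) (h3' : ∀ m < 3 * b, m ∣ 6 ^ 12 → m ∈ L3)
    (h2 : Closed L2 3 (2 * c)) (h2' : ∀ m < 2 * c, m ∣ 2 ^ 12 → m ∈ L2) :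
    maximalPrimCount n ≤
      (∏ d ∈ base n 30 1 a, cntUp L5 7 (n / d)) * (∏ d ∈ base n 6 a (5 * a), cntUp L5 7 (n / d)) *
      (∏ d ∈ base n 6 (5 * a) b, cntUp L3 5 (n / d)) *
      (∏ d ∈ base n 2 b (3 * b), cntUp L3 5 (n / d)) *
      (∏ d ∈ base n 2 (3 * b) c, cntUp L2 3 (n / d)) *
      (∏ d ∈ base n 1 c (2 * c), cntUp L2 3 (n / d)) *
      (∏ d ∈ base n 1 (2 * c) (n + 1), cntUp [1] 0 (n / d)) := by
  have key := count_le_prod_families n (τ := Fin 7) ![⟨30, 1, a, 7, L5⟩, ⟨6, a, 5 * a, 7, L5⟩,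
    ⟨6, 5 * a, b, 5, L3⟩, ⟨2, b, 3 * b, 5, L3⟩, ⟨2, 3 * b, c, 3, L2⟩, ⟨1, c, 2 * c, 3, L2⟩,
    ⟨1, 2 * c, n + 1, 0, [1]⟩] ?_ ?_
  · rw [Fin.prod_univ_seven] at key
    exact key
  · have mono : ∀ L q w w', w' ≤ w → Closed L q w → Closed L q w' := fun L q w w' h hL =>
      ⟨hL.1, fun m hm => ⟨(hL.2 m hm).1, fun r h1 h2 h3 => (hL.2 m hm).2 r h1 h2 (by omega)⟩⟩
    intro j
    fin_cases j
    · exact mono _ _ _ a (by omega) h5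
    · exact h5
    · exact mono _ _ _ b (by omega) h3
    · exact h3
    · exact mono _ _ _ c (by omega) h2
    · exact h2
    · exact ⟨by simp, fun m hm => ⟨by simp at hm; omega, fun r _ h => absurd h (Nat.not_lt_zero r)⟩⟩
  · intro k hk hkn
    have hbase : ∀ d g u w, 0 < d → d ∣ k → d.Coprime g → u ≤ n / d → n / d < w →
        d ∈ base n g u w := by
      intro d g u w h1 h2 h3 h4 h5
      simp only [base, Finset.mem_filter, Finset.mem_Icc]
      exact ⟨⟨h1, (Nat.le_of_dvd hk h2).trans hkn⟩, h3, h4, h5⟩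
    have hsmall : ∀ d m, 0 < d → k = d * m → m ≤ n / d := by
      intro d m hd h
      rw [Nat.le_div_iff_mul_le hd]
      linarith
    have hone : ∀ d, 0 < d → d ∣ k → 1 ≤ n / d := by
      intro d hd h
      rw [Nat.le_div_iff_mul_le hd]
      linarith [(Nat.le_of_dvd hk h).trans hkn]
    rcases Nat.lt_or_ge (n / k) (2 * c) with h | h
    swap
    · exact ⟨6, k, hbase k 1 _ _ hk dvd_rfl (Nat.coprime_one_right k) h
        (Nat.lt_succ_of_le (Nat.div_le_self n k)), 1, by simp, by simp⟩
    obtain ⟨e, d, hkd, hd, hdw, hdu⟩ := exists_tower n 2 c (by norm_num) k hk h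
    have he : e ≤ 12 := by
      have h1 : 2 ^ e < 2 ^ 13 := lt_of_lt_of_le (lt_of_le_of_lt (hsmall d _ hd hkd) hdw) hc
      have := (Nat.pow_lt_pow_iff_right (by norm_num : 1 < 2)).1 h1
      omega
    have hdk : d ∣ k := Dvd.intro _ hkd.symm
    have hm2 : 2 ^ e ∈ L2 :=
      h2' _ (lt_of_le_of_lt (hsmall d _ hd hkd) hdw) (pow_dvd_pow 2 he)
    rcases Nat.lt_or_ge (n / d) (3 * b) with h | h
    swap
    · rcases Nat.lt_or_ge (n / d) c with h' | h'
      · have : ¬ 2 ∣ d := by omega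
        exact ⟨4, d, hbase d 2 _ _ hd hdk
          ((Nat.Prime.coprime_iff_not_dvd Nat.prime_two).2 this).symm h h', _, hm2, hkd⟩
      · exact ⟨5, d, hbase d 1 _ _ hd hdk (Nat.coprime_one_right d) h' hdw, _, hm2, hkd⟩
    have hd2 : ¬ 2 ∣ d := by omega
    obtain ⟨f, d', hdd, hd', hdw', hdu'⟩ := exists_tower n 3 b (by norm_num) d hd h
    have hkd' : k = d' * (2 ^ e * 3 ^ f) := by rw [hkd, hdd]; ring
    have hdk' : d' ∣ k := Dvd.intro _ hkd'.symm
    have hf : f ≤ 12 := by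
      have h0 : 3 ^ f ≤ 2 ^ e * 3 ^ f := Nat.le_mul_of_pos_left _ (by positivity)
      have h1 : 2 ^ f ≤ 3 ^ f := Nat.pow_le_pow_left (by norm_num) f
      have h2 : 2 ^ f < 2 ^ 13 := by
        have := hsmall d' _ hd' hkd'
        omega
      have := (Nat.pow_lt_pow_iff_right (by norm_num : 1 < 2)).1 h2
      omega
    have hm3 : 2 ^ e * 3 ^ f ∈ L3 := by
      refine h3' _ (lt_of_le_of_lt (hsmall d' _ hd' hkd') hdw') ?_
      rw [show (6 : ℕ) ^ 12 = 2 ^ 12 * 3 ^ 12 by norm_num]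
      exact Nat.mul_dvd_mul (pow_dvd_pow 2 he) (pow_dvd_pow 3 hf)
    have hd2' : d'.Coprime 2 := ((Nat.Prime.coprime_iff_not_dvd Nat.prime_two).2
      fun h => hd2 (h.trans (Dvd.intro _ hdd.symm))).symm
    have hd6 : ¬ 3 ∣ d' → d'.Coprime 6 := fun h => Nat.Coprime.mul_right hd2'
      ((Nat.Prime.coprime_iff_not_dvd Nat.prime_three).2 h).symm
    rcases Nat.lt_or_ge (n / d') (5 * a) with h | h
    swap
    · rcases Nat.lt_or_ge (n / d') b with h' | h'
      · exact ⟨2, d', hbase d' 6 _ _ hd' hdk' (hd6 (by omega)) h h', _, hm3, hkd'⟩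
      · exact ⟨3, d', hbase d' 2 _ _ hd' hdk' hd2' h' hdw', _, hm3, hkd'⟩
    have hd3' : ¬ 3 ∣ d' := by omega
    obtain ⟨g, d'', hdd', hd'', hdw'', hdu''⟩ := exists_tower n 5 a (by norm_num) d' hd' h
    have hkd'' : k = d'' * (2 ^ e * 3 ^ f * 5 ^ g) := by rw [hkd', hdd']; ring
    have hdk'' : d'' ∣ k := Dvd.intro _ hkd''.symm
    have hg : g ≤ 12 := by
      have h0 : 5 ^ g ≤ 2 ^ e * 3 ^ f * 5 ^ g := Nat.le_mul_of_pos_left _ (by positivity)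
      have h1 : 2 ^ g ≤ 5 ^ g := Nat.pow_le_pow_left (by norm_num) g
      have h2 : 2 ^ g < 2 ^ 13 := by
        have := hsmall d'' _ hd'' hkd''
        omega
      have := (Nat.pow_lt_pow_iff_right (by norm_num : 1 < 2)).1 h2
      omega
    have hm5 : 2 ^ e * 3 ^ f * 5 ^ g ∈ L5 := by
      refine h5' _ (lt_of_le_of_lt (hsmall d'' _ hd'' hkd'') hdw'') ?_
      rw [show (30 : ℕ) ^ 12 = 2 ^ 12 * 3 ^ 12 * 5 ^ 12 by norm_num]
      exact Nat.mul_dvd_mul (Nat.mul_dvd_mul (pow_dvd_pow 2 he) (pow_dvd_pow 3 hf))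
        (pow_dvd_pow 5 hg)
    have hd6'' : d''.Coprime 6 := Nat.Coprime.coprime_dvd_left (Dvd.intro _ hdd'.symm) (hd6 hd3')
    rcases Nat.lt_or_ge (n / d'') a with h' | h'
    · have : d''.Coprime 30 := Nat.Coprime.mul_right (n := 5) hd6''
        ((Nat.Prime.coprime_iff_not_dvd Nat.prime_five).2 (by omega)).symm
      exact ⟨0, d'', hbase d'' 30 _ _ hd'' hdk'' this (hone d'' hd'' hdk'') h', _, hm5, hkd''⟩
    · exact ⟨1, d'', hbase d'' 6 _ _ hd'' hdk'' hd6'' h' hdw'', _, hm5, hkd''⟩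


/-! ### Summation over the bases -/

/-- The number of residue classes modulo `30` prime to `g`. -/
def res (g : ℕ) : ℕ := Nat.count (fun d => d.Coprime g) 30

theorem coprime_add_thirty {g : ℕ} (hg : g ∣ 30) (d : ℕ) :
    (30 + d).Coprime g ↔ d.Coprime g := by
  obtain ⟨k, hk⟩ := hg
  rw [hk, Nat.coprime_mul_left_add_left]

/-- The numbers less than `N` and prime to `g` have density `res g / 30`, with bounded error. -/
theorem count_coprime_bound {g : ℕ} (hg : g ∣ 30) (N : ℕ) :
    |(30 * (Nat.count (fun d => d.Coprime g) N : ℕ) : ℝ) - res g * N| ≤ 900 := by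
  induction N using Nat.strong_induction_on with
  | _ N ih =>
    have hr : res g ≤ 30 := Nat.count_le _
    rcases Nat.lt_or_ge N 30 with h | h
    · have h1 : Nat.count (fun d => d.Coprime g) N ≤ N := Nat.count_le _
      have h2 : (30 * (Nat.count (fun d => d.Coprime g) N : ℕ) : ℝ) ≤ 900 := by
        norm_cast; omega
      have h3 : (res g * N : ℝ) ≤ 900 := by
        norm_cast; nlinarith
      have h4 : (0 : ℝ) ≤ res g * N := by positivity
      have h5 : (0 : ℝ) ≤ 30 * (Nat.count (fun d => d.Coprime g) N : ℕ) := by positivity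
      rw [abs_le]; constructor <;> linarith
    · obtain ⟨M, rfl⟩ := Nat.exists_eq_add_of_le h
      have h1 : Nat.count (fun d => d.Coprime g) (30 + M) =
          res g + Nat.count (fun d => d.Coprime g) M := by
        rw [Nat.count_add]
        simp only [coprime_add_thirty hg]
        rfl
      have := ih M (by omega)
      rw [h1]
      push_cast
      convert this using 2
      ring

theorem card_base {n g u w : ℕ} (hu : 0 < u) (huw : u ≤ w) :
    ((base n g u w).card : ℝ) = Nat.count (fun d => d.Coprime g) (n / u + 1) -
      Nat.count (fun d => d.Coprime g) (n / w + 1) := by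
  have hle : n / w ≤ n / u := Nat.div_le_div_left huw hu
  have h : base n g u w = (Finset.range (n / u + 1)).filter (fun d => d.Coprime g) \
      (Finset.range (n / w + 1)).filter (fun d => d.Coprime g) := by
    ext d
    simp only [base, Finset.mem_filter, Finset.mem_Icc, Finset.mem_sdiff, Finset.mem_range,
      Nat.lt_succ_iff]
    constructor
    · rintro ⟨⟨h1, h2⟩, h3, h4, h5⟩
      rw [Nat.le_div_iff_mul_le h1] at h4
      rw [Nat.div_lt_iff_lt_mul h1] at h5
      refine ⟨⟨(Nat.le_div_iff_mul_le hu).2 (by linarith), h3⟩, fun h => ?_⟩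
      have := (Nat.le_div_iff_mul_le (by omega)).1 h.1
      linarith
    · rintro ⟨⟨h1, h2⟩, h3⟩
      have h4 : n / w < d := by
        by_contra h
        exact h3 ⟨not_lt.1 h, h2⟩
      have hd : 0 < d := lt_of_le_of_lt (Nat.zero_le _) h4
      rw [Nat.le_div_iff_mul_le hu] at h1
      rw [Nat.div_lt_iff_lt_mul (by omega)] at h4
      refine ⟨⟨hd, by nlinarith⟩, h2, (Nat.le_div_iff_mul_le hd).2 (by linarith),
        (Nat.div_lt_iff_lt_mul hd).2 (by linarith)⟩
  rw [h, Finset.card_sdiff_of_subset, ← Nat.count_eq_card_filter_range,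
    ← Nat.count_eq_card_filter_range, Nat.cast_sub]
  · exact Nat.count_monotone _ (by omega)
  · exact Finset.filter_subset_filter _ (Finset.range_mono (by omega))

/-- The bases with `u ≤ n / d < w` are the `d` prime to `g` in the interval `(n / w, n / u]`. -/
theorem card_base_bound {g : ℕ} (hg : g ∣ 30) (n u w : ℕ) (hu : 0 < u) (huw : u ≤ w) :
    |((base n g u w).card : ℝ) - n * (res g / 30) * (1 / u - 1 / w)| ≤ 100 := by
  have hr : (res g : ℝ) ≤ 30 := by exact_mod_cast (Nat.count_le _ : res g ≤ 30)
  have hr0 : (0 : ℝ) ≤ res g := Nat.cast_nonneg _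
  rw [card_base hu huw]
  have h1 := abs_le.1 (count_coprime_bound hg (n / u + 1))
  have h2 := abs_le.1 (count_coprime_bound hg (n / w + 1))
  have hfl : ∀ v : ℕ, 0 < v → ((n / v : ℕ) : ℝ) ≤ n * (1 / v) ∧
      (n * (1 / v) : ℝ) ≤ (n / v : ℕ) + 1 := by
    intro v hv
    have hv' : (0 : ℝ) < v := by exact_mod_cast hv
    rw [mul_one_div]
    refine ⟨Nat.cast_div_le, ?_⟩
    rw [div_le_iff₀ hv']
    have := Nat.lt_mul_div_succ n hv
    have h3 : (n : ℝ) < v * ((n / v : ℕ) + 1) := by exact_mod_cast this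
    linarith
  obtain ⟨a1, a2⟩ := hfl u hu
  obtain ⟨b1, b2⟩ := hfl w (by omega)
  push_cast at h1 h2
  have c1 := mul_le_mul_of_nonneg_left a1 hr0
  have c2 := mul_le_mul_of_nonneg_left a2 hr0
  have c3 := mul_le_mul_of_nonneg_left b1 hr0
  have c4 := mul_le_mul_of_nonneg_left b2 hr0
  rw [abs_le]
  constructor <;> nlinarith

/-- `e` is an upper bound of `1024 * log₂ c`. -/
def logUp (c e : ℕ) : Bool := Nat.ble (Nat.pow c 1024) (Nat.pow 2 e)

/-- `e` is a lower bound of `1024 * log₂ c`. -/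
def logLow (c e : ℕ) : Bool := Nat.ble (Nat.pow 2 e) (Nat.pow c 1024)

/-- A table `[(w₁, e₁), (w₂, e₂), …]` describes `F` on the intervals `[u, w₁)`, `[w₁, w₂)`, …: on
each of them `F` is constant, and its value `c` satisfies `r c e` for the corresponding `e`. -/
def Steps (r : ℕ → ℕ → Bool) (F : ℕ → ℕ) : ℕ → List (ℕ × ℕ) → Prop
  | _, [] => True
  | u, (w, e) :: l => u < w ∧ (∀ t, u ≤ t → t < w → F t = F u) ∧ r (F u) e = true ∧ Steps r F w l

/-- The right end of the last interval of a table which starts at `u`. -/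
def lastOf : ℕ → List (ℕ × ℕ) → ℕ
  | u, [] => u
  | _, (w, _) :: l => lastOf w l

theorem le_lastOf {r : ℕ → ℕ → Bool} {F : ℕ → ℕ} (l : List (ℕ × ℕ)) :
    ∀ u, Steps r F u l → u ≤ lastOf u l := by
  induction l with
  | nil => intro u _; exact le_rfl
  | cons p l ih => intro u h; exact h.1.le.trans (ih p.1 h.2.2.2)

/-- `2 ^ 20` times the sum of `(1 / u - 1 / w) * e` over the intervals `[u, w)` of a table, rounded
up. -/
def totUp : ℕ → List (ℕ × ℕ) → ℕ
  | _, [] => 0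
  | u, (w, e) :: l => e * (1048576 / u + 1 - 1048576 / w) + totUp w l

/-- `2 ^ 20` times the sum of `(1 / u - 1 / w) * e` over the intervals `[u, w)` of a table, rounded
down. -/
def totLow : ℕ → List (ℕ × ℕ) → ℕ
  | _, [] => 0
  | u, (w, e) :: l => e * (1048576 / u - 1 - 1048576 / w) + totLow w l

theorem sum_base_split (φ : ℕ → ℝ) (n g u w z : ℕ) (h1 : u ≤ w) (h2 : w ≤ z) :
    ∑ d ∈ base n g u z, φ (n / d) =
      ∑ d ∈ base n g u w, φ (n / d) + ∑ d ∈ base n g w z, φ (n / d) := by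
  rw [← Finset.sum_union]
  · congr 1
    ext d
    simp only [base, Finset.mem_union, Finset.mem_filter, Finset.mem_Icc]
    rcases Nat.lt_or_ge (n / d) w with h | h
    · constructor
      · rintro ⟨h1, h2, h3, h4⟩; exact Or.inl ⟨h1, h2, h3, h⟩
      · rintro (⟨h1, h2, h3, h4⟩ | ⟨h1, h2, h3, h4⟩)
        · exact ⟨h1, h2, h3, by omega⟩
        · omega
    · constructor
      · rintro ⟨h1, h2, h3, h4⟩; exact Or.inr ⟨h1, h2, h, h4⟩
      · rintro (⟨h1, h2, h3, h4⟩ | ⟨h1, h2, h3, h4⟩)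
        · omega
        · exact ⟨h1, h2, by omega, h4⟩
  · rw [Finset.disjoint_left]
    intro d hd hd'
    simp only [base, Finset.mem_filter] at hd hd'
    omega

theorem sum_base_const (F : ℕ → ℕ) (n g u w : ℕ) (h : ∀ t, u ≤ t → t < w → F t = F u) :
    ∑ d ∈ base n g u w, Real.log (F (n / d)) = (base n g u w).card * Real.log (F u) := by
  rw [← nsmul_eq_mul, ← Finset.sum_const]
  refine Finset.sum_congr rfl fun d hd => ?_
  simp only [base, Finset.mem_filter] at hd
  rw [h _ hd.2.2.1 hd.2.2.2]

set_option exponentiation.threshold 2000 in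
theorem log_le_of_logUp {x e : ℕ} (h : logUp x e = true) :
    Real.log x ≤ (e : ℝ) / 1024 * Real.log 2 := by
  have h2 : 0 < Real.log 2 := Real.log_pos (by norm_num)
  rcases Nat.eq_zero_or_pos x with rfl | hx
  · simp only [Nat.cast_zero, Real.log_zero]; positivity
  · rw [logUp, Nat.ble_eq] at h
    have h : ((x ^ 1024 : ℕ) : ℝ) ≤ (2 ^ e : ℕ) := Nat.cast_le.2 h
    have h' := Real.log_le_log (by positivity) h
    push_cast at h'
    rw [Real.log_pow, Real.log_pow] at h'
    push_cast at h'
    linarith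

set_option exponentiation.threshold 2000 in
theorem le_log_of_logLow {x e : ℕ} (h : logLow x e = true) :
    (e : ℝ) / 1024 * Real.log 2 ≤ Real.log x := by
  rw [logLow, Nat.ble_eq] at h
  have h : ((2 ^ e : ℕ) : ℝ) ≤ (x ^ 1024 : ℕ) := Nat.cast_le.2 h
  have h' := Real.log_le_log (by positivity) h
  push_cast at h'
  rw [Real.log_pow, Real.log_pow] at h'
  push_cast at h'
  linarith

/-- Summation of a tabulated function over the bases: an interval `[u, w)` of the table contributes
`n * (res g / 30) * (1 / u - 1 / w)` times the value of the logarithm, up to a bounded error. -/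
theorem sum_base_le {g : ℕ} (hg : g ∣ 30) (F : ℕ → ℕ) (l : List (ℕ × ℕ)) :
    ∀ u, 0 < u → Steps logUp F u l → ∃ C : ℝ, ∀ n : ℕ,
    ∑ d ∈ base n g u (lastOf u l), Real.log (F (n / d)) ≤
      n * (res g * totUp u l / (30 * 1048576 * 1024) * Real.log 2) + C := by
  induction l with
  | nil =>
    intro u hu _
    refine ⟨0, fun n => ?_⟩
    have : base n g u u = ∅ := by
      ext d
      simp only [base, Finset.mem_filter, Finset.notMem_empty, iff_false]
      omega
    simp [lastOf, this, totUp]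
  | cons p l ih =>
    obtain ⟨w, e⟩ := p
    intro u hu ⟨huw, hF, he, hs⟩
    obtain ⟨C, hC⟩ := ih w (by omega) hs
    refine ⟨C + 100 * Real.log (F u), fun n => ?_⟩
    rw [lastOf, sum_base_split (fun t => Real.log (F t)) n g u w _ huw.le (le_lastOf l w hs),
      sum_base_const F n g u w hF]
    have h1 := (abs_le.1 (card_base_bound hg n u w hu huw.le)).2
    have hlog : 0 ≤ Real.log (F u) := Real.log_natCast_nonneg _
    have hlog2 : 0 ≤ Real.log 2 := (Real.log_pos (by norm_num)).le
    have h2 := mul_le_mul_of_nonneg_right h1 hlog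
    have h3 := log_le_of_logUp he
    -- the rounded weight of the interval `[u, w)`
    set k : ℕ := 1048576 / u + 1 - 1048576 / w with hk
    have hk' : (1 / u - 1 / w : ℝ) ≤ k / 1048576 := by
      have hdiv : 1048576 / w ≤ 1048576 / u := Nat.div_le_div_left huw.le hu
      have hu' : (0 : ℝ) < u := by exact_mod_cast hu
      have e1 : (1048576 / u : ℝ) ≤ (1048576 / u : ℕ) + 1 := by
        rw [div_le_iff₀ hu']
        have := Nat.lt_mul_div_succ 1048576 hu
        have h3 : ((1048576 : ℕ) : ℝ) < u * ((1048576 / u : ℕ) + 1) := by exact_mod_cast this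
        push_cast at h3
        linarith
      have e2 : ((1048576 / w : ℕ) : ℝ) ≤ 1048576 / w := by
        have := Nat.cast_div_le (α := ℝ) (m := 1048576) (n := w)
        exact_mod_cast this
      have e3 : (k : ℝ) = (1048576 / u : ℕ) + 1 - (1048576 / w : ℕ) := by
        rw [hk, Nat.cast_sub (by omega)]; push_cast; rfl
      rw [e3, le_div_iff₀ (by norm_num)]
      have e4 : ((1 : ℝ) / u - 1 / w) * 1048576 = 1048576 / u - 1048576 / w := by ring
      linarith
    have htot : (totUp u ((w, e) :: l) : ℝ) = e * k + totUp w l := by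
      rw [hk, ← Nat.cast_mul, ← Nat.cast_add]
      rfl
    have hw0 : (0 : ℝ) ≤ n * (res g / 30) := by positivity
    have h4 : (n * (res g / 30) * (1 / u - 1 / w) * Real.log (F u) : ℝ) ≤
        n * (res g / 30) * (k / 1048576) * (e / 1024 * Real.log 2) := by
      refine mul_le_mul (mul_le_mul_of_nonneg_left hk' hw0) h3 hlog (by positivity)
    have h5 := hC n
    rw [htot]
    have h6 : (n * (res g * (e * k + totUp w l) / (30 * 1048576 * 1024) * Real.log 2) : ℝ) =
      n * (res g / 30) * (k / 1048576) * (e / 1024 * Real.log 2) +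
        n * (res g * totUp w l / (30 * 1048576 * 1024) * Real.log 2) := by ring
    rw [h6]
    linarith

/-- The analogue of `sum_base_le` for lower bounds. -/
theorem le_sum_base {g : ℕ} (hg : g ∣ 30) (F : ℕ → ℕ) (l : List (ℕ × ℕ)) :
    ∀ u, 0 < u → Steps logLow F u l → ∃ C : ℝ, ∀ n : ℕ,
    n * (res g * totLow u l / (30 * 1048576 * 1024) * Real.log 2) - C ≤
      ∑ d ∈ base n g u (lastOf u l), Real.log (F (n / d)) := by
  induction l with
  | nil =>
    intro u hu _
    refine ⟨0, fun n => ?_⟩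
    have : base n g u u = ∅ := by
      ext d
      simp only [base, Finset.mem_filter, Finset.notMem_empty, iff_false]
      omega
    simp [lastOf, this, totLow]
  | cons p l ih =>
    obtain ⟨w, e⟩ := p
    intro u hu ⟨huw, hF, he, hs⟩
    obtain ⟨C, hC⟩ := ih w (by omega) hs
    refine ⟨C + 100 * Real.log (F u), fun n => ?_⟩
    rw [lastOf, sum_base_split (fun t => Real.log (F t)) n g u w _ huw.le (le_lastOf l w hs),
      sum_base_const F n g u w hF]
    have h1 := (abs_le.1 (card_base_bound hg n u w hu huw.le)).1
    have hlog : 0 ≤ Real.log (F u) := Real.log_natCast_nonneg _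
    have hlog2 : 0 ≤ Real.log 2 := (Real.log_pos (by norm_num)).le
    have h2 := mul_le_mul_of_nonneg_right h1 hlog
    have h3 := le_log_of_logLow he
    have hu' : (0 : ℝ) < u := by exact_mod_cast hu
    have hw' : (0 : ℝ) < w := by exact_mod_cast (by omega : 0 < w)
    have hinv : (0 : ℝ) ≤ 1 / u - 1 / w := by
      rw [sub_nonneg]
      exact one_div_le_one_div_of_le hu' (by exact_mod_cast huw.le)
    -- the rounded weight of the interval `[u, w)`
    set k : ℕ := 1048576 / u - 1 - 1048576 / w with hk
    have hk' : (k / 1048576 : ℝ) ≤ (1 / u - 1 / w : ℝ) := by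
      rw [div_le_iff₀ (by norm_num)]
      rcases Nat.eq_zero_or_pos k with h0 | h0
      · rw [h0]; push_cast; positivity
      have e1 : (1048576 / w : ℝ) ≤ (1048576 / w : ℕ) + 1 := by
        rw [div_le_iff₀ hw']
        have := Nat.lt_mul_div_succ 1048576 (by omega : 0 < w)
        have h3 : ((1048576 : ℕ) : ℝ) < w * ((1048576 / w : ℕ) + 1) := by exact_mod_cast this
        push_cast at h3
        linarith
      have e2 : ((1048576 / u : ℕ) : ℝ) ≤ 1048576 / u := by
        have := Nat.cast_div_le (α := ℝ) (m := 1048576) (n := u)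
        exact_mod_cast this
      have e3 : (k : ℝ) = (1048576 / u : ℕ) - 1 - (1048576 / w : ℕ) := by
        have : k + 1 + 1048576 / w = 1048576 / u := by omega
        rw [← this]; push_cast; ring
      rw [e3]
      have e4 : ((1 : ℝ) / u - 1 / w) * 1048576 = 1048576 / u - 1048576 / w := by ring
      linarith
    have htot : (totLow u ((w, e) :: l) : ℝ) = e * k + totLow w l := by
      rw [hk, ← Nat.cast_mul, ← Nat.cast_add]
      rfl
    have hw0 : (0 : ℝ) ≤ n * (res g / 30) := by positivity
    have h4 : n * (res g / 30) * (k / 1048576) * (e / 1024 * Real.log 2) ≤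
        (n * (res g / 30) * (1 / u - 1 / w) * Real.log (F u) : ℝ) := by
      refine mul_le_mul (mul_le_mul_of_nonneg_left hk' hw0) h3 (by positivity) (by positivity)
    have h5 := hC n
    rw [htot]
    have h6 : (n * (res g * (e * k + totLow w l) / (30 * 1048576 * 1024) * Real.log 2) : ℝ) =
      n * (res g / 30) * (k / 1048576) * (e / 1024 * Real.log 2) +
        n * (res g * totLow w l / (30 * 1048576 * 1024) * Real.log 2) := by ring
    rw [h6]
    linarith

/-- A Boolean test: inside the intervals of the table lies no threshold at which an inequality
`m ≤ t` or `q * m ≤ t` with `m ∈ L` changes its truth value. -/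
noncomputable def okSteps (L : List ℕ) (q : ℕ) : ℕ → List (ℕ × ℕ) → Bool
  | _, [] => true
  | u, (w, _) :: l => Nat.ble (u + 1) w && (L.all fun m => (Nat.ble m u || Nat.ble w m) &&
      (Nat.ble (Nat.mul q m) u || Nat.ble w (Nat.mul q m))) && okSteps L q w l

/-- A Boolean test: the second entries of the table satisfy `r`. -/
noncomputable def okLogs (r : ℕ → ℕ → Bool) (F : ℕ → ℕ) : ℕ → List (ℕ × ℕ) → Bool
  | _, [] => true
  | u, (w, e) :: l => r (F u) e && okLogs r F w l

/-- A function of `t` which only depends on the truth values of `m ≤ t` and `t < q * m`, for `m` in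
`L`, is constant on intervals without thresholds. -/
theorem steps_of_okSteps (r : ℕ → ℕ → Bool) (F : ℕ → ℕ) (L : List ℕ) (q : ℕ)
    (hF : ∀ t u, (∀ m ∈ L, (m ≤ t ↔ m ≤ u) ∧ (t + 1 ≤ q * m ↔ u + 1 ≤ q * m)) → F t = F u)
    (l : List (ℕ × ℕ)) :
    ∀ u, okSteps L q u l = true → okLogs r F u l = true → Steps r F u l := by
  induction l with
  | nil => intro u _ _; trivial
  | cons p l ih =>
    obtain ⟨w, e⟩ := p
    intro u h h'
    simp only [okSteps, Bool.and_eq_true, List.all_eq_true, Nat.ble_eq, Bool.or_eq_true,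
      Nat.mul_eq] at h
    simp only [okLogs, Bool.and_eq_true] at h'
    refine ⟨h.1.1, fun t h1 h2 => hF t u fun m hm => ?_, h'.1, ih w h.2 h'.2⟩
    have := h.1.2 m hm
    constructor <;> omega

theorem steps_cntLow (L : List ℕ) (q u : ℕ) (l : List (ℕ × ℕ)) (h : okSteps L q u l = true)
    (h' : okLogs logLow (cntLow L q) u l = true) : Steps logLow (cntLow L q) u l := by
  refine steps_of_okSteps _ _ L q (fun t u h => ?_) l u h h'
  rw [cntLow, cntLow]
  congr 1
  refine List.filter_congr fun m hm => ?_
  rw [Bool.eq_iff_iff]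
  simp only [Bool.and_eq_true, Nat.ble_eq, Nat.mul_eq]
  rw [(h m hm).1, (h m hm).2]

theorem steps_cntUp (L : List ℕ) (hL : L.Nodup) (q u : ℕ) (l : List (ℕ × ℕ))
    (h : okSteps L q u l = true) (h' : okLogs logUp (cntUp L q) u l = true) :
    Steps logUp (cntUp L q) u l := by
  refine steps_of_okSteps _ _ L q (fun t u h => ?_) l u h h'
  have hV : L.filter (fun m => Nat.ble m t) = L.filter (fun m => Nat.ble m u) := by
    refine List.filter_congr fun m hm => ?_
    rw [Bool.eq_iff_iff, Nat.ble_eq, Nat.ble_eq, (h m hm).1]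
  rw [cntUp, cntUp, hV, ← card_goodSets _ _ (hL.filter _), ← card_goodSets _ _ (hL.filter _)]
  congr 1
  ext T
  simp only [mem_goodSets]
  refine and_congr_right fun _ => and_congr_right fun _ => forall₂_congr fun m hm => ?_
  have hmL : m ∈ L := (List.mem_filter.1 (List.mem_toFinset.1 hm)).1
  rw [Nat.ble_eq, Nat.ble_eq, Nat.mul_eq, (h m hmL).2]


/-! ### Tables -/

/-- The numbers below `150` with prime factors in `{2, 3, 5}`, by increasing powers of `2`. -/
def listFive : List ℕ :=
  [1, 3, 5, 9, 15, 25, 27, 45, 75, 81, 125, 135, 2, 6, 10, 18, 30, 50, 54, 90, 4, 12, 20, 36,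
  60, 100, 108, 8, 24, 40, 72, 120, 16, 48, 80, 144, 32, 96, 64, 128]

/-- The numbers below `720` with prime factors in `{2, 3}`, by increasing powers of `2`. -/
def listThree : List ℕ :=
  [1, 3, 9, 27, 81, 243, 2, 6, 18, 54, 162, 486, 4, 12, 36, 108, 324, 8, 24, 72, 216, 648, 16,
  48, 144, 432, 32, 96, 288, 64, 192, 576, 128, 384, 256, 512]

/-- The powers of two below `4096`. -/
def listTwo : List ℕ :=
  [1, 2, 4, 8, 16, 32, 64, 128, 256, 512, 1024, 2048]

/-- The numbers below `400` with prime factors in `{2, 3, 5}`, by increasing powers of `5`, then of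
`3`. -/
def listLow : List ℕ :=
  [1, 2, 4, 8, 16, 32, 64, 128, 256, 3, 6, 12, 24, 48, 96, 192, 384, 9, 18, 36, 72, 144, 288,
  27, 54, 108, 216, 81, 162, 324, 243, 5, 10, 20, 40, 80, 160, 320, 15, 30, 60, 120, 240, 45,
  90, 180, 360, 135, 270, 25, 50, 100, 200, 75, 150, 300, 225, 125, 250, 375]

/-- The table of `1024 * log₂ (cntUp listFive 7 t)`, rounded up, for `1 ≤ t < 30`. -/
def tabA1 : List (ℕ × ℕ) :=
  [(2, 0), (3, 1024), (4, 1024), (5, 1624), (6, 1624), (7, 2048), (8, 2048), (9, 2648), (10, 2875),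
   (12, 3543), (14, 3790), (15, 3790), (16, 3899), (18, 4426), (20, 4814), (21, 5210), (24, 5210),
   (25, 5450), (27, 5487), (28, 5809), (30, 5809)]

/-- The table of `1024 * log₂ (cntUp listFive 7 t)`, rounded up, for `30 ≤ t < 150`. -/
def tabA2 : List (ℕ × ℕ) :=
  [(32, 6024), (35, 6546), (36, 6546), (40, 6744), (42, 7098), (45, 7122), (48, 7332), (50, 7526),
   (54, 8152), (56, 8541), (60, 8541), (63, 8680), (64, 8680), (70, 9219), (72, 9239), (75, 9446),
   (80, 9594), (81, 9918), (84, 10268), (90, 10300), (96, 10477), (100, 10665), (105, 11013),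
   (108, 11036), (112, 11220), (120, 11220), (125, 11331), (126, 11396), (128, 11446), (135, 11963),
   (140, 12192), (144, 12221), (150, 12374)]

/-- The table of `1024 * log₂ (cntUp listThree 5 t)`, rounded up, for `150 ≤ t < 240`. -/
def tabB1 : List (ℕ × ℕ) :=
  [(160, 7363), (162, 7363), (180, 7647), (192, 7729), (216, 7835), (240, 7948)]

/-- The table of `1024 * log₂ (cntUp listThree 5 t)`, rounded up, for `240 ≤ t < 720`. -/
def tabB2 : List (ℕ × ℕ) :=
  [(243, 8015), (256, 8372), (270, 8737), (288, 8829), (320, 8906), (324, 8906), (360, 9013),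
   (384, 9093), (405, 9187), (432, 9187), (480, 9256), (486, 9320), (512, 9580), (540, 9934),
   (576, 10017), (640, 10085), (648, 10085), (720, 10182)]

/-- The table of `1024 * log₂ (cntUp listTwo 3 t)`, rounded up, for `720 ≤ t < 2048`. -/
def tabC1 : List (ℕ × ℕ) :=
  [(768, 3402), (1024, 3402), (1536, 3543), (2048, 3543)]

/-- The table of `1024 * log₂ (cntUp listTwo 3 t)`, rounded up, for `2048 ≤ t < 4096`. -/
def tabC2 : List (ℕ × ℕ) :=
  [(3072, 3672), (4096, 3672)]

/-- The table of `1024 * log₂ (cntLow listLow 7 t)`, rounded down, for `1 ≤ t < 200`. -/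
def tabD1 : List (ℕ × ℕ) :=
  [(2, 0), (3, 1024), (4, 1024), (5, 1623), (6, 1623), (7, 2048), (8, 1623), (9, 2377), (10, 2647),
   (12, 3401), (14, 3671), (15, 3401), (16, 3401), (18, 4096), (20, 4566), (21, 5024), (24, 4566),
   (25, 4922), (27, 4922), (28, 5294), (30, 5024), (32, 5294), (35, 5998), (36, 5521), (40, 5808),
   (42, 6378), (45, 6023), (48, 6211), (50, 6545), (54, 7321), (56, 7856), (60, 7630), (63, 7819),
   (64, 7382), (70, 8096), (72, 7812), (75, 8203), (80, 8203), (81, 8736), (84, 9108), (90, 8775),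
   (96, 9083), (100, 9420), (105, 9871), (108, 9348), (112, 9669), (120, 9455), (125, 9698),
   (126, 9698), (128, 9327), (135, 10046), (140, 10299), (144, 10029), (150, 10398), (160, 10680),
   (162, 11228), (168, 11783), (175, 11483), (180, 11011), (189, 11221), (192, 10801), (200, 11143)]

/-- The table of `1024 * log₂ (cntLow listLow 7 t)`, rounded down, for `200 ≤ t < 400`. -/
def tabD2 : List (ℕ × ℕ) :=
  [(210, 11702), (216, 11323), (224, 11756), (225, 11538), (240, 11719), (243, 11951), (250, 12320),
   (252, 13098), (256, 12754), (270, 13472), (280, 13828), (288, 13600), (300, 13972), (315, 14160),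
   (320, 13658), (324, 14210), (336, 14538), (350, 14259), (360, 13975), (375, 14251), (378, 14251),
   (384, 13888), (400, 14232)]

/-! ### Kernel computations with the tables -/

/-- A Boolean test for `Closed`. -/
noncomputable def isClosed (L : List ℕ) (q w : ℕ) : Bool :=
  L.all fun m => Nat.ble 1 m &&
    (List.range q).all fun r => Nat.ble (r * m) 0 || Nat.ble w (r * m) || L.contains (r * m)

theorem closed_of_isClosed {L : List ℕ} {q w : ℕ} (hL : L.Nodup) (h : isClosed L q w = true) :
    Closed L q w := by
  refine ⟨hL, fun m hm => ?_⟩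
  simp only [isClosed, List.all_eq_true, Bool.and_eq_true, Nat.ble_eq, Bool.or_eq_true,
    List.contains_iff_mem, List.mem_range] at h
  obtain ⟨h1, h2⟩ := h m hm
  refine ⟨h1, fun r hr hrq hw => ?_⟩
  have h3 : 0 < r * m := Nat.mul_pos hr h1
  rcases h2 r hrq with (h | h) | h
  · omega
  · omega
  · exact h

theorem stepsA1 : Steps logUp (cntUp listFive 7) 1 tabA1 :=
  steps_cntUp _ (by decide +kernel) _ _ _ (by decide +kernel) (by decide +kernel)

theorem lastA1 : lastOf 1 tabA1 = 30 := by decide +kernel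

theorem stepsA2 : Steps logUp (cntUp listFive 7) 30 tabA2 :=
  steps_cntUp _ (by decide +kernel) _ _ _ (by decide +kernel) (by decide +kernel)

theorem lastA2 : lastOf 30 tabA2 = 150 := by decide +kernel

theorem stepsB1 : Steps logUp (cntUp listThree 5) 150 tabB1 :=
  steps_cntUp _ (by decide +kernel) _ _ _ (by decide +kernel) (by decide +kernel)

theorem lastB1 : lastOf 150 tabB1 = 240 := by decide +kernel

theorem stepsB2 : Steps logUp (cntUp listThree 5) 240 tabB2 :=
  steps_cntUp _ (by decide +kernel) _ _ _ (by decide +kernel) (by decide +kernel)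

theorem lastB2 : lastOf 240 tabB2 = 720 := by decide +kernel

theorem stepsC1 : Steps logUp (cntUp listTwo 3) 720 tabC1 :=
  steps_cntUp _ (by decide +kernel) _ _ _ (by decide +kernel) (by decide +kernel)

theorem lastC1 : lastOf 720 tabC1 = 2048 := by decide +kernel

theorem stepsC2 : Steps logUp (cntUp listTwo 3) 2048 tabC2 :=
  steps_cntUp _ (by decide +kernel) _ _ _ (by decide +kernel) (by decide +kernel)

theorem lastC2 : lastOf 2048 tabC2 = 4096 := by decide +kernel

theorem stepsD1 : Steps logLow (cntLow listLow 7) 1 tabD1 :=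
  steps_cntLow _ _ _ _ (by decide +kernel) (by decide +kernel)

theorem lastD1 : lastOf 1 tabD1 = 200 := by decide +kernel

theorem stepsD2 : Steps logLow (cntLow listLow 7) 200 tabD2 :=
  steps_cntLow _ _ _ _ (by decide +kernel) (by decide +kernel)

theorem lastD2 : lastOf 200 tabD2 = 400 := by decide +kernel

theorem closedFive : Closed listFive 7 150 := closed_of_isClosed (by decide +kernel)
  (by decide +kernel)

theorem closedThree : Closed listThree 5 720 := closed_of_isClosed (by decide +kernel)
  (by decide +kernel)

theorem closedTwo : Closed listTwo 3 4096 := closed_of_isClosed (by decide +kernel)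
  (by decide +kernel)

theorem mem_listFive : ∀ m < 5 * 30, m ∣ 30 ^ 12 → m ∈ listFive := by decide +kernel

theorem mem_listThree : ∀ m < 3 * 240, m ∣ 6 ^ 12 → m ∈ listThree := by decide +kernel

theorem mem_listTwo : ∀ m < 2 * 2048, m ∣ 2 ^ 12 → m ∈ listTwo := by
  intro m hm h
  obtain ⟨k, hk, rfl⟩ := (Nat.dvd_prime_pow Nat.prime_two).1 h
  revert hm
  interval_cases k <;> decide

theorem nodup_listLow : listLow.Nodup := by decide +kernel

theorem dvd_of_mem_listLow : ∀ m ∈ listLow, m ∣ 30 ^ 18 := by decide +kernel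

/-- The sum of all contributions to the upper bound. The factors `8`, `10`, `15`, `30` are the
values `res 30`, `res 6`, `res 2`, `res 1`; the common denominator of the contributions is
`30 * 2 ^ 20 * 1024 = 32212254720`. The number `7864320000 = 1000 * 32212254720 / 4096` accounts for
the pieces with one element. -/
theorem total_up : (8 * totUp 1 tabA1 + 10 * totUp 30 tabA2 + 10 * totUp 150 tabB1 +
    15 * totUp 240 tabB2 + 15 * totUp 720 tabC1 + 30 * totUp 2048 tabC2) * 1000 + 7864320000 ≤
      311 * 32212254720 := by decide +kernel

/-- The sum of all contributions to the lower bound, with `res 30 = 8` and `res 15 = 16`. -/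
theorem total_low :
    279 * 32212254720 ≤ (8 * totLow 1 tabD1 + 16 * totLow 200 tabD2) * 1000 := by
  decide +kernel

theorem res_thirty : res 30 = 8 := by decide +kernel
theorem res_fifteen : res 15 = 16 := by decide +kernel
theorem res_six : res 6 = 10 := by decide +kernel
theorem res_two : res 2 = 15 := by decide +kernel
theorem res_one : res 1 = 30 := by decide +kernel

/-! ### Exponential bounds -/

theorem prod_le_exp {g : ℕ} (hg : g ∣ 30) (F : ℕ → ℕ) (u w : ℕ) (l : List (ℕ × ℕ)) (hu : 0 < u)
    (hl : Steps logUp F u l) (hw : lastOf u l = w) :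
    ∃ C : ℝ, ∀ n : ℕ, ((∏ d ∈ base n g u w, F (n / d) : ℕ) : ℝ) ≤
      Real.exp (n * (res g * totUp u l / (30 * 1048576 * 1024) * Real.log 2) + C) := by
  obtain ⟨C, hC⟩ := sum_base_le hg F l u hu hl
  refine ⟨C, fun n => ?_⟩
  rw [← hw]
  refine le_trans ?_ (Real.exp_le_exp.2 (hC n))
  rw [Real.exp_sum, Nat.cast_prod]
  exact Finset.prod_le_prod (fun _ _ => Nat.cast_nonneg _) fun _ _ => Real.le_exp_log _

set_option exponentiation.threshold 2000 in
/-- A function with a table of lower bounds has no zero, as `0 ^ 1024 < 2 ^ e`. -/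
theorem pos_of_steps {F : ℕ → ℕ} (l : List (ℕ × ℕ)) :
    ∀ u, Steps logLow F u l → ∀ t, u ≤ t → t < lastOf u l → 0 < F t := by
  induction l with
  | nil => intro u _ t h1 h2; exact absurd h2 (not_lt.2 h1)
  | cons p l ih =>
    obtain ⟨w, e⟩ := p
    intro u ⟨huw, hF, he, hs⟩ t h1 h2
    rcases Nat.lt_or_ge t w with h | h
    · rw [hF t h1 h]
      rw [logLow, Nat.ble_eq] at he
      by_contra h0
      rw [Nat.eq_zero_of_not_pos h0] at he
      have h3 : 0 < 2 ^ e := by positivity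
      exact absurd he (by rw [Nat.pow_eq, Nat.pow_eq, zero_pow (by norm_num)]; omega)
    · exact ih w hs t h h2

theorem exp_le_prod {g : ℕ} (hg : g ∣ 30) (F : ℕ → ℕ) (u w : ℕ) (l : List (ℕ × ℕ)) (hu : 0 < u)
    (hl : Steps logLow F u l) (hw : lastOf u l = w) :
    ∃ C : ℝ, ∀ n : ℕ,
      Real.exp (n * (res g * totLow u l / (30 * 1048576 * 1024) * Real.log 2) - C) ≤
        ((∏ d ∈ base n g u w, F (n / d) : ℕ) : ℝ) := by
  obtain ⟨C, hC⟩ := le_sum_base hg F l u hu hl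
  refine ⟨C, fun n => (Real.exp_le_exp.2 (hC n)).trans ?_⟩
  rw [← hw, Real.exp_sum, Nat.cast_prod]
  refine Finset.prod_le_prod (fun _ _ => (Real.exp_pos _).le) fun d hd => ?_
  simp only [base, Finset.mem_filter] at hd
  rw [Real.exp_log (Nat.cast_pos.2 (pos_of_steps l u hl _ hd.2.2.1 hd.2.2.2))]

/-- A piece with at most one element contributes a factor at most two. -/
theorem cntUp_one_le (t : ℕ) : cntUp [1] 0 t ≤ 2 := by
  rw [cntUp, ← card_goodSets _ _ ((List.nodup_singleton 1).filter _)]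
  refine (Finset.card_le_card (t := Finset.powerset {1}) fun S hS => ?_).trans (by simp)
  rw [mem_goodSets] at hS
  rw [Finset.mem_powerset]
  refine hS.1.trans fun m hm => ?_
  have := (List.mem_filter.1 (List.mem_toFinset.1 hm)).1
  simpa using this

/-- There are at most `n / 4096` bases with `4096 ≤ n / d`, each of which carries a piece with one
element. -/
theorem prod_tail_le (n : ℕ) :
    ((∏ d ∈ base n 1 4096 (n + 1), cntUp [1] 0 (n / d) : ℕ) : ℝ) ≤
      Real.exp (n * (1 / 4096 * Real.log 2)) := by
  have hcard : (base n 1 4096 (n + 1)).card ≤ n / 4096 := by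
    have h : base n 1 4096 (n + 1) ⊆ Finset.Icc 1 (n / 4096) := by
      intro d hd
      simp only [base, Finset.mem_filter, Finset.mem_Icc] at hd ⊢
      refine ⟨hd.1.1, (Nat.le_div_iff_mul_le (by norm_num)).2 ?_⟩
      have := (Nat.le_div_iff_mul_le (by omega)).1 hd.2.2.1
      linarith
    exact (Finset.card_le_card h).trans (by simp)
  have h1 : (∏ d ∈ base n 1 4096 (n + 1), cntUp [1] 0 (n / d)) ≤ 2 ^ (n / 4096) :=
    (Finset.prod_le_pow_card _ _ _ fun d _ => cntUp_one_le _).trans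
      (Nat.pow_le_pow_right (by norm_num) hcard)
  have h2 : ((n / 4096 : ℕ) : ℝ) ≤ n / 4096 := by exact_mod_cast Nat.cast_div_le (α := ℝ)
  have h3 : 0 ≤ Real.log 2 := Real.log_nonneg (by norm_num)
  calc ((∏ d ∈ base n 1 4096 (n + 1), cntUp [1] 0 (n / d) : ℕ) : ℝ) ≤ (2 ^ (n / 4096) : ℕ) := by
        exact_mod_cast h1
    _ = Real.exp ((n / 4096 : ℕ) * Real.log 2) := by
        rw [Real.exp_nat_mul, Real.exp_log (by norm_num)]; push_cast; rfl
    _ ≤ _ := by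
        refine Real.exp_le_exp.2 ?_
        have := mul_le_mul_of_nonneg_right h2 h3
        linarith

/-- The upper bound for the number of maximal primitive sets. -/
theorem count_le_exp : ∃ C : ℝ, ∀ n : ℕ,
    (maximalPrimCount n : ℝ) ≤ Real.exp (n * (311 / 1000 * Real.log 2) + C) := by
  obtain ⟨C1, h1⟩ := prod_le_exp (g := 30) (by norm_num) _ 1 _ _ (by norm_num) stepsA1 lastA1
  obtain ⟨C2, h2⟩ := prod_le_exp (g := 6) (by norm_num) _ 30 _ _ (by norm_num) stepsA2 lastA2
  obtain ⟨C3, h3⟩ := prod_le_exp (g := 6) (by norm_num) _ 150 _ _ (by norm_num) stepsB1 lastB1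
  obtain ⟨C4, h4⟩ := prod_le_exp (g := 2) (by norm_num) _ 240 _ _ (by norm_num) stepsB2 lastB2
  obtain ⟨C5, h5⟩ := prod_le_exp (g := 2) (by norm_num) _ 720 _ _ (by norm_num) stepsC1 lastC1
  obtain ⟨C6, h6⟩ := prod_le_exp (g := 1) (by norm_num) _ 2048 _ _ (by norm_num) stepsC2 lastC2
  refine ⟨C1 + C2 + C3 + C4 + C5 + C6, fun n => ?_⟩
  have h0 : (maximalPrimCount n : ℝ) ≤ _ := Nat.cast_le.2 (count_le_prod_seven n 30 240 2048
    listFive listThree listTwo (by norm_num) (by norm_num) (by norm_num) (by norm_num)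
    closedFive mem_listFive closedThree mem_listThree closedTwo mem_listTwo)
  refine h0.trans ?_
  simp only [Nat.cast_mul]
  have hm := mul_le_mul (mul_le_mul (mul_le_mul (mul_le_mul (mul_le_mul (mul_le_mul (h1 n) (h2 n)
    (Nat.cast_nonneg _) (Real.exp_pos _).le) (h3 n) (Nat.cast_nonneg _) (by positivity))
    (h4 n) (Nat.cast_nonneg _) (by positivity)) (h5 n) (Nat.cast_nonneg _) (by positivity))
    (h6 n) (Nat.cast_nonneg _) (by positivity)) (prod_tail_le n) (Nat.cast_nonneg _)
    (by positivity)
  refine hm.trans ?_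
  simp only [← Real.exp_add]
  refine Real.exp_le_exp.2 ?_
  rw [res_thirty, res_six, res_two, res_one]
  have ht : (((8 * totUp 1 tabA1 + 10 * totUp 30 tabA2 + 10 * totUp 150 tabB1 +
    15 * totUp 240 tabB2 + 15 * totUp 720 tabC1 + 30 * totUp 2048 tabC2) * 1000 + 7864320000 : ℕ)
      : ℝ) ≤ ((311 * 32212254720 : ℕ) : ℝ) := Nat.cast_le.2 total_up
  push_cast at ht ⊢
  have hn : 0 ≤ n * Real.log 2 / 32212254720000 := by
    have := Real.log_nonneg (x := 2) (by norm_num)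
    positivity
  have := mul_le_mul_of_nonneg_left ht hn
  linarith

/-- The lower bound for the number of maximal primitive sets. -/
theorem exp_le_count : ∃ C : ℝ, ∀ n : ℕ,
    Real.exp (n * (279 / 1000 * Real.log 2) - C) ≤ (maximalPrimCount n : ℝ) := by
  obtain ⟨C1, h1⟩ := exp_le_prod (g := 30) (by norm_num) _ 1 _ _ (by norm_num) stepsD1 lastD1
  obtain ⟨C2, h2⟩ := exp_le_prod (g := 15) (by norm_num) _ 200 _ _ (by norm_num) stepsD2 lastD2
  refine ⟨C1 + C2, fun n => ?_⟩
  have hdisj : Disjoint (base n 30 1 200) (base n 15 200 400) := by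
    rw [Finset.disjoint_left]
    intro d hd hd'
    simp only [base, Finset.mem_filter] at hd hd'
    omega
  have h0 := prod_cntLow_le listLow dvd_of_mem_listLow nodup_listLow n 200
    (base n 30 1 200 ∪ base n 15 200 400) (by
      intro d hd
      simp only [base, Finset.mem_union, Finset.mem_filter, Finset.mem_Icc] at hd
      rcases hd with ⟨⟨h1, h2⟩, h3, h4, h5⟩ | ⟨⟨h1, h2⟩, h3, h4, h5⟩
      · refine ⟨h1, h3.coprime_dvd_right (by norm_num), by omega, fun h => ?_⟩
        have := Nat.dvd_gcd h (by norm_num : 2 ∣ 30)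
        rw [h3] at this
        omega
      · exact ⟨h1, h3, h5, fun _ => h4⟩)
  rw [Finset.prod_union hdisj] at h0
  have h0' := Nat.cast_le (α := ℝ).2 h0
  rw [Nat.cast_mul] at h0'
  refine le_trans ?_ h0'
  refine le_trans ?_ (mul_le_mul (h1 n) (h2 n) (Real.exp_pos _).le (Nat.cast_nonneg _))
  rw [← Real.exp_add]
  refine Real.exp_le_exp.2 ?_
  rw [res_thirty, res_fifteen]
  have ht : ((279 * 32212254720 : ℕ) : ℝ) ≤
      (((8 * totLow 1 tabD1 + 16 * totLow 200 tabD2) * 1000 : ℕ) : ℝ) := Nat.cast_le.2 total_low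
  push_cast at ht ⊢
  have hn : 0 ≤ n * Real.log 2 / 32212254720000 := by
    have := Real.log_nonneg (x := 2) (by norm_num)
    positivity
  have := mul_le_mul_of_nonneg_left ht hn
  linarith

/-! ### Passing to the limit -/

theorem tendsto_exp_add_div (s C : ℝ) :
    Filter.Tendsto (fun n : ℕ => Real.exp (s + C * (n : ℝ)⁻¹)) Filter.atTop
      (nhds (Real.exp s)) := by
  have h := (tendsto_inv_atTop_nhds_zero_nat (𝕜 := ℝ)).const_mul C |>.const_add s
  rw [mul_zero, add_zero] at h
  exact (Real.continuous_exp.tendsto s).comp h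

theorem exp_rpow_inv (s C : ℝ) {n : ℕ} (hn : 0 < n) :
    Real.exp (n * s + C) ^ ((n : ℝ)⁻¹) = Real.exp (s + C * (n : ℝ)⁻¹) := by
  have hn' : (n : ℝ) ≠ 0 := by positivity
  rw [← Real.exp_mul]
  congr 1
  field_simp

set_option exponentiation.threshold 2000 in
theorem exp_up_lt : Real.exp (311 / 1000 * Real.log 2) < 1.240904 := by
  rw [← Real.lt_log_iff_exp_lt (by norm_num)]
  have h : (2 : ℝ) ^ 311 < 1.240904 ^ 1000 := by norm_num
  have h' := Real.log_lt_log (by positivity) h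
  rw [Real.log_pow, Real.log_pow] at h'
  push_cast at h'
  linarith

set_option exponentiation.threshold 2000 in
theorem lt_exp_low : 1.212500 < Real.exp (279 / 1000 * Real.log 2) := by
  rw [← Real.log_lt_iff_lt_exp (by norm_num)]
  have h : (1.2125 : ℝ) ^ 1000 < 2 ^ 279 := by norm_num
  have h' := Real.log_lt_log (by positivity) h
  rw [Real.log_pow, Real.log_pow] at h'
  push_cast at h'
  linarith

end MaxPrim

theorem maximal_primitive_count_bounds :
    1.212500 < Filter.liminf (fun n : ℕ => (maximalPrimCount n : ℝ) ^ ((n : ℝ)⁻¹))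
        Filter.atTop ∧
    Filter.limsup (fun n : ℕ => (maximalPrimCount n : ℝ) ^ ((n : ℝ)⁻¹)) Filter.atTop
      < 1.240904 := by
  obtain ⟨C, hC⟩ := MaxPrim.count_le_exp
  obtain ⟨D, hD⟩ := MaxPrim.exp_le_count
  have hup := MaxPrim.tendsto_exp_add_div (311 / 1000 * Real.log 2) C
  have hlow := MaxPrim.tendsto_exp_add_div (279 / 1000 * Real.log 2) (-D)
  have h1 : (fun n : ℕ => (maximalPrimCount n : ℝ) ^ ((n : ℝ)⁻¹)) ≤ᶠ[Filter.atTop]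
      fun n : ℕ => Real.exp (311 / 1000 * Real.log 2 + C * (n : ℝ)⁻¹) := by
    filter_upwards [Filter.eventually_gt_atTop 0] with n hn
    rw [← MaxPrim.exp_rpow_inv _ _ hn]
    exact Real.rpow_le_rpow (Nat.cast_nonneg _) (hC n) (by positivity)
  have h2 : (fun n : ℕ => Real.exp (279 / 1000 * Real.log 2 + -D * (n : ℝ)⁻¹))
      ≤ᶠ[Filter.atTop] fun n : ℕ => (maximalPrimCount n : ℝ) ^ ((n : ℝ)⁻¹) := by
    filter_upwards [Filter.eventually_gt_atTop 0] with n hn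
    rw [← MaxPrim.exp_rpow_inv _ _ hn]
    exact Real.rpow_le_rpow (Real.exp_pos _).le (by simpa [sub_eq_add_neg] using hD n)
      (by positivity)
  have hbd := hup.isBoundedUnder_le.mono_le h1
  have hbd' := hlow.isBoundedUnder_ge.mono_ge h2
  constructor
  · refine MaxPrim.lt_exp_low.trans_le ?_
    rw [← hlow.liminf_eq]
    exact Filter.liminf_le_liminf h2 hlow.isBoundedUnder_ge hbd.isCoboundedUnder_ge
  · refine lt_of_le_of_lt ?_ MaxPrim.exp_up_lt
    rw [← hup.limsup_eq]
    exact Filter.limsup_le_limsup h1 hbd'.isCoboundedUnder_le hup.isBoundedUnder_le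
end
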